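/- Let A be a Lie conformal algebra and M an A-module endowed with a commutative associative product such that ∂^M and all a_λ (a ∈ A) act by derivations. The maps ψ^•: Γ^•(A,M) → C̄^•(A,M) ⊆ C^•(A,M) and χ₁: C₁(A,M) → Γ₁(A,M) define a morphism of 𝔤-complexes: χ₁ is a Lie algebra homomorphism ΠC₁ → ΠΓ₁ (which factors through a Lie algebra isomorphism ΠC̄₁ ≅ ΠΓ₁ when A decomposes), and for all x ∈ C₁ and γ ∈ Γ^•: ψ(δγ) = d(ψγ), ψ(ι_{χ₁(x)}γ) = ι_x(ψγ), and ψ(L_{χ₁(x)}γ) = L_x(ψγ). If A decomposes, as an 𝔽[∂]-module, into a direct sum of its torsion and a free submodule, then ψ^•: Γ^•(A,M) → C̄^•(A,M) is an isomorphism of ΠC₁ ≅ ΠΓ₁-complexes. -/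

import Mathlib

namespace LCC

/-! ### Index utilities -/

/-- Skip one index: the increasing enumeration of `{0,…,k} \ {i}`. -/
def skip1 (i r : ℕ) : ℕ := if r < i then r else r + 1

/-- Skip two indices `i < j`: the increasing enumeration of `{0,…,k+1} \ {i,j}`. -/
def skip2 (i j r : ℕ) : ℕ := if r < i then r else if r + 1 < j then r + 1 else r + 2

/-- Remove the `i`-th entry of a tuple. -/
def rm1 {α : Type*} {k : ℕ} (i : ℕ) (a : Fin (k+1) → α) : Fin k → α :=
  fun r => a ⟨skip1 i r.1, by have := r.2; unfold skip1; split <;> omega⟩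

/-- Remove the `i`-th and `j`-th entries (for `i < j`) of a tuple. -/
def rm2 {α : Type*} {k : ℕ} (i j : ℕ) (a : Fin (k+2) → α) : Fin k → α :=
  fun r => a ⟨skip2 i j r.1, by
    have := r.2; unfold skip2; split
    · omega
    · split <;> omega⟩

/-- Total weight of a multi-index. -/
def wt {k : ℕ} (ν : Fin k → ℕ) : ℕ := ∑ r, ν r

/-- The multinomial coefficient `(|m| + s)! / (∏ mᵣ! · s!)`. -/
def mnom {K : ℕ} (m : Fin K → ℕ) (s : ℕ) : ℕ :=
  (wt m + s).factorial / ((∏ r, (m r).factorial) * s.factorial)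

variable (F : Type*) [Field F]

/-- A Lie conformal algebra over `F`: an `F[∂]`-module `A` (given by the linear
endomorphism `D`), together with a `λ`-bracket recorded through its coefficients:
`[a_λ b] = ∑ₙ (br a b n) λⁿ`, satisfying sesquilinearity, skew-symmetry and the
Jacobi identity (all written in terms of coefficients of the `λ`-expansions). -/
structure LCA (A : Type*) [AddCommGroup A] [Module F A] where
  D : A →ₗ[F] A
  br : A →ₗ[F] A →ₗ[F] (ℕ → A)
  br_fin : ∀ a b, (Function.support (br a b)).Finite
  sesq_left_zero : ∀ a b, br (D a) b 0 = 0
  sesq_left : ∀ a b n, br (D a) b (n+1) = - br a b n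
  sesq_right : ∀ a b n, br a (D b) n
      = D (br a b n) + (if n = 0 then 0 else br a b (n-1))
  skew : ∀ a b m, br a b m
      = - ∑ᶠ n, ((-1 : F)^n * (n.choose m : F)) • ((D ^ (n - m)) (br b a n))
  jacobi : ∀ a b c m n,
      br a (br b c n) m - br b (br a c m) n
        = ∑ j ∈ Finset.range (m+1), (((n+j).choose j : F)) • br (br a b (m-j)) c (n+j)

/-- A module over a Lie conformal algebra: an `F[∂]`-module `M` with a `λ`-action
of `A`, given through the coefficients `a_λ v = ∑ₙ (act a v n) λⁿ`, satisfying
sesquilinearity and the Jacobi identity. -/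
structure LCAMod {A : Type*} [AddCommGroup A] [Module F A] (L : LCA F A)
    (M : Type*) [AddCommGroup M] [Module F M] where
  D : M →ₗ[F] M
  act : A →ₗ[F] M →ₗ[F] (ℕ → M)
  act_fin : ∀ a m, (Function.support (act a m)).Finite
  sesq_left_zero : ∀ a m, act (L.D a) m 0 = 0
  sesq_left : ∀ a m n, act (L.D a) m (n+1) = - act a m n
  sesq_right : ∀ a m n, act a (D m) n
      = D (act a m n) + (if n = 0 then 0 else act a m (n-1))
  jacobi : ∀ a b v p q,
      act a (act b v q) p - act b (act a v p) q
        = ∑ j ∈ Finset.range (p+1), (((q+j).choose j : F)) • act (L.br a b (p-j)) v (q+j)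

variable {F}
variable {A M : Type*} [AddCommGroup A] [Module F A] [AddCommGroup M] [Module F M]

/-- Torsion elements of the `F[∂]`-module `A`. -/
def IsTor (L : LCA F A) (x : A) : Prop :=
  ∃ p : Polynomial F, p ≠ 0 ∧ Polynomial.aeval L.D p x = 0

/-- `A` decomposes, as an `F[∂]`-module, into the direct sum of its torsion and
a free complementary submodule `F[∂] ⊗ U`. -/
def Decomposes (L : LCA F A) : Prop :=
  ∃ U : Submodule F A, Function.Bijective
    (fun p : {x : A // IsTor L x} × (ℕ →₀ U) =>
      (p.1 : A) + p.2.sum (fun n u => (L.D ^ n) (u : A)))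

variable {L : LCA F A}

/-- The condition for a coefficient family
`γ : A^{⊗ k} → F[λ₁,…,λ_k] ⊗ M` (recorded via the coefficients
`γ a ν` of `λ^ν`) to be a basic `k`-cochain: `F`-multilinearity, polynomiality,
sesquilinearity (A1) and skew-symmetry (A2). -/
structure IsGamma (R : LCAMod F L M) (k : ℕ)
    (γ : (Fin k → A) → (Fin k → ℕ) → M) : Prop where
  map_add : ∀ (a : Fin k → A) (i : Fin k) (x y : A),
    γ (Function.update a i (x + y)) = γ (Function.update a i x) + γ (Function.update a i y)
  map_smul : ∀ (a : Fin k → A) (i : Fin k) (r : F) (x : A),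
    γ (Function.update a i (r • x)) = r • γ (Function.update a i x)
  fin : ∀ a, (Function.support (γ a)).Finite
  sesq : ∀ (a : Fin k → A) (i : Fin k) (x : A) (ν : Fin k → ℕ),
    γ (Function.update a i (L.D x)) ν
      = (if ν i = 0 then 0 else - γ (Function.update a i x) (Function.update ν i (ν i - 1)))
  skew : ∀ (a : Fin k → A) (ν : Fin k → ℕ) (σ : Equiv.Perm (Fin k)),
    γ (a ∘ σ) (ν ∘ σ) = ((Equiv.Perm.sign σ : ℤˣ) : ℤ) • γ a ν

/-- The action of `∂` on basic cochains: `(∂γ) = (∂^M + λ₁ + ⋯ + λ_k) ∘ γ`,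
in terms of coefficients. -/
def GammaD (R : LCAMod F L M) {k : ℕ} (γ : (Fin k → A) → (Fin k → ℕ) → M) :
    (Fin k → A) → (Fin k → ℕ) → M :=
  fun a ν => R.D (γ a ν)
    + ∑ i : Fin k, (if ν i = 0 then 0 else γ a (Function.update ν i (ν i - 1)))

/-- Substitution of the auxiliary variable `μ` by
`λ† = −λ₁ − ⋯ − λ_K − ∂^M` (with `∂^M` moved to the left) in a polynomial
`q` in `λ₁,…,λ_K, μ`, recorded through its coefficients `q ρ n` of `λ^ρ μ^n`.
The result is the coefficient of `λ^ν`. -/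
noncomputable def substDag {K : ℕ} (DM : M →ₗ[F] M)
    (q : (Fin K → ℕ) → ℕ → M) (ν : Fin K → ℕ) : M :=
  ∑ ρ ∈ Finset.Iic ν, ∑ᶠ s : ℕ,
    (((-1 : F)^(wt (fun r => ν r - ρ r) + s)) * (mnom (fun r => ν r - ρ r) s : F)) •
      ((DM ^ s) (q ρ (wt (fun r => ν r - ρ r) + s)))

/-- The condition for a coefficient family
`c : A^{⊗(k+1)} → F[λ₁,…,λ_k] ⊗ M` to be a `(k+1)`-`λ`-bracket
(an element of `C^{k+1}(A,M)`), i.e. conditions B1, B2, B3 of the paper,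
written in terms of the coefficients `c a ν` of `λ^ν`. -/
structure IsCBr (R : LCAMod F L M) (k : ℕ)
    (c : (Fin (k+1) → A) → (Fin k → ℕ) → M) : Prop where
  map_add : ∀ (a : Fin (k+1) → A) (i : Fin (k+1)) (x y : A),
    c (Function.update a i (x + y)) = c (Function.update a i x) + c (Function.update a i y)
  map_smul : ∀ (a : Fin (k+1) → A) (i : Fin (k+1)) (r : F) (x : A),
    c (Function.update a i (r • x)) = r • c (Function.update a i x)
  fin : ∀ a, (Function.support (c a)).Finite
  sesq₁ : ∀ (a : Fin (k+1) → A) (i : Fin k) (x : A) (ν : Fin k → ℕ),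
    c (Function.update a i.castSucc (L.D x)) ν
      = (if ν i = 0 then 0
         else - c (Function.update a i.castSucc x) (Function.update ν i (ν i - 1)))
  sesq₂ : ∀ (a : Fin (k+1) → A) (x : A) (ν : Fin k → ℕ),
    c (Function.update a (Fin.last k) (L.D x)) ν
      = R.D (c (Function.update a (Fin.last k) x) ν)
        + ∑ i : Fin k, (if ν i = 0 then 0
            else c (Function.update a (Fin.last k) x) (Function.update ν i (ν i - 1)))
  skew : ∀ (a : Fin (k+1) → A) (ν : Fin k → ℕ) (σ : Equiv.Perm (Fin (k+1))),
    c a ν = ((Equiv.Perm.sign σ : ℤˣ) : ℤ) • substDag R.D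
      (fun ρ n =>
        if (Fin.snoc ρ n : Fin (k+1) → ℕ) (σ (Fin.last k)) = 0 then
          c (a ∘ σ) (fun i : Fin k => (Fin.snoc ρ n : Fin (k+1) → ℕ) (σ i.castSucc))
        else 0) ν

/-- The subspace `C̄`: poly-`λ`-brackets vanishing whenever one of the arguments is
a torsion element of `A`. -/
def VanishOnTorsion (L : LCA F A) {k : ℕ}
    (c : (Fin (k+1) → A) → (Fin k → ℕ) → M) : Prop :=
  ∀ a ν, (∃ i, IsTor L (a i)) → c a ν = 0

/-- The differential `d : C⁰ = M/∂M → C¹`, `(d∫m)(a) = a_{−∂^M} m`. -/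
noncomputable def dZero (R : LCAMod F L M) (m : M) :
    (Fin 1 → A) → (Fin 0 → ℕ) → M :=
  fun a _ => ∑ᶠ n, ((-1 : F)^n) • ((R.D ^ n) (R.act (a 0) m n))

/-- The second term of the differential `d` of the complex of
poly-`λ`-brackets (the double sum over `i < j` in the paper's formula). -/
noncomputable def dPair (L : LCA F A) (R : LCAMod F L M) :
    ∀ {k : ℕ}, ((Fin (k+1) → A) → (Fin k → ℕ) → M) →
      (Fin (k+2) → A) → (Fin (k+1) → ℕ) → M
  | 0, _, _, _ => 0
  | (s+1), c, a, ν =>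
    ∑ i : Fin (s+2), ∑ j : Fin (s+2),
      if i < j then
        ((-1 : F)^(s + i.1 + j.1 + 1)) •
          ∑ p ∈ Finset.range (ν i + 1),
            substDag R.D
              (fun ρ n =>
                if ρ i = 0 ∧ ρ j = 0 then
                  c (Fin.snoc (Fin.snoc (rm2 i.1 j.1 (Fin.init a)) (a (Fin.last (s+2))))
                      (L.br (a i.castSucc) (a j.castSucc) p))
                    (Fin.snoc (rm2 i.1 j.1 ρ) n)
                else 0)
              (Function.update ν i (ν i - p))
      else 0

/-- The differential `d` on the complex `C^•(A,M)` of poly-`λ`-brackets,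
written in terms of coefficients (formula (1.8) of the paper). Here `c` is a
`(k+1)`-`λ`-bracket and `dRaw c` is a `(k+2)`-`λ`-bracket. -/
noncomputable def dRaw (L : LCA F A) (R : LCAMod F L M) {k : ℕ}
    (c : (Fin (k+1) → A) → (Fin k → ℕ) → M) :
    (Fin (k+2) → A) → (Fin (k+1) → ℕ) → M :=
  fun a ν =>
    (∑ i : Fin (k+1), ((-1 : F)^i.1) •
        R.act (a i.castSucc) (c (rm1 i.1 a) (rm1 i.1 ν)) (ν i))
    + dPair L R c a ν
    + ((-1 : F)^(k+1)) • substDag R.D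
        (fun ρ n =>
          if ρ (Fin.last k) = 0 then
            R.act (a (Fin.last (k+1))) (c (Fin.init a) (Fin.init ρ)) n
          else 0) ν
    + ∑ i : Fin (k+1), ((-1 : F)^(i.1+1)) •
        c (Fin.snoc (rm1 i.1 (Fin.init a)) (L.br (a i.castSucc) (a (Fin.last (k+1))) (ν i)))
          (rm1 i.1 ν)

/-- The second term of the differential `δ` of the basic complex
`Γ̃^•(A,M)` (the double sum over `i < j`). -/
noncomputable def deltaPair (L : LCA F A) (R : LCAMod F L M) :
    ∀ {k : ℕ}, ((Fin k → A) → (Fin k → ℕ) → M) →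
      (Fin (k+1) → A) → (Fin (k+1) → ℕ) → M
  | 0, _, _, _ => 0
  | (s+1), γ, a, ν =>
    ∑ i : Fin (s+2), ∑ j : Fin (s+2),
      if i < j then
        ((-1 : F)^(s + i.1 + j.1)) •
          ∑ p ∈ Finset.range (ν i + 1),
            ((((ν i - p) + ν j).choose (ν i - p) : F)) •
              γ (Fin.snoc (rm2 i.1 j.1 a) (L.br (a i) (a j) p))
                (Fin.snoc (rm2 i.1 j.1 ν) ((ν i - p) + ν j))
      else 0

/-- The differential `δ` of the basic Lie conformal algebra cohomology complex
`Γ̃^•(A,M)`, written in terms of coefficients of the `λ`-expansions. -/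
noncomputable def deltaRaw (L : LCA F A) (R : LCAMod F L M) {k : ℕ}
    (γ : (Fin k → A) → (Fin k → ℕ) → M) :
    (Fin (k+1) → A) → (Fin (k+1) → ℕ) → M :=
  fun a ν =>
    (∑ i : Fin (k+1), ((-1 : F)^i.1) •
        R.act (a i) (γ (rm1 i.1 a) (rm1 i.1 ν)) (ν i))
    + deltaPair L R γ a ν

/-- The map `ψ^{k+1} : Γ̃^{k+1}(A,M) → C^{k+1}(A,M)`,
`{a₁ λ₁ ⋯ a_k λ_k a_{k+1}}_{ψ(γ)} = γ_{λ₁,…,λ_k,λ†}(a₁,…,a_{k+1})`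
where `λ† = −λ₁ − ⋯ − λ_k − ∂^M` (with `∂^M` moved to the left). -/
noncomputable def psiRaw (R : LCAMod F L M) {k : ℕ}
    (γ : (Fin (k+1) → A) → (Fin (k+1) → ℕ) → M) :
    (Fin (k+1) → A) → (Fin k → ℕ) → M :=
  fun a ν => substDag R.D (fun ρ n => γ a (Fin.snoc ρ n)) ν

/-- The map `χ` on "polynomial duals": given
`φ : Hom(F[λ₁,…,λ_K], M)` (recorded through its values `φ ν` on monomials),
`chiMap DM φ` is `φ ∘ (substitution λ_{K+1} ↦ −λ₁ − ⋯ − λ_K + ∂^M)`,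
with `∂^M` moved to the left. -/
noncomputable def chiMap {K : ℕ} (DM : M →ₗ[F] M) (φ : (Fin K → ℕ) → M) :
    (Fin (K+1) → ℕ) → M :=
  fun ν =>
    ∑ m ∈ Finset.Iic (fun _ : Fin K => ν (Fin.last K)),
      if wt m ≤ ν (Fin.last K) then
        (((-1 : F)^(wt m)) * (mnom m (ν (Fin.last K) - wt m) : F)) •
          ((DM ^ (ν (Fin.last K) - wt m)) (φ (fun r => Fin.init ν r + m r)))
      else 0

section Product

variable (F) {N : Type*} [CommRing N] [Algebra F N]

/-- The exterior multiplication of basic cochains, in coefficient form. -/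
noncomputable def wedge {h k : ℕ}
    (α : (Fin h → A) → (Fin h → ℕ) → N) (β : (Fin k → A) → (Fin k → ℕ) → N) :
    (Fin (h+k) → A) → (Fin (h+k) → ℕ) → N :=
  fun a ν =>
    ((h.factorial * k.factorial : F))⁻¹ •
      ∑ σ : Equiv.Perm (Fin (h+k)),
        ((Equiv.Perm.sign σ : ℤˣ) : ℤ) •
          (α (fun i => a (σ (Fin.castAdd k i))) (fun i => ν (σ (Fin.castAdd k i))) *
           β (fun i => a (σ (Fin.natAdd h i))) (fun i => ν (σ (Fin.natAdd h i))))

/-- Contraction of a basic cochain by (a generator of) a basic `h`-chain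
`b ⊗ φ ∈ A^{⊗h} ⊗ Hom(F[λ₁,…,λ_h], N)`. -/
noncomputable def iotaG {h k : ℕ} (b : Fin h → A) (φ : (Fin h → ℕ) → N)
    (γ : (Fin (h + k) → A) → (Fin (h + k) → ℕ) → N) :
    (Fin k → A) → (Fin k → ℕ) → N :=
  fun a ν => ∑ᶠ ρ : Fin h → ℕ, φ ρ * γ (Fin.append b a) (Fin.append ρ ν)

/-- The action of `∂` on (generators of) the space of basic `h`-chains:
`∂(a ⊗ φ) = a ⊗ ((−λ₁^* − ⋯ − λ_h^* + ∂)φ)`. -/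
def chainD (R : LCAMod F L N) {h : ℕ} (φ : (Fin h → ℕ) → N) : (Fin h → ℕ) → N :=
  fun ρ => R.D (φ ρ) - ∑ i : Fin h, φ (Function.update ρ i (ρ i + 1))

/-- Contraction by a basic 1-chain `a₀ ⊗ m(x)`, where `m(x) = ∑ m_k x^k` is recorded
by its coefficient function `m : ℕ → N` (formula (3.23) of the paper, using the
pairing `⟨x^p, λ^q⟩ = q! δ_{p,q}`). -/
noncomputable def iota1 {k : ℕ} (a₀ : A) (m : ℕ → N)
    (γ : (Fin (k+1) → A) → (Fin (k+1) → ℕ) → N) : (Fin k → A) → (Fin k → ℕ) → N :=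
  fun a ν => ∑ᶠ q : ℕ, (q.factorial : F) • (m q * γ (Fin.cons a₀ a) (Fin.cons q ν))

/-- The Lie derivative `L_ξ = δ ∘ ι_ξ + ι_ξ ∘ δ` along a basic 1-chain. -/
noncomputable def lie1 (R : LCAMod F L N) {k : ℕ} (a₀ : A) (m : ℕ → N)
    (γ : (Fin (k+1) → A) → (Fin (k+1) → ℕ) → N) : (Fin (k+1) → A) → (Fin (k+1) → ℕ) → N :=
  deltaRaw L R (iota1 F a₀ m γ) + iota1 F a₀ m (deltaRaw L R γ)

end Product

end LCC

namespace LCC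

open scoped TensorProduct

variable (F : Type*) [Field F] {A : Type*} [AddCommGroup A] [Module F A]
  {N : Type*} [CommRing N] [Algebra F N] {L : LCA F A}

/-- Coefficient series of `(∂_x^p m)(x) · n(x)`. -/
noncomputable def g1ser (m n : ℕ → N) (p : ℕ) : ℕ → N :=
  fun k => ∑ i ∈ Finset.range (k+1), (((i+p).descFactorial p) • m (i+p)) * n (k-i)

/-- Coefficient series of `⟨m(x₁), b_{λ₁} n(x)⟩`, with `⟨x^p, λ^q⟩ = q! δ_{p,q}`. -/
noncomputable def pairSer (R : LCAMod F L N) (m : ℕ → N) (b₀ : A) (n : ℕ → N) : ℕ → N :=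
  fun k => ∑ᶠ q : ℕ, (q.factorial : F) • (m q * R.act b₀ (n k) q)

/-- `∂_x` on `N[[x]]` in coefficient form. -/
noncomputable def derX : (ℕ → N) →ₗ[F] (ℕ → N) where
  toFun m := fun k => (k + 1 : F) • m (k+1)
  map_add' := by intro x y; funext k; simp [smul_add]
  map_smul' := by intro r x; funext k; simp; rw [smul_comm]

/-- `∂^M` acting coefficientwise on `N[[x]]`. -/
noncomputable def coefD (R : LCAMod F L N) : (ℕ → N) →ₗ[F] (ℕ → N) where
  toFun m := fun k => R.D (m k)
  map_add' := by intro x y; funext k; simp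
  map_smul' := by intro r x; funext k; simp

/-- The relation operator `∂ ⊗ 1 + 1 ⊗ ∂_x` on `A ⊗ N[[x]]`. -/
noncomputable def chainRel (L : LCA F A) (N : Type*) [CommRing N] [Algebra F N] :
    (A ⊗[F] (ℕ → N)) →ₗ[F] (A ⊗[F] (ℕ → N)) :=
  LinearMap.rTensor (ℕ → N) L.D + LinearMap.lTensor A (derX F)

/-- `Γ̃₁(A,N) = (A ⊗ N[[x]])/(∂⊗1 + 1⊗∂_x)(A ⊗ N[[x]])`. -/
noncomputable abbrev Gamma1 (L : LCA F A) (N : Type*) [CommRing N] [Algebra F N] :=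
  (A ⊗[F] (ℕ → N)) ⧸ LinearMap.range (chainRel F L N)

/-- The Lie bracket of two generators of `Γ̃₁`. -/
noncomputable def brkGen (R : LCAMod F L N) (a : A) (m : ℕ → N) (b : A) (n : ℕ → N) :
    A ⊗[F] (ℕ → N) :=
  (∑ᶠ p : ℕ, (L.br a b p) ⊗ₜ[F] (g1ser m n p))
    - a ⊗ₜ[F] (pairSer F R n b m) + b ⊗ₜ[F] (pairSer F R m a n)

/-- The operator `∂` on `A ⊗ N[[x]]`: `∂(a ⊗ m(x)) = a ⊗ (∂^M − ∂_x)m(x)`. -/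
noncomputable def chainPartial (R : LCAMod F L N) :
    (A ⊗[F] (ℕ → N)) →ₗ[F] (A ⊗[F] (ℕ → N)) :=
  LinearMap.lTensor A (coefD F R - derX F)

/-- The relation operator `∂` on `A ⊗ M`, so that `C₁ = (A⊗M)/∂(A⊗M)`. -/
noncomputable def c1Rel (L : LCA F A) (R : LCAMod F L N) :
    (A ⊗[F] N) →ₗ[F] (A ⊗[F] N) :=
  LinearMap.rTensor N L.D + LinearMap.lTensor A R.D

/-- `C₁(A,N) = (A ⊗ N)/∂(A ⊗ N)`. -/
noncomputable abbrev C1Q (L : LCA F A) (R : LCAMod F L N) :=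
  (A ⊗[F] N) ⧸ LinearMap.range (c1Rel F L R)

/-- `e^{x ∂^M} m` as a power series. -/
noncomputable def expSer (R : LCAMod F L N) : N →ₗ[F] (ℕ → N) where
  toFun m := fun k => (k.factorial : F)⁻¹ • ((R.D ^ k) m)
  map_add' := by intro x y; funext k; simp
  map_smul' := by intro r x; funext k; simp; rw [smul_comm]

/-- `χ₁ : A ⊗ M → A ⊗ M[[x]]`, `a ⊗ m ↦ a ⊗ e^{x∂^M} m`, on raw chains. -/
noncomputable def chi1Raw (R : LCAMod F L N) : (A ⊗[F] N) →ₗ[F] (A ⊗[F] (ℕ → N)) :=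
  LinearMap.lTensor A (expSer F R)

/-- The Lie bracket of two generators of `ΠC₁`:
`[a⊗m, b⊗n] = [a_{∂^M₁} b]_→ ⊗ mn + b ⊗ (a_{∂^M} n)_→ m − a ⊗ (b_{∂^M} m)_→ n`. -/
noncomputable def brkC1Gen (R : LCAMod F L N) (a : A) (m : N) (b : A) (n : N) :
    A ⊗[F] N :=
  (∑ᶠ p : ℕ, (L.br a b p) ⊗ₜ[F] (((R.D ^ p) m) * n))
    + b ⊗ₜ[F] (∑ᶠ q : ℕ, R.act a n q * ((R.D ^ q) m))
    - a ⊗ₜ[F] (∑ᶠ q : ℕ, R.act b m q * ((R.D ^ q) n))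

/-- Contraction of `c ∈ C^{k+2}(A,M)` by a 1-chain `a₀ ⊗ m ∈ C₁`. -/
noncomputable def iotaC1 {k : ℕ} (R : LCAMod F L N) (a₀ : A) (m : N)
    (c : (Fin (k+2) → A) → (Fin (k+1) → ℕ) → N) :
    (Fin (k+1) → A) → (Fin k → ℕ) → N :=
  fun a ν => ∑ᶠ p : ℕ, c (Fin.cons a₀ a) (Fin.cons p ν) * ((R.D ^ p) m)

/-- Contraction `ι_{a₀⊗m} : C¹ → C⁰`, `ι_{a₀⊗m} c = ∫ m·c(a₀)`. -/
noncomputable def iotaC1zero (R : LCAMod F L N) (a₀ : A) (m : N)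
    (c : (Fin 1 → A) → (Fin 0 → ℕ) → N) : N :=
  m * c (fun _ => a₀) (fun i => i.elim0)

/-- The Lie derivative `L_x = d∘ι_x + ι_x∘d` on `C^{k+2}`. -/
noncomputable def lieC1 {k : ℕ} (R : LCAMod F L N) (a₀ : A) (m : N)
    (c : (Fin (k+2) → A) → (Fin (k+1) → ℕ) → N) :
    (Fin (k+2) → A) → (Fin (k+1) → ℕ) → N :=
  dRaw L R (iotaC1 F R a₀ m c) + iotaC1 F R a₀ m (dRaw L R c)

end LCC

namespace LCC

section Ops
open scoped Classical
variable {F : Type*} [Field F] {M : Type*} [AddCommGroup M] [Module F M]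

/-- Multiplication by `λ_i`. -/
def Lam (F : Type*) [Field F] {M : Type*} [AddCommGroup M] [Module F M] {K : ℕ} (i : Fin K) :
    Module.End F ((Fin K → ℕ) → M) where
  toFun f := fun ν => if ν i = 0 then 0 else f (Function.update ν i (ν i - 1))
  map_add' f g := by funext ν; simp only [Pi.add_apply]; split <;> simp
  map_smul' r f := by funext ν; simp only [Pi.smul_apply, RingHom.id_apply]; split <;> simp

/-- `∂^M` acting coefficientwise. -/
def Dp {K : ℕ} (D : M →ₗ[F] M) : Module.End F ((Fin K → ℕ) → M) where
  toFun f := fun ν => D (f ν)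
  map_add' f g := by funext ν; simp
  map_smul' r f := by funext ν; simp

/-- multiplication by `λ^m` -/
noncomputable def shiftM (F : Type*) [Field F] {M : Type*} [AddCommGroup M] [Module F M] {K : ℕ} (m : Fin K → ℕ) :
    Module.End F ((Fin K → ℕ) → M) where
  toFun f := fun ν => if m ≤ ν then f (ν - m) else 0
  map_add' f g := by funext ν; simp only [Pi.add_apply]; split <;> simp
  map_smul' r f := by funext ν; simp only [Pi.smul_apply, RingHom.id_apply]; split <;> simp

lemma Lam_apply {K : ℕ} (i : Fin K) (f : (Fin K → ℕ) → M) (ν) :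
    Lam F i f ν = if ν i = 0 then 0 else f (Function.update ν i (ν i - 1)) := rfl

lemma Dp_apply {K : ℕ} (D : M →ₗ[F] M) (f : (Fin K → ℕ) → M) (ν) :
    Dp D f ν = D (f ν) := rfl

lemma shiftM_apply {K : ℕ} (m : Fin K → ℕ) (f : (Fin K → ℕ) → M) (ν) :
    shiftM F m f ν = if m ≤ ν then f (ν - m) else 0 := rfl

lemma shiftM_mul {K : ℕ} (m n : Fin K → ℕ) :
    (shiftM F m * shiftM F n : Module.End F ((Fin K → ℕ) → M)) = shiftM F (m + n) := by
  ext f ν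
  simp only [Module.End.mul_apply, shiftM_apply]
  by_cases h : m + n ≤ ν
  · have h1 : m ≤ ν := fun i => le_trans (Nat.le_add_right _ _) (h i)
    have h2 : n ≤ ν - m := fun i => by have := h i; simp at this ⊢; omega
    rw [if_pos h1, if_pos h2, if_pos h, tsub_add_eq_tsub_tsub]
  · rw [if_neg h]
    split
    · rename_i h1
      rw [if_neg]
      intro h2
      apply h
      intro i
      have := h1 i
      have := h2 i
      simp at *
      omega
    · rfl

lemma Lam_eq_shiftM {K : ℕ} (i : Fin K) :
    (Lam F i : Module.End F ((Fin K → ℕ) → M)) = shiftM F (Pi.single i 1) := by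
  ext f ν
  rw [Lam_apply, shiftM_apply]
  by_cases h : ν i = 0
  · rw [if_pos h, if_neg]
    intro h1
    have := h1 i
    simp at this
    omega
  · rw [if_neg h, if_pos]
    · congr 1
      funext r
      by_cases hr : r = i
      · subst hr; simp
      · simp [hr]
    · intro r
      by_cases hr : r = i
      · subst hr; simp; omega
      · simp [hr]

lemma shiftM_zero {K : ℕ} : (shiftM F (0 : Fin K → ℕ) : Module.End F ((Fin K → ℕ) → M)) = 1 := by
  ext f ν
  have : (0 : Fin K → ℕ) ≤ ν := fun i => Nat.zero_le _
  simp [shiftM_apply, this]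

lemma Lam_pow {K : ℕ} (i : Fin K) (p : ℕ) :
    (Lam F i ^ p : Module.End F ((Fin K → ℕ) → M)) = shiftM F (Pi.single i p) := by
  induction p with
  | zero => rw [pow_zero, Pi.single_zero, shiftM_zero]
  | succ n ih => rw [pow_succ, ih, Lam_eq_shiftM, shiftM_mul, Pi.single_add]

lemma Lam_pow_apply {K : ℕ} (i : Fin K) (p : ℕ) (f : (Fin K → ℕ) → M) (ν) :
    ((Lam F i : Module.End F ((Fin K → ℕ) → M)) ^ p) f ν
      = if p ≤ ν i then f (Function.update ν i (ν i - p)) else 0 := by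
  rw [Lam_pow, shiftM_apply]
  have h : Pi.single i p ≤ ν ↔ p ≤ ν i := by
    constructor
    · intro h; simpa using h i
    · intro h r
      by_cases hr : r = i
      · subst hr; simpa
      · simp [hr]
  simp only [h]
  congr 2
  funext r
  by_cases hr : r = i
  · subst hr; simp
  · simp [hr]

lemma Lam_comm {K : ℕ} (i j : Fin K) :
    Commute (Lam F i : Module.End F ((Fin K → ℕ) → M)) (Lam F j) := by
  unfold Commute SemiconjBy
  rw [Lam_eq_shiftM, Lam_eq_shiftM, shiftM_mul, shiftM_mul, add_comm]

lemma Dp_comm_Lam {K : ℕ} (D : M →ₗ[F] M) (i : Fin K) :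
    Commute (Dp D : Module.End F ((Fin K → ℕ) → M)) (Lam F i) := by
  unfold Commute SemiconjBy
  ext f ν
  simp only [Module.End.mul_apply, Dp_apply, Lam_apply]
  split <;> simp

lemma Dp_pow_apply {K : ℕ} (D : M →ₗ[F] M) (s : ℕ) (f : (Fin K → ℕ) → M) (ν) :
    ((Dp D : Module.End F ((Fin K → ℕ) → M)) ^ s) f ν = (D ^ s) (f ν) := by
  induction s generalizing f with
  | zero => simp
  | succ n ih => rw [pow_succ, Module.End.mul_apply, ih, pow_succ, Module.End.mul_apply]; rfl

/-- `D + ∑ λ_i` -/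
def Eop {K : ℕ} (D : M →ₗ[F] M) : Module.End F ((Fin K → ℕ) → M) := (∑ i, Lam F i) + Dp D

/-- `- D - ∑ λ_i` -/
def Yop {K : ℕ} (D : M →ₗ[F] M) : Module.End F ((Fin K → ℕ) → M) := - Eop D

lemma Eop_apply {K : ℕ} (D : M →ₗ[F] M) (f : (Fin K → ℕ) → M) (ν) :
    Eop D f ν = (∑ i, Lam F i f ν) + D (f ν) := by
  simp [Eop, Dp_apply, LinearMap.add_apply, LinearMap.sum_apply]

lemma noncommProd_Lam {K : ℕ} (m : Fin K → ℕ) (s : Finset (Fin K)) (hc) :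
    s.noncommProd (fun i => (Lam F i : Module.End F ((Fin K → ℕ) → M)) ^ m i) hc
      = shiftM F (fun i => if i ∈ s then m i else 0) := by
  induction s using Finset.induction_on with
  | empty => 
    simp only [Finset.noncommProd_empty]
    rw [← shiftM_zero]; congr 1
  | insert a s has ih =>
    rw [Finset.noncommProd_insert_of_notMem _ _ _ _ has, ih, Lam_pow, shiftM_mul]
    congr 1
    funext r
    by_cases hr : r = a
    · subst hr; simp [has]
    · simp [hr]

lemma sumLam_pow_apply {K : ℕ} (j : ℕ) (f : (Fin K → ℕ) → M) (ν) :
    ((∑ i, Lam F i : Module.End F ((Fin K → ℕ) → M)) ^ j) f ν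
      = ∑ m ∈ Finset.Iic ν, if wt m = j then
          (Nat.multinomial Finset.univ m : F) • f (ν - m) else 0 := by
  rw [Finset.sum_pow_eq_sum_piAntidiag_of_commute _ _ (fun i _ j _ _ => Lam_comm i j)]
  rw [LinearMap.sum_apply, Finset.sum_apply, ← Finset.sum_filter]
  have : Finset.filter (fun m => wt m = j) (Finset.Iic ν)
     = Finset.filter (fun m => m ≤ ν) (Finset.piAntidiag Finset.univ j) := by
    ext m
    rw [Finset.mem_filter, Finset.mem_filter, Finset.mem_Iic, Finset.mem_piAntidiag, wt]
    simp [and_comm]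
  rw [this, Finset.sum_filter]
  refine Finset.sum_congr rfl fun m hm => ?_
  rw [Module.End.mul_apply, noncommProd_Lam]
  simp only [Finset.mem_univ, if_true]
  have h0 : ∀ g : (Fin K → ℕ) → M, ((Nat.multinomial Finset.univ m : ℕ) : Module.End F ((Fin K → ℕ) → M)) g
     = (Nat.multinomial Finset.univ m : F) • g := by
    intro g
    rw [Nat.cast_smul_eq_nsmul]
    exact Module.End.natCast_apply _ _
  rw [h0, Pi.smul_apply, shiftM_apply]
  split <;> simp

lemma mnom_eq {K : ℕ} (m : Fin K → ℕ) (s : ℕ) :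
    mnom m s = (wt m + s).choose (wt m) * Nat.multinomial Finset.univ m := by
  unfold mnom
  refine Nat.div_eq_of_eq_mul_left (by positivity) ?_
  have h1 : (wt m + s).choose (wt m) * (wt m).factorial * s.factorial = (wt m + s).factorial := by
    have := Nat.choose_mul_factorial_mul_factorial (Nat.le_add_right (wt m) s)
    simpa using this
  have h2 : (∏ r, (m r).factorial) * Nat.multinomial Finset.univ m = (wt m).factorial :=
    Nat.multinomial_spec Finset.univ m
  rw [← h1, ← h2]; ring

lemma Yop_pow_apply {K : ℕ} (D : M →ₗ[F] M) (n : ℕ) (f : (Fin K → ℕ) → M) (ν) :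
    ((Yop D : Module.End F ((Fin K → ℕ) → M)) ^ n) f ν
      = ∑ m ∈ Finset.Iic ν, if wt m ≤ n then
          ((-1 : F)^n * (mnom m (n - wt m) : F)) • (D ^ (n - wt m)) (f (ν - m)) else 0 := by
  have hc : Commute (∑ i, Lam F i : Module.End F ((Fin K → ℕ) → M)) (Dp D) :=
    Commute.sum_left _ _ _ fun i _ => (Dp_comm_Lam D i).symm
  have hY : (Yop D : Module.End F ((Fin K → ℕ) → M)) = (-1 : F) • ((∑ i, Lam F i) + Dp D) := by
    ext f ν; simp [Yop, Eop, add_comm]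
  rw [hY, smul_pow, hc.add_pow, LinearMap.smul_apply, LinearMap.sum_apply, Pi.smul_apply,
    Finset.sum_apply]
  have key : ∀ j ∈ Finset.range (n+1),
      ((∑ i, Lam F i : Module.End F ((Fin K → ℕ) → M)) ^ j * (Dp D) ^ (n - j) * (n.choose j : Module.End F ((Fin K → ℕ) → M)) : Module.End F ((Fin K → ℕ) → M)) f ν
      = ∑ m ∈ Finset.Iic ν, if wt m = j then
          ((mnom m (n - wt m) : F)) • (D ^ (n - wt m)) (f (ν - m)) else 0 := by
    intro j hj
    have hj' : j ≤ n := by simpa [Nat.lt_succ_iff] using hj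
    rw [Module.End.mul_apply, Module.End.mul_apply, Module.End.natCast_apply, map_nsmul, map_nsmul, Pi.smul_apply,
      sumLam_pow_apply, Finset.smul_sum]
    refine Finset.sum_congr rfl fun m hm => ?_
    split
    · rename_i h
      subst h
      rw [Dp_pow_apply, mnom_eq, Nat.add_sub_cancel' hj', ← Nat.cast_smul_eq_nsmul F, smul_smul]
      push_cast; rfl
    · simp
  rw [Finset.sum_congr rfl key, Finset.sum_comm, Finset.smul_sum]
  refine Finset.sum_congr rfl fun m hm => ?_
  rw [Finset.sum_ite_eq]
  simp only [Finset.mem_range, Nat.lt_succ_iff]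
  split
  · rw [smul_smul]
  · simp

lemma substDag_eq {K : ℕ} (D : M →ₗ[F] M) (q : (Fin K → ℕ) → ℕ → M) (N : ℕ)
    (hq : ∀ ρ n, N ≤ n → q ρ n = 0) :
    substDag D q = ∑ n ∈ Finset.range N, ((Yop D : Module.End F ((Fin K → ℕ) → M)) ^ n) (fun ρ => q ρ n) := by
  funext ν
  rw [Finset.sum_apply]
  simp only [Yop_pow_apply]
  rw [Finset.sum_comm]
  unfold substDag
  refine Finset.sum_bij' (fun ρ _ => ν - ρ) (fun m _ => ν - m) ?_ ?_ ?_ ?_ ?_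
  · intro ρ _; simp
  · intro ρ _; simp
  · intro ρ h; exact tsub_tsub_cancel_of_le (Finset.mem_Iic.1 h)
  · intro ρ h; exact tsub_tsub_cancel_of_le (Finset.mem_Iic.1 h)
  · intro ρ h
    rw [tsub_tsub_cancel_of_le (Finset.mem_Iic.1 h)]
    have hw : (fun r => ν r - ρ r) = ν - ρ := rfl
    rw [hw]
    set w := wt (ν - ρ) with hwdef
    rw [finsum_eq_sum_of_support_subset (s := Finset.range (N - w))]
    · rw [← Finset.sum_filter]
      refine Finset.sum_bij' (fun s _ => w + s) (fun n _ => n - w) ?_ ?_ ?_ ?_ ?_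
      · intro s hs; simp at hs ⊢; omega
      · intro s hs; simp at hs ⊢; omega
      · intro s hs; simp
      · intro s hs; simp at hs ⊢; omega
      · intro s hs
        simp
    · intro s hs
      simp only [Finset.coe_range, Set.mem_Iio]
      by_contra hcon
      apply hs
      simp only
      rw [hq _ _ (by omega)]
      simp

end Ops
end LCC

namespace LCC
section Ops2
variable {F : Type*} [Field F] {M : Type*} [AddCommGroup M] [Module F M]

/-- coefficient of `μ^n` where `μ` is the last variable -/
def slice (F : Type*) [Field F] {M : Type*} [AddCommGroup M] [Module F M] {K : ℕ} (n : ℕ) :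
    ((Fin (K+1) → ℕ) → M) →ₗ[F] ((Fin K → ℕ) → M) where
  toFun f := fun ρ => f (Fin.snoc ρ n)
  map_add' f g := rfl
  map_smul' r f := rfl

lemma slice_apply {K : ℕ} (n : ℕ) (f : (Fin (K+1) → ℕ) → M) (ρ : Fin K → ℕ) :
    slice F n f ρ = f (Fin.snoc ρ n) := rfl

/-- view a polynomial as independent of the new last variable -/
def extL {K : ℕ} (f : (Fin K → ℕ) → M) : (Fin (K+1) → ℕ) → M :=
  fun ν => if ν (Fin.last K) = 0 then f (Fin.init ν) else 0

lemma extL_snoc {K : ℕ} (f : (Fin K → ℕ) → M) (ρ : Fin K → ℕ) (n : ℕ) :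
    extL f (Fin.snoc ρ n) = if n = 0 then f ρ else 0 := by
  simp [extL]

/-- polynomiality: bounded exponents -/
def FS {K : ℕ} (f : (Fin K → ℕ) → M) : Prop :=
  ∃ N : ℕ, ∀ ν, (∃ i, N ≤ ν i) → f ν = 0

lemma FS_iff {K : ℕ} (f : (Fin K → ℕ) → M) : FS f ↔ (Function.support f).Finite := by
  constructor
  · rintro ⟨N, h⟩
    refine Set.Finite.subset (Set.finite_Iic (fun _ : Fin K => N)) ?_
    intro ν hν
    simp only [Set.mem_Iic]
    by_contra hc
    apply hν
    apply h
    simp only [Pi.le_def, not_forall, not_le] at hc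
    obtain ⟨i, hi⟩ := hc
    exact ⟨i, hi.le⟩
  · intro h
    refine ⟨(h.toFinset.sup (fun ν => Finset.univ.sup ν)) + 1, ?_⟩
    rintro ν ⟨i, hi⟩
    by_contra hc
    have h1 : ν ∈ h.toFinset := by simpa using hc
    have h2 := Finset.le_sup (f := fun ν : Fin K → ℕ => Finset.univ.sup ν) h1
    have h3 := Finset.le_sup (f := ν) (Finset.mem_univ i)
    omega

lemma FS.add {K : ℕ} {f g : (Fin K → ℕ) → M} (hf : FS f) (hg : FS g) : FS (f + g) := by
  obtain ⟨N, hN⟩ := hf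
  obtain ⟨N', hN'⟩ := hg
  refine ⟨max N N', fun ν ⟨i, hi⟩ => ?_⟩
  rw [Pi.add_apply, hN ν ⟨i, le_trans (le_max_left _ _) hi⟩,
    hN' ν ⟨i, le_trans (le_max_right _ _) hi⟩, add_zero]

lemma FS.zero {K : ℕ} : FS (0 : (Fin K → ℕ) → M) := ⟨0, fun _ _ => rfl⟩

lemma FS.smul {K : ℕ} {f : (Fin K → ℕ) → M} (hf : FS f) (r : F) : FS (r • f) := by
  obtain ⟨N, hN⟩ := hf
  exact ⟨N, fun ν h => by rw [Pi.smul_apply, hN ν h, smul_zero]⟩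

lemma FS.neg {K : ℕ} {f : (Fin K → ℕ) → M} (hf : FS f) : FS (-f) := by
  obtain ⟨N, hN⟩ := hf
  exact ⟨N, fun ν h => by rw [Pi.neg_apply, hN ν h, neg_zero]⟩

lemma FS.sub {K : ℕ} {f g : (Fin K → ℕ) → M} (hf : FS f) (hg : FS g) : FS (f - g) := by
  rw [sub_eq_add_neg]; exact hf.add hg.neg

lemma FS.sum {K : ℕ} {ι : Type*} (s : Finset ι) {f : ι → (Fin K → ℕ) → M}
    (hf : ∀ i ∈ s, FS (f i)) : FS (∑ i ∈ s, f i) := by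
  classical
  induction s using Finset.induction_on with
  | empty => exact FS.zero
  | insert a s ha ih =>
    rw [Finset.sum_insert ha]
    exact (hf a (by simp)).add (ih fun i hi => hf i (by simp [hi]))

lemma FS.Lam {K : ℕ} {f : (Fin K → ℕ) → M} (hf : FS f) (i : Fin K) : FS (Lam F i f) := by
  obtain ⟨N, hN⟩ := hf
  refine ⟨N+1, fun ν ⟨r, hr⟩ => ?_⟩
  rw [Lam_apply]
  split
  · rfl
  · apply hN
    refine ⟨r, ?_⟩
    by_cases h : r = i
    · subst h; simp; omega
    · simp [h]; omega

lemma FS.Dp {K : ℕ} {f : (Fin K → ℕ) → M} (hf : FS f) (D : M →ₗ[F] M) : FS (Dp D f) := by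
  obtain ⟨N, hN⟩ := hf
  exact ⟨N, fun ν h => by rw [Dp_apply, hN ν h, map_zero]⟩

lemma FS.Eop {K : ℕ} {f : (Fin K → ℕ) → M} (hf : FS f) (D : M →ₗ[F] M) : FS (Eop D f) := by
  rw [LCC.Eop, LinearMap.add_apply, LinearMap.sum_apply]
  exact (FS.sum _ fun i _ => hf.Lam i).add (hf.Dp D)

lemma FS.pow {K : ℕ} {f : (Fin K → ℕ) → M} (hf : FS f) (T : Module.End F ((Fin K → ℕ) → M))
    (hT : ∀ f, FS f → FS (T f)) (n : ℕ) : FS ((T ^ n) f) := by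
  induction n with
  | zero => simpa
  | succ n ih => rw [pow_succ', Module.End.mul_apply]; exact hT _ ih

lemma FS.Yop {K : ℕ} {f : (Fin K → ℕ) → M} (hf : FS f) (D : M →ₗ[F] M) : FS (Yop D f) := by
  rw [LCC.Yop, LinearMap.neg_apply]; exact (hf.Eop D).neg

lemma FS.slice {K : ℕ} {f : (Fin (K+1) → ℕ) → M} (hf : FS f) (n : ℕ) : FS (slice F n f) := by
  obtain ⟨N, hN⟩ := hf
  refine ⟨N, fun ν ⟨i, hi⟩ => ?_⟩
  rw [slice_apply]
  exact hN _ ⟨i.castSucc, by simpa using hi⟩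

lemma FS.extL {K : ℕ} {f : (Fin K → ℕ) → M} (hf : FS f) : FS (extL f) := by
  obtain ⟨N, hN⟩ := hf
  refine ⟨N+1, fun ν ⟨i, hi⟩ => ?_⟩
  unfold LCC.extL
  split
  · rename_i h
    apply hN
    induction i using Fin.lastCases with
    | last => omega
    | cast i => exact ⟨i, by simp [Fin.init]; omega⟩
  · rfl

/-- substitution of the last variable by `λ†` -/
noncomputable def SS {K : ℕ} (D : M →ₗ[F] M) (f : (Fin (K+1) → ℕ) → M) : (Fin K → ℕ) → M :=
  substDag D (fun ρ n => f (Fin.snoc ρ n))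

lemma SS_eq {K : ℕ} (D : M →ₗ[F] M) {f : (Fin (K+1) → ℕ) → M} (hf : FS f) :
    ∃ N, ∀ n, N ≤ n → SS D f = ∑ n ∈ Finset.range n, ((Yop D) ^ n) (slice F n f) := by
  obtain ⟨N, hN⟩ := hf
  refine ⟨N, fun n hn => ?_⟩
  unfold SS
  rw [substDag_eq D _ n]
  · rfl
  · intro ρ t ht
    exact hN _ ⟨Fin.last K, by simp; omega⟩

lemma SS_add {K : ℕ} (D : M →ₗ[F] M) {f g : (Fin (K+1) → ℕ) → M} (hf : FS f) (hg : FS g) :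
    SS D (f + g) = SS D f + SS D g := by
  obtain ⟨N, h⟩ := SS_eq D hf
  obtain ⟨N', h'⟩ := SS_eq D hg
  obtain ⟨N'', h''⟩ := SS_eq D (hf.add hg)
  rw [h (N + N' + N'') (by omega), h' (N + N' + N'') (by omega), h'' (N + N' + N'') (by omega)]
  simp only [map_add, Finset.sum_add_distrib]

lemma SS_smul {K : ℕ} (D : M →ₗ[F] M) {f : (Fin (K+1) → ℕ) → M} (hf : FS f) (r : F) :
    SS D (r • f) = r • SS D f := by
  obtain ⟨N, h⟩ := SS_eq D hf
  obtain ⟨N'', h''⟩ := SS_eq D (hf.smul r)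
  rw [h (N + N'') (by omega), h'' (N + N'') (by omega)]
  simp only [map_smul, Finset.smul_sum]

lemma SS_zero {K : ℕ} (D : M →ₗ[F] M) : SS D (0 : (Fin (K+1) → ℕ) → M) = 0 := by
  have := SS_smul D (FS.zero (K := K+1) (M := M)) (0 : F)
  simpa using this

lemma SS_neg {K : ℕ} (D : M →ₗ[F] M) {f : (Fin (K+1) → ℕ) → M} (hf : FS f) :
    SS D (-f) = - SS D f := by
  have := SS_smul D hf (-1 : F)
  simpa using this

lemma SS_sub {K : ℕ} (D : M →ₗ[F] M) {f g : (Fin (K+1) → ℕ) → M} (hf : FS f) (hg : FS g) :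
    SS D (f - g) = SS D f - SS D g := by
  rw [sub_eq_add_neg, SS_add D hf hg.neg, SS_neg D hg, sub_eq_add_neg]

lemma SS_sum {K : ℕ} (D : M →ₗ[F] M) {ι : Type*} (s : Finset ι) {f : ι → (Fin (K+1) → ℕ) → M}
    (hf : ∀ i ∈ s, FS (f i)) : SS D (∑ i ∈ s, f i) = ∑ i ∈ s, SS D (f i) := by
  classical
  induction s using Finset.induction_on with
  | empty => simp [SS_zero]
  | insert a s ha ih =>
    rw [Finset.sum_insert ha, Finset.sum_insert ha, SS_add D (hf a (by simp))
      (FS.sum _ fun i hi => hf i (by simp [hi])), ih fun i hi => hf i (by simp [hi])]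

lemma slice_Lam_cast {K : ℕ} (n : ℕ) (i : Fin K) (f : (Fin (K+1) → ℕ) → M) :
    slice F n (Lam F i.castSucc f) = Lam F i (slice F n f) := by
  funext ρ
  simp [slice_apply, Lam_apply]

lemma slice_Lam_last_succ {K : ℕ} (n : ℕ) (f : (Fin (K+1) → ℕ) → M) :
    slice F (n+1) (Lam F (Fin.last K) f) = slice F n f := by
  funext ρ
  simp [slice_apply, Lam_apply, Fin.update_snoc_last]

lemma slice_Lam_last_zero {K : ℕ} (f : (Fin (K+1) → ℕ) → M) :
    slice F 0 (Lam F (Fin.last K) f) = 0 := by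
  funext ρ
  simp [slice_apply, Lam_apply]

lemma slice_Dp {K : ℕ} (n : ℕ) (D : M →ₗ[F] M) (f : (Fin (K+1) → ℕ) → M) :
    slice F n (Dp D f) = Dp D (slice F n f) := rfl

lemma Lam_comm_Eop {K : ℕ} (D : M →ₗ[F] M) (i : Fin K) :
    Commute (Lam F i : Module.End F ((Fin K → ℕ) → M)) (Eop D) :=
  (Commute.sum_right _ _ _ fun j _ => Lam_comm i j).add_right (Dp_comm_Lam D i).symm

lemma Dp_comm_Eop {K : ℕ} (D : M →ₗ[F] M) :
    Commute (Dp D : Module.End F ((Fin K → ℕ) → M)) (Eop D) :=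
  (Commute.sum_right _ _ _ fun j _ => Dp_comm_Lam D j).add_right (Commute.refl _)

lemma Lam_comm_Yop_pow {K : ℕ} (D : M →ₗ[F] M) (i : Fin K) (n : ℕ) (f) :
    (Lam F i) (((Yop D : Module.End F ((Fin K → ℕ) → M)) ^ n) f) = (Yop D ^ n) (Lam F i f) :=
  LinearMap.congr_fun (((Commute.neg_right (Lam_comm_Eop (K := K) D i)).pow_right n).eq) f

lemma Dp_comm_Yop_pow {K : ℕ} (D : M →ₗ[F] M) (n : ℕ) (f) :
    (Dp D) (((Yop D : Module.End F ((Fin K → ℕ) → M)) ^ n) f) = (Yop D ^ n) (Dp D f) :=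
  LinearMap.congr_fun (((Commute.neg_right (Dp_comm_Eop (K := K) D)).pow_right n).eq) f

lemma SS_Lam_cast {K : ℕ} (D : M →ₗ[F] M) {f : (Fin (K+1) → ℕ) → M} (hf : FS f) (i : Fin K) :
    SS D (Lam F i.castSucc f) = Lam F i (SS D f) := by
  obtain ⟨N, h⟩ := SS_eq D hf
  obtain ⟨N'', h''⟩ := SS_eq D (hf.Lam (F := F) i.castSucc)
  rw [h (N + N'') (by omega), h'' (N + N'') (by omega), map_sum]
  simp only [slice_Lam_cast, Lam_comm_Yop_pow]

lemma SS_Dp {K : ℕ} (D : M →ₗ[F] M) {f : (Fin (K+1) → ℕ) → M} (hf : FS f) :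
    SS D (Dp D f) = Dp D (SS D f) := by
  obtain ⟨N, h⟩ := SS_eq D hf
  obtain ⟨N'', h''⟩ := SS_eq D (hf.Dp D)
  rw [h (N + N'') (by omega), h'' (N + N'') (by omega), map_sum]
  simp only [slice_Dp, Dp_comm_Yop_pow]

lemma SS_Lam_last {K : ℕ} (D : M →ₗ[F] M) {f : (Fin (K+1) → ℕ) → M} (hf : FS f) :
    SS D (Lam F (Fin.last K) f) = Yop D (SS D f) := by
  obtain ⟨N, h⟩ := SS_eq D hf
  obtain ⟨N'', h''⟩ := SS_eq D (hf.Lam (F := F) (Fin.last K))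
  rw [h (N + N'') (by omega), h'' (N + N'' + 1) (by omega), map_sum, Finset.sum_range_succ',
    slice_Lam_last_zero]
  simp only [slice_Lam_last_succ, map_zero, add_zero, pow_succ', Module.End.mul_apply]

lemma SS_Lam_cast_pow {K : ℕ} (D : M →ₗ[F] M) {f : (Fin (K+1) → ℕ) → M} (hf : FS f) (i : Fin K)
    (p : ℕ) : SS D ((Lam F i.castSucc ^ p) f) = (Lam F i ^ p) (SS D f) := by
  induction p with
  | zero => simp
  | succ n ih =>
    rw [pow_succ', pow_succ', Module.End.mul_apply, Module.End.mul_apply, SS_Lam_cast D _ i, ih]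
    exact hf.pow _ (fun f h => h.Lam _) n

lemma Eop_succ {K : ℕ} (D : M →ₗ[F] M) (f : (Fin (K+1) → ℕ) → M) :
    Eop D f = (∑ i : Fin K, Lam F i.castSucc f) + Lam F (Fin.last K) f + Dp D f := by
  rw [Eop, LinearMap.add_apply, LinearMap.sum_apply, Fin.sum_univ_castSucc]

lemma SS_Eop {K : ℕ} (D : M →ₗ[F] M) {f : (Fin (K+1) → ℕ) → M} (hf : FS f) :
    SS D (Eop D f) = 0 := by
  rw [Eop_succ, SS_add D ((FS.sum _ fun i _ => hf.Lam _).add (hf.Lam _)) (hf.Dp D),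
    SS_add D (FS.sum _ fun i _ => hf.Lam _) (hf.Lam _), SS_sum D _ (fun i _ => hf.Lam _),
    SS_Lam_last D hf, SS_Dp D hf]
  simp only [SS_Lam_cast D hf]
  rw [Yop, Eop, LinearMap.neg_apply, LinearMap.add_apply, LinearMap.sum_apply]
  abel

lemma slice_extL_zero {K : ℕ} (f : (Fin K → ℕ) → M) : slice F 0 (extL f) = f := by
  funext ρ; simp [slice_apply, extL_snoc]

lemma SS_of_slice {K : ℕ} (D : M →ₗ[F] M) {f : (Fin (K+1) → ℕ) → M} (hf : FS f)
    (h : ∀ n ρ, n ≠ 0 → f (Fin.snoc ρ n) = 0) : SS D f = slice F 0 f := by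
  obtain ⟨N, h1⟩ := SS_eq D hf
  rw [h1 (N + 1) (by omega), Finset.sum_range_succ', Finset.sum_eq_zero]
  · simp
  · intro n hn
    have : slice F (n+1) f = 0 := by
      funext ρ
      exact h _ _ (by omega)
    rw [this, map_zero]

lemma SS_extL {K : ℕ} (D : M →ₗ[F] M) {f : (Fin K → ℕ) → M} (hf : FS f) :
    SS D (extL f) = f := by
  rw [SS_of_slice D hf.extL, slice_extL_zero]
  intro n ρ hn
  simp [extL_snoc, hn]

lemma FS.SS {K : ℕ} {f : (Fin (K+1) → ℕ) → M} (hf : FS f) (D : M →ₗ[F] M) : FS (SS D f) := by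
  obtain ⟨N, h⟩ := SS_eq D hf
  rw [h N le_rfl]
  exact FS.sum _ fun n _ => (hf.slice n).pow _ (fun f h => h.Yop D) n

lemma Eop_eq_Lam_sub {K : ℕ} (D : M →ₗ[F] M) (f : (Fin (K+1) → ℕ) → M) (n : ℕ) :
    slice F n (Eop D f) = slice F n (Lam F (Fin.last K) f) - Yop D (slice F n f) := by
  rw [Eop_succ, map_add, map_add, map_sum, slice_Dp]
  simp only [slice_Lam_cast]
  rw [Yop, Eop, LinearMap.neg_apply, LinearMap.add_apply, LinearMap.sum_apply]
  abel

/-- division with remainder -/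
lemma exists_div {K : ℕ} (D : M →ₗ[F] M) {f : (Fin (K+1) → ℕ) → M} (hf : FS f) :
    ∃ h, FS h ∧ f = extL (SS D f) + Eop D h := by
  obtain ⟨N, hN⟩ := SS_eq D hf
  obtain ⟨N0, hN0⟩ := hf
  set P := max N N0 with hP
  have hz : ∀ n, P ≤ n → slice F n f = 0 := by
    intro n hn
    funext ρ
    exact hN0 _ ⟨Fin.last K, by simp; omega⟩
  let h : (Fin (K+1) → ℕ) → M := fun ν =>
    (∑ t ∈ Finset.range P, (Yop D ^ t) (slice F (ν (Fin.last K) + t + 1) f)) (Fin.init ν)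
  have hsl : ∀ n, slice F n h = ∑ t ∈ Finset.range P, (Yop D ^ t) (slice F (n + t + 1) f) := by
    intro n
    funext ρ
    simp [slice_apply, h]
  have hrec : ∀ n, slice F n h = slice F (n+1) f + Yop D (slice F (n+1) h) := by
    intro n
    rw [hsl, hsl, map_sum]
    have e1 : ∑ t ∈ Finset.range P, (Yop D ^ t) (slice F (n + t + 1) f)
      = ∑ t ∈ Finset.range (P+1), (Yop D ^ t) (slice F (n + t + 1) f) := by
      rw [Finset.sum_range_succ, hz _ (by omega : P ≤ n + P + 1), map_zero, add_zero]
    rw [e1, Finset.sum_range_succ', add_comm]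
    congr 1
    refine Finset.sum_congr rfl fun t _ => ?_
    rw [pow_succ', Module.End.mul_apply]
    congr 4
    omega
  have hzero : slice F 0 f + Yop D (slice F 0 h) = SS D f := by
    rw [hN (P+1) (by omega), hsl, map_sum, Finset.sum_range_succ', add_comm]
    congr 1
    refine Finset.sum_congr rfl fun t _ => ?_
    rw [pow_succ', Module.End.mul_apply]
    congr 4
    omega
  refine ⟨h, ?_, ?_⟩
  · have hfs : ∀ n, FS (slice F n h) := fun n => by
      rw [hsl]
      exact FS.sum _ fun t _ => (FS.slice ⟨N0, hN0⟩ _).pow _ (fun f h => h.Yop D) t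
    choose B hB using hfs
    refine ⟨P + ∑ n ∈ Finset.range P, B n, fun ν ⟨i, hi⟩ => ?_⟩
    have hν : h ν = slice F (ν (Fin.last K)) h (Fin.init ν) := by
      rw [slice_apply, Fin.snoc_init_self]
    rw [hν]
    by_cases hl : P ≤ ν (Fin.last K)
    · rw [hsl, Finset.sum_eq_zero]
      · rfl
      · intro t _
        rw [hz _ (by omega), map_zero]
    · apply hB
      induction i using Fin.lastCases with
      | last => omega
      | cast i =>
        refine ⟨i, ?_⟩
        have := Finset.single_le_sum (f := B) (fun n _ => Nat.zero_le _)
          (Finset.mem_range.2 (not_le.1 hl))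
        simp only [Fin.init]
        omega
  · funext ν
    obtain ⟨ρ, n, rfl⟩ : ∃ ρ n, ν = (Fin.snoc ρ n : Fin (K+1) → ℕ) :=
      ⟨Fin.init ν, ν (Fin.last K), by rw [Fin.snoc_init_self]⟩
    have := congr_fun (Eop_eq_Lam_sub D h n) ρ
    rw [slice_apply] at this
    rw [Pi.add_apply, this, extL_snoc]
    cases n with
    | zero =>
      rw [slice_Lam_last_zero, ← hzero]
      simp [slice_apply]
    | succ n =>
      rw [slice_Lam_last_succ, hrec]
      simp [slice_apply]

lemma Eop_inj {K : ℕ} (D : M →ₗ[F] M) {f : (Fin (K+1) → ℕ) → M} (hf : FS f)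
    (h : Eop D f = 0) : f = 0 := by
  obtain ⟨N, hN⟩ := hf
  have hrec : ∀ n, slice F n f = Yop D (slice F (n+1) f) := by
    intro n
    have := Eop_eq_Lam_sub D f (n+1)
    rw [h, map_zero, slice_Lam_last_succ] at this
    exact (sub_eq_zero.1 this.symm)
  have hz : ∀ t n, N ≤ n + t → slice F n f = 0 := by
    intro t
    induction t with
    | zero =>
      intro n hn
      funext ρ
      exact hN _ ⟨Fin.last K, by simpa using hn⟩
    | succ t ih =>
      intro n hn
      rw [hrec, ih (n+1) (by omega), map_zero]
  funext ν
  have := congr_fun (hz N (ν (Fin.last K)) (by omega)) (Fin.init ν)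
  rw [slice_apply, Fin.snoc_init_self] at this
  exact this

/-- The main reduction principle. -/
lemma SS_reduce {K K' : ℕ} (D : M →ₗ[F] M)
    (Φ : ((Fin (K+1) → ℕ) → M) → ((Fin (K'+1) → ℕ) → M))
    (hadd : ∀ f g, FS f → FS g → Φ (f + g) = Φ f + Φ g)
    (hFS : ∀ f, FS f → FS (Φ f))
    (hE : ∀ f, FS f → Φ (Eop D f) = Eop D (Φ f))
    {f : (Fin (K+1) → ℕ) → M} (hf : FS f) :
    SS D (Φ f) = SS D (Φ (extL (SS D f))) := by
  obtain ⟨h, hh, e⟩ := exists_div D hf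
  conv_lhs => rw [e]
  rw [hadd _ _ (hf.SS D).extL (hh.Eop D), SS_add D (hFS _ (hf.SS D).extL) (hFS _ (hh.Eop D)),
    hE _ hh, SS_Eop D (hFS _ hh), add_zero]

end Ops2
end LCC

namespace LCC
section Ops3
variable {F : Type*} [Field F] {A M : Type*} [AddCommGroup A] [Module F A]
  [AddCommGroup M] [Module F M] {L : LCA F A}

lemma succAbove_val_eq {k : ℕ} (i : Fin (k+1)) (r : Fin k) :
    (i.succAbove r).1 = skip1 i.1 r.1 := by
  unfold skip1 Fin.succAbove
  simp only [Fin.lt_def, Fin.val_castSucc]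
  split <;> simp

lemma rm1_eq {α : Type*} {k : ℕ} (i : Fin (k+1)) (a : Fin (k+1) → α) :
    rm1 i.1 a = fun r => a (i.succAbove r) := by
  funext r
  unfold rm1
  congr 1
  apply Fin.ext
  rw [succAbove_val_eq]

lemma exists_rm2 {k : ℕ} (i j : Fin (k+2)) (hij : i < j) :
    ∃ i' : Fin (k+1), j.succAbove i' = i ∧
      ∀ {α : Type*} (a : Fin (k+2) → α), rm2 i.1 j.1 a = fun r => a (j.succAbove (i'.succAbove r)) := by
  have hi : i.1 < j.1 := hij
  have hj := j.2
  refine ⟨⟨i.1, by omega⟩, ?_, ?_⟩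
  · apply Fin.ext
    rw [succAbove_val_eq]
    simp [skip1, hi]
  · intro α a
    funext r
    unfold rm2
    congr 1
    apply Fin.ext
    rw [succAbove_val_eq, succAbove_val_eq]
    simp only [skip1, skip2]
    split_ifs <;> omega

lemma rm2_ne {k : ℕ} (i j : Fin (k+2)) (hij : i < j) {α : Type*} (a : Fin (k+2) → α) (x : α) :
    rm2 i.1 j.1 (Function.update a i x) = rm2 i.1 j.1 a := by
  obtain ⟨i', h1, h2⟩ := exists_rm2 i j hij
  rw [h2, h2]
  funext r
  rw [Function.update_of_ne]
  rw [← h1]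
  intro h
  exact Fin.succAbove_ne _ _ (Fin.succAbove_right_injective h)

/-- the operator `f ↦ b_{λ_i} f` -/
def TT (R : LCAMod F L M) {K : ℕ} (i : Fin (K+1)) (b : A) :
    ((Fin K → ℕ) → M) →ₗ[F] ((Fin (K+1) → ℕ) → M) where
  toFun f := fun ν => R.act b (f (fun r => ν (i.succAbove r))) (ν i)
  map_add' f g := by funext ν; simp
  map_smul' r f := by funext ν; simp

lemma TT_apply (R : LCAMod F L M) {K : ℕ} (i : Fin (K+1)) (b : A) (f : (Fin K → ℕ) → M) (ν) :
    TT R i b f ν = R.act b (f (fun r => ν (i.succAbove r))) (ν i) := rfl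

lemma FS.TT {K : ℕ} {f : (Fin K → ℕ) → M} (hf : FS f) (R : LCAMod F L M) (i : Fin (K+1)) (b : A) :
    FS (TT R i b f) := by
  have hfin := (FS_iff f).1 hf
  obtain ⟨N, hN⟩ := hf
  have : ∀ μ, ∃ B, ∀ n, B ≤ n → R.act b (f μ) n = 0 := by
    intro μ
    refine ⟨(R.act_fin b (f μ)).toFinset.sup id + 1, fun n hn => ?_⟩
    by_contra hc
    have h1 : n ∈ (R.act_fin b (f μ)).toFinset := by simpa using hc
    have h2 := Finset.le_sup (f := id) h1
    simp only [id] at h2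
    omega
  choose B hB using this
  refine ⟨N + ∑ μ ∈ hfin.toFinset, B μ, fun ν ⟨r, hr⟩ => ?_⟩
  rw [TT_apply]
  by_cases hz : f (fun r => ν (i.succAbove r)) = 0
  · rw [hz, map_zero]; rfl
  · rcases Fin.eq_self_or_eq_succAbove i r with h | ⟨r', h⟩
    · subst h
      apply hB
      have := Finset.single_le_sum (f := B) (fun n _ => Nat.zero_le _)
          (show (fun r' => ν (r.succAbove r')) ∈ hfin.toFinset by simpa using hz)
      omega
    · exfalso
      apply hz
      apply hN
      refine ⟨r', ?_⟩
      rw [← h]; omega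

lemma TT_Eop (R : LCAMod F L M) {K : ℕ} (i : Fin (K+1)) (b : A) (f : (Fin K → ℕ) → M) :
    TT R i b (Eop R.D f) = Eop R.D (TT R i b f) := by
  funext ν
  rw [TT_apply, Eop_apply, Eop_apply, Fin.sum_univ_succAbove _ i]
  simp only [map_add, map_sum, Pi.add_apply, Finset.sum_apply]
  rw [R.sesq_right, TT_apply, Lam_apply, TT_apply]
  have h1 : ∀ r : Fin K, Lam F (i.succAbove r) (TT R i b f) ν
      = R.act b (Lam F r f (fun r => ν (i.succAbove r))) (ν i) := by
    intro r
    rw [Lam_apply, Lam_apply]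
    split
    · simp
    · rw [TT_apply, Function.update_of_ne (Fin.succAbove_ne i r).symm]
      refine congrArg (fun x => R.act b (f x) (ν i)) ?_
      funext r'
      by_cases h : r' = r
      · subst h; simp
      · rw [Function.update_of_ne h, Function.update_of_ne]
        exact fun h' => h (Fin.succAbove_right_injective h')
  simp only [h1]
  have h2 : (fun r => Function.update ν i (ν i - 1) (i.succAbove r)) = fun r => ν (i.succAbove r) := by
    funext r
    rw [Function.update_of_ne (Fin.succAbove_ne i r)]
  rw [h2, Function.update_self]
  abel

/-- the operator `f ↦ f_{…, λ_i + λ_j}` -/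
def QQ (F : Type*) [Field F] {M : Type*} [AddCommGroup M] [Module F M] {K : ℕ} (i j : Fin (K+2)) :
    ((Fin (K+1) → ℕ) → M) →ₗ[F] ((Fin (K+2) → ℕ) → M) where
  toFun f := fun ν => ((ν i + ν j).choose (ν i) : F) • f (Fin.snoc (rm2 i.1 j.1 ν) (ν i + ν j))
  map_add' f g := by funext ν; simp
  map_smul' r f := by funext ν; simp only [Pi.smul_apply, RingHom.id_apply]; rw [smul_comm]

lemma QQ_apply {K : ℕ} (i j : Fin (K+2)) (f : (Fin (K+1) → ℕ) → M) (ν) :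
    QQ F i j f ν = ((ν i + ν j).choose (ν i) : F) • f (Fin.snoc (rm2 i.1 j.1 ν) (ν i + ν j)) := rfl

lemma FS.QQ {K : ℕ} {f : (Fin (K+1) → ℕ) → M} (hf : FS f) (i j : Fin (K+2)) (hij : i < j) :
    FS (QQ F i j f) := by
  obtain ⟨i', h1, h2⟩ := exists_rm2 i j hij
  obtain ⟨N, hN⟩ := hf
  refine ⟨N, fun ν ⟨r, hr⟩ => ?_⟩
  rw [QQ_apply, hN, smul_zero]
  rcases Fin.eq_self_or_eq_succAbove j r with h | ⟨r', h⟩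
  · subst h
    exact ⟨Fin.last _, by simp; omega⟩
  · rcases Fin.eq_self_or_eq_succAbove i' r' with h' | ⟨r'', h'⟩
    · subst h'
      rw [h1] at h
      subst h
      exact ⟨Fin.last _, by simp; omega⟩
    · refine ⟨r''.castSucc, ?_⟩
      rw [Fin.snoc_castSucc, h2]
      simp only
      rw [← h', ← h]
      exact hr

lemma QQ_Eop (D : M →ₗ[F] M) {K : ℕ} (i j : Fin (K+2)) (hij : i < j) (f : (Fin (K+1) → ℕ) → M) :
    QQ F i j (Eop D f) = Eop D (QQ F i j f) := by
  obtain ⟨i', h1, h2⟩ := exists_rm2 i j hij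
  have hne : i ≠ j := hij.ne
  funext ν
  rw [QQ_apply, Eop_apply, Eop_apply, Fin.sum_univ_succAbove _ j,
    Fin.sum_univ_succAbove (fun i_1 => Lam F (j.succAbove i_1) (QQ F i j f) ν) i',
    Fin.sum_univ_castSucc, h1]
  have e1 : ∀ r : Fin K, Lam F (j.succAbove (i'.succAbove r)) (QQ F i j f) ν
     = ((ν i + ν j).choose (ν i) : F) • Lam F r.castSucc f (Fin.snoc (rm2 i.1 j.1 ν) (ν i + ν j)) := by
    intro r
    have n1 : i ≠ j.succAbove (i'.succAbove r) := by
      rw [← h1]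
      intro h
      exact Fin.succAbove_ne _ _ (Fin.succAbove_right_injective h).symm
    have n2 : j ≠ j.succAbove (i'.succAbove r) := (Fin.succAbove_ne _ _).symm
    rw [Lam_apply, Lam_apply, Fin.snoc_castSucc, h2]
    split
    · simp
    · rw [QQ_apply, Function.update_of_ne n1, Function.update_of_ne n2, ← Fin.snoc_update, h2]
      congr 3
      funext r'
      by_cases h : r' = r
      · subst h; simp
      · rw [Function.update_of_ne h, Function.update_of_ne]
        exact fun h' => h (Fin.succAbove_right_injective (Fin.succAbove_right_injective h'))
  simp only [e1]
  have e2 : ((ν i + ν j).choose (ν i) : F) • Lam F (Fin.last K) f (Fin.snoc (rm2 i.1 j.1 ν) (ν i + ν j))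
     = Lam F j (QQ F i j f) ν + Lam F i (QQ F i j f) ν := by
    have u1 : ∀ x, rm2 i.1 j.1 (Function.update ν j x) = rm2 i.1 j.1 ν := by
      intro x
      rw [h2, h2]
      funext r
      rw [Function.update_of_ne (Fin.succAbove_ne _ _)]
    rw [Lam_apply, Lam_apply, Lam_apply, QQ_apply, QQ_apply, u1, rm2_ne i j hij, Fin.snoc_last]
    simp only [Function.update_self, Function.update_of_ne hne, Function.update_of_ne hne.symm,
      Fin.update_snoc_last]
    rcases hi : ν i with _ | x <;> rcases hj : ν j with _ | y
    · simp
    · simp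
    · simp
    · have c1 : x + 1 + (y + 1) - 1 = x + y + 1 := by omega
      have c2 : x + 1 + (y + 1 - 1) = x + y + 1 := by omega
      have c3 : x + 1 - 1 + (y + 1) = x + y + 1 := by omega
      have c4 : x + 1 + (y + 1) = x + y + 1 + 1 := by omega
      rw [c1, c2, c3, c4, if_neg (by omega), if_neg (by omega), if_neg (by omega), ← add_smul]
      congr 1
      rw [Nat.choose_succ_succ]
      push_cast
      simp
      ring
  rw [smul_add, smul_add, e2, Finset.smul_sum, QQ_apply, map_smul]
  abel

lemma SS_TT_reduce (R : LCAMod F L M) {K : ℕ} (i : Fin (K+2)) (b : A) {f : (Fin (K+1) → ℕ) → M}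
    (hf : FS f) : SS R.D (TT R i b f) = SS R.D (TT R i b (extL (SS R.D f))) :=
  SS_reduce R.D (TT R i b) (fun f g _ _ => map_add _ _ _) (fun f h => h.TT R i b)
    (fun f _ => TT_Eop R i b f) hf

lemma SS_QQ_reduce (D : M →ₗ[F] M) {K : ℕ} (i j : Fin (K+2)) (hij : i < j) {f : (Fin (K+1) → ℕ) → M}
    (hf : FS f) : SS D (QQ F i j f) = SS D (QQ F i j (extL (SS D f))) :=
  SS_reduce D (QQ F i j) (fun f g _ _ => map_add _ _ _) (fun f h => h.QQ i j hij)
    (fun f _ => QQ_Eop D i j hij f) hf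

lemma snoc_castSucc_succAbove {α : Type*} {K : ℕ} (ρ : Fin (K+1) → α) (n : α) (i : Fin (K+1)) :
    (fun r => (Fin.snoc ρ n : Fin (K+2) → α) (i.castSucc.succAbove r))
      = (Fin.snoc (fun r => ρ (i.succAbove r)) n : Fin (K+1) → α) := by
  funext r
  induction r using Fin.lastCases with
  | last =>
    have : i.castSucc.succAbove (Fin.last K) = Fin.last (K+1) := by
      apply Fin.ext
      rw [succAbove_val_eq]
      have := i.2
      simp only [skip1, Fin.val_castSucc, Fin.val_last]
      split <;> omega
    rw [this, Fin.snoc_last, Fin.snoc_last]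
  | cast r =>
    rw [Fin.castSucc_succAbove_castSucc, Fin.snoc_castSucc, Fin.snoc_castSucc]

lemma SS_TT_cast (R : LCAMod F L M) {K : ℕ} (i : Fin (K+1)) (b : A) {f : (Fin (K+1) → ℕ) → M}
    (hf : FS f) : SS R.D (TT R i.castSucc b f) = TT R i b (SS R.D f) := by
  rw [SS_TT_reduce R _ b hf, SS_of_slice R.D ((hf.SS R.D).extL.TT R _ b)]
  · funext ρ
    rw [slice_apply, TT_apply, snoc_castSucc_succAbove, extL_snoc, if_pos rfl, Fin.snoc_castSucc]
    rfl
  · intro n ρ hn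
    rw [TT_apply, snoc_castSucc_succAbove, extL_snoc, if_neg hn, map_zero]
    rfl

end Ops3
end LCC

namespace LCC
section Ops4
variable {F : Type*} [Field F] {A M : Type*} [AddCommGroup A] [Module F A]
  [AddCommGroup M] [Module F M] {L : LCA F A}

lemma sum_range_trunc (n P : ℕ) (h : ℕ → M) (hP : ∀ p, P ≤ p → h p = 0) :
    ∑ p ∈ Finset.range (n+1), h p = ∑ p ∈ Finset.range P, if p ≤ n then h p else 0 := by
  rw [← Finset.sum_filter]
  have h1 : ∑ p ∈ Finset.range (n+1), h p = ∑ p ∈ (Finset.range (n+1)).filter (· < P), h p := by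
    rw [Finset.sum_filter_of_ne]
    intro p _ hp
    by_contra hc
    exact hp (hP p (by omega))
  rw [h1]
  refine Finset.sum_congr ?_ fun _ _ => rfl
  ext p
  simp
  omega

lemma br_bound (L : LCA F A) (a b : A) : ∃ P, ∀ p, P ≤ p → L.br a b p = 0 := by
  refine ⟨(L.br_fin a b).toFinset.sup id + 1, fun n hn => ?_⟩
  by_contra hc
  have h1 : n ∈ (L.br_fin a b).toFinset := by simpa using hc
  have h2 := Finset.le_sup (f := id) h1
  simp only [id] at h2
  omega

lemma act_bound (R : LCAMod F L M) (a : A) (m : M) : ∃ P, ∀ p, P ≤ p → R.act a m p = 0 := by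
  refine ⟨(R.act_fin a m).toFinset.sup id + 1, fun n hn => ?_⟩
  by_contra hc
  have h1 : n ∈ (R.act_fin a m).toFinset := by simpa using hc
  have h2 := Finset.le_sup (f := id) h1
  simp only [id] at h2
  omega

/-- degree bound of the bracket -/
noncomputable def PB (L : LCA F A) (a b : A) : ℕ := (br_bound L a b).choose

lemma PB_spec (L : LCA F A) (a b : A) (p : ℕ) (h : PB L a b ≤ p) : L.br a b p = 0 :=
  (br_bound L a b).choose_spec p h

/-- pair term -/
noncomputable def pairT (L : LCA F A) {k : ℕ} (γ : (Fin (k+1) → A) → (Fin (k+1) → ℕ) → M)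
    (a : Fin (k+2) → A) (i j : Fin (k+2)) : (Fin (k+2) → ℕ) → M :=
  ∑ p ∈ Finset.range (PB L (a i) (a j)),
    ((Lam F i) ^ p) (QQ F i j (γ (Fin.snoc (rm2 i.1 j.1 a) (L.br (a i) (a j) p))))

lemma pairT_apply (L : LCA F A) {k : ℕ} (γ : (Fin (k+1) → A) → (Fin (k+1) → ℕ) → M)
    (hz : ∀ x, γ (Fin.snoc x 0) = 0)
    (a : Fin (k+2) → A) (i j : Fin (k+2)) (hij : i < j) (ν) :
    pairT L γ a i j ν = ∑ p ∈ Finset.range (ν i + 1),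
            ((((ν i - p) + ν j).choose (ν i - p) : F)) •
              γ (Fin.snoc (rm2 i.1 j.1 a) (L.br (a i) (a j) p))
                (Fin.snoc (rm2 i.1 j.1 ν) ((ν i - p) + ν j)) := by
  rw [sum_range_trunc _ (PB L (a i) (a j))]
  · rw [pairT, Finset.sum_apply]
    refine Finset.sum_congr rfl fun p _ => ?_
    rw [Lam_pow_apply]
    split
    · rw [QQ_apply, rm2_ne i j hij, Function.update_self, Function.update_of_ne hij.ne.symm]
    · rfl
  · intro p hp
    rw [PB_spec L _ _ _ hp, hz, Pi.zero_apply, smul_zero]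

lemma deltaRaw_eq (R : LCAMod F L M) {k : ℕ} (γ : (Fin (k+1) → A) → (Fin (k+1) → ℕ) → M)
    (hz : ∀ x, γ (Fin.snoc x 0) = 0) (a : Fin (k+2) → A) :
    deltaRaw L R γ a = (∑ i : Fin (k+2), ((-1 : F)^i.1) • TT R i (a i) (γ (rm1 i.1 a)))
      + ∑ i : Fin (k+2), ∑ j : Fin (k+2), if i < j then ((-1 : F)^(k + i.1 + j.1)) • pairT L γ a i j
        else 0 := by
  funext ν
  unfold deltaRaw
  rw [Pi.add_apply, Finset.sum_apply, Finset.sum_apply]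
  congr 1
  · refine Finset.sum_congr rfl fun i _ => ?_
    rw [Pi.smul_apply, TT_apply, rm1_eq i ν]
  · unfold deltaPair
    refine Finset.sum_congr rfl fun i _ => ?_
    rw [Finset.sum_apply]
    refine Finset.sum_congr rfl fun j _ => ?_
    split
    · rename_i h
      rw [Pi.smul_apply, pairT_apply L γ hz a i j h]
    · rfl

lemma FS.pairT {k : ℕ} {γ : (Fin (k+1) → A) → (Fin (k+1) → ℕ) → M} (hγ : ∀ a, FS (γ a))
    (L : LCA F A) (a : Fin (k+2) → A) (i j : Fin (k+2)) (hij : i < j) : FS (pairT L γ a i j) :=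
  FS.sum _ fun p _ => ((hγ _).QQ i j hij).pow _ (fun f h => h.Lam _) p

lemma FS_deltaRaw (R : LCAMod F L M) {k : ℕ} (γ : (Fin (k+1) → A) → (Fin (k+1) → ℕ) → M)
    (hz : ∀ x, γ (Fin.snoc x 0) = 0) (hγ : ∀ a, FS (γ a)) (a : Fin (k+2) → A) :
    FS (deltaRaw L R γ a) := by
  rw [deltaRaw_eq R γ hz]
  refine (FS.sum _ fun i _ => ((hγ _).TT R i _).smul _).add (FS.sum _ fun i _ => FS.sum _ fun j _ => ?_)
  split
  · rename_i h
    exact (FS.pairT hγ L a i j h).smul _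
  · exact FS.zero

lemma rm1_init {α : Type*} {k : ℕ} (i : Fin (k+1)) (a : Fin (k+2) → α) :
    rm2 i.castSucc.1 (Fin.last (k+1)).1 a = rm1 i.1 (Fin.init a) := by
  funext r
  unfold rm2 rm1 Fin.init
  congr 1
  apply Fin.ext
  have := r.2
  have := i.2
  simp only [skip1, skip2, Fin.val_castSucc, Fin.val_last]
  split_ifs <;> omega

lemma rm2_init {α : Type*} {k : ℕ} (i j : Fin (k+2)) (hij : i < j) (a : Fin (k+3) → α) :
    rm2 i.1 j.1 a = (Fin.snoc (rm2 i.1 j.1 (Fin.init a)) (a (Fin.last (k+2))) : Fin (k+1) → α) := by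
  have h : i.1 < j.1 := hij
  have := j.2
  funext r
  induction r using Fin.lastCases with
  | last =>
    rw [Fin.snoc_last]
    unfold rm2
    congr 1
    apply Fin.ext
    simp only [skip2, Fin.val_last]
    split_ifs <;> omega
  | cast r =>
    rw [Fin.snoc_castSucc]
    rfl

lemma SS_QQ_last (D : M →ₗ[F] M) {K : ℕ} (i : Fin (K+1)) {f : (Fin (K+1) → ℕ) → M} (hf : FS f)
    (ν : Fin (K+1) → ℕ) :
    SS D (QQ F i.castSucc (Fin.last (K+1)) f) ν
      = if ν i = 0 then SS D f (rm1 i.1 ν) else 0 := by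
  have hlt : i.castSucc < Fin.last (K+1) := Fin.castSucc_lt_last i
  have key : ∀ (ρ : Fin (K+1) → ℕ) n, QQ F i.castSucc (Fin.last (K+1)) (extL (SS D f)) (Fin.snoc ρ n)
     = if ρ i + n = 0 then SS D f (rm1 i.1 ρ) else 0 := by
    intro ρ n
    rw [QQ_apply, rm1_init, extL_snoc, Fin.snoc_castSucc, Fin.snoc_last, Fin.init_snoc]
    split
    · rename_i h
      have : ρ i = 0 := by omega
      have : n = 0 := by omega
      simp [*]
    · simp
  rw [SS_QQ_reduce D _ _ hlt hf, SS_of_slice D ((hf.SS D).extL.QQ _ _ hlt)]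
  · rw [slice_apply, key, add_zero]
  · intro n ρ hn
    rw [key, if_neg (by omega)]

lemma SS_pairT_last (R : LCAMod F L M) {k : ℕ} (γ : (Fin (k+1) → A) → (Fin (k+1) → ℕ) → M)
    (hz : ∀ x, γ (Fin.snoc x 0) = 0) (hγ : ∀ a, FS (γ a)) (a : Fin (k+2) → A) (i : Fin (k+1)) (ν) :
    SS R.D (pairT L γ a i.castSucc (Fin.last (k+1))) ν
     = psiRaw R γ (Fin.snoc (rm1 i.1 (Fin.init a)) (L.br (a i.castSucc) (a (Fin.last (k+1))) (ν i)))
          (rm1 i.1 ν) := by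
  have hlt : i.castSucc < Fin.last (k+1) := Fin.castSucc_lt_last i
  have hfs : ∀ p, FS (QQ F i.castSucc (Fin.last (k+1))
      (γ (Fin.snoc (rm2 i.castSucc.1 (Fin.last (k+1)).1 a) (L.br (a i.castSucc) (a (Fin.last (k+1))) p)))) :=
    fun p => (hγ _).QQ _ _ hlt
  rw [pairT, SS_sum R.D _ (fun p _ => (hfs p).pow _ (fun f h => h.Lam _) p), Finset.sum_apply]
  have e : ∀ p ∈ Finset.range (PB L (a i.castSucc) (a (Fin.last (k+1)))),
      SS R.D (((Lam F i.castSucc) ^ p) (QQ F i.castSucc (Fin.last (k+1)) 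
        (γ (Fin.snoc (rm2 i.castSucc.1 (Fin.last (k+1)).1 a) (L.br (a i.castSucc) (a (Fin.last (k+1))) p))))) ν
      = if p = ν i then psiRaw R γ (Fin.snoc (rm1 i.1 (Fin.init a)) (L.br (a i.castSucc) (a (Fin.last (k+1))) (ν i)))
          (rm1 i.1 ν) else 0 := by
    intro p _
    rw [SS_Lam_cast_pow R.D (hfs p), Lam_pow_apply]
    by_cases hp : p = ν i
    · subst hp
      rw [if_pos le_rfl, if_pos rfl, SS_QQ_last R.D i (hγ _), Function.update_self, if_pos (by omega),
        rm1_init]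
      have : rm1 i.1 (Function.update ν i (ν i - ν i)) = rm1 i.1 ν := by
        rw [rm1_eq, rm1_eq]
        funext r
        rw [Function.update_of_ne (Fin.succAbove_ne i r)]
      rw [this]
      rfl
    · rw [if_neg hp]
      split
      · rw [SS_QQ_last R.D i (hγ _), Function.update_self, if_neg (by omega)]
      · rfl
  rw [Finset.sum_congr rfl e, Finset.sum_ite_eq']
  split
  · rfl
  · rename_i h
    rw [PB_spec L _ _ (ν i) (by simpa using h)]
    unfold psiRaw
    rw [hz]
    change _ = SS R.D 0 _
    rw [SS_zero]
    rfl

lemma SS_pairT_cast (R : LCAMod F L M) {s : ℕ} (γ : (Fin (s+2) → A) → (Fin (s+2) → ℕ) → M)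
    (hz : ∀ x, γ (Fin.snoc x 0) = 0) (hγ : ∀ a, FS (γ a)) (a : Fin (s+3) → A) (i j : Fin (s+2))
    (hij : i < j) (ν) :
    SS R.D (pairT L γ a i.castSucc j.castSucc) ν
     = ∑ p ∈ Finset.range (ν i + 1),
            substDag R.D
              (fun ρ n =>
                if ρ i = 0 ∧ ρ j = 0 then
                  psiRaw R γ (Fin.snoc (Fin.snoc (rm2 i.1 j.1 (Fin.init a)) (a (Fin.last (s+2))))
                      (L.br (a i.castSucc) (a j.castSucc) p))
                    (Fin.snoc (rm2 i.1 j.1 ρ) n)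
                else 0)
              (Function.update ν i (ν i - p)) := by
  have hlt : i.castSucc < j.castSucc := by simpa using hij
  have hfs : ∀ p, FS (QQ F i.castSucc j.castSucc
      (γ (Fin.snoc (rm2 i.castSucc.1 j.castSucc.1 a) (L.br (a i.castSucc) (a j.castSucc) p)))) :=
    fun p => (hγ _).QQ _ _ hlt
  have e : ∀ p, SS R.D (QQ F i.castSucc j.castSucc
      (γ (Fin.snoc (rm2 i.castSucc.1 j.castSucc.1 a) (L.br (a i.castSucc) (a j.castSucc) p))))
      = substDag R.D
              (fun ρ n =>
                if ρ i = 0 ∧ ρ j = 0 then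
                  psiRaw R γ (Fin.snoc (Fin.snoc (rm2 i.1 j.1 (Fin.init a)) (a (Fin.last (s+2))))
                      (L.br (a i.castSucc) (a j.castSucc) p))
                    (Fin.snoc (rm2 i.1 j.1 ρ) n)
                else 0) := by
    intro p
    rw [SS_QQ_reduce R.D _ _ hlt (hγ _)]
    unfold SS
    congr 1
    funext ρ n
    rw [QQ_apply, extL_snoc, Fin.snoc_castSucc, Fin.snoc_castSucc, Fin.val_castSucc, Fin.val_castSucc,
      rm2_init i j hij a, rm2_init i j hij (Fin.snoc ρ n : Fin (s+3) → ℕ), Fin.init_snoc, Fin.snoc_last]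
    by_cases h : ρ i = 0 ∧ ρ j = 0
    · rw [if_pos h, h.1, h.2]
      simp
      rfl
    · rw [if_neg h, if_neg (by omega), smul_zero]
  rw [pairT, SS_sum R.D _ (fun p _ => (hfs p).pow _ (fun f h => h.Lam _) p), Finset.sum_apply,
    sum_range_trunc _ (PB L (a i.castSucc) (a j.castSucc))]
  · refine Finset.sum_congr rfl fun p _ => ?_
    rw [SS_Lam_cast_pow R.D (hfs p), Lam_pow_apply, e]
  · intro p hp
    rw [← e, PB_spec L _ _ _ hp, hz, map_zero, SS_zero]
    rfl

theorem psi_delta (R : LCAMod F L M) {k : ℕ} (γ : (Fin (k+1) → A) → (Fin (k+1) → ℕ) → M)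
    (hz : ∀ x, γ (Fin.snoc x 0) = 0) (hγ : ∀ a, FS (γ a)) :
    psiRaw R (deltaRaw L R γ) = dRaw L R (psiRaw R γ) := by
  funext a ν
  change SS R.D (deltaRaw L R γ a) ν = _
  have fp : ∀ i j, FS (if i < j then ((-1 : F)^(k + i.1 + j.1)) • pairT L γ a i j
        else 0) := by
    intro i j
    split
    · rename_i h
      exact (FS.pairT hγ L a i j h).smul _
    · exact FS.zero
  rw [deltaRaw_eq R γ hz, SS_add R.D (FS.sum _ fun i _ => ((hγ _).TT R i _).smul _)
    (FS.sum _ fun i _ => FS.sum _ fun j _ => fp i j),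
    SS_sum R.D _ (fun i _ => ((hγ _).TT R i _).smul _),
    SS_sum R.D _ (fun i _ => FS.sum _ fun j _ => fp i j)]
  have e1 : ∀ i, SS R.D (∑ j : Fin (k+2), if i < j then ((-1 : F)^(k + i.1 + j.1)) • pairT L γ a i j
        else 0) = ∑ j : Fin (k+2), if i < j then ((-1 : F)^(k + i.1 + j.1)) • SS R.D (pairT L γ a i j)
        else 0 := by
    intro i
    rw [SS_sum R.D _ (fun j _ => fp i j)]
    refine Finset.sum_congr rfl fun j _ => ?_
    split
    · rename_i h
      rw [SS_smul R.D (FS.pairT hγ L a i j h)]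
    · rw [SS_zero]
  simp only [e1]
  rw [Fin.sum_univ_castSucc, Fin.sum_univ_castSucc (f := fun i => ∑ j : Fin (k+2), if i < j then
    ((-1 : F)^(k + i.1 + j.1)) • SS R.D (pairT L γ a i j) else 0)]
  have e2 : (∑ j : Fin (k+2), if Fin.last (k+1) < j then
    ((-1 : F)^(k + (Fin.last (k+1)).1 + j.1)) • SS R.D (pairT L γ a (Fin.last (k+1)) j) else 0) = 0 := by
    refine Finset.sum_eq_zero fun j _ => ?_
    rw [if_neg (not_lt.2 (Fin.le_last j))]
  rw [e2, add_zero]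
  simp only [Fin.sum_univ_castSucc (n := k+1) (M := (Fin (k+1) → ℕ) → M), Finset.sum_add_distrib,
    Fin.castSucc_lt_last, if_true, Fin.castSucc_lt_castSucc_iff]
  unfold dRaw
  have t1 : (∑ i : Fin (k+1), SS R.D (((-1 : F) ^ i.castSucc.1) • TT R i.castSucc (a i.castSucc)
      (γ (rm1 i.castSucc.1 a)))) ν = ∑ i : Fin (k+1), ((-1 : F)^i.1) •
        R.act (a i.castSucc) (psiRaw R γ (rm1 i.1 a) (rm1 i.1 ν)) (ν i) := by
    rw [Finset.sum_apply]
    refine Finset.sum_congr rfl fun i _ => ?_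
    rw [SS_smul R.D ((hγ _).TT R _ _), SS_TT_cast R i _ (hγ _), Pi.smul_apply, TT_apply, rm1_eq i ν]
    rfl
  have t3 : SS R.D (((-1 : F) ^ (Fin.last (k+1)).1) • TT R (Fin.last (k+1)) (a (Fin.last (k+1)))
      (γ (rm1 (Fin.last (k+1)).1 a))) = ((-1 : F)^(k+1)) • substDag R.D
        (fun ρ n =>
          if ρ (Fin.last k) = 0 then
            R.act (a (Fin.last (k+1))) (psiRaw R γ (Fin.init a) (Fin.init ρ)) n
          else 0) := by
    rw [SS_smul R.D ((hγ _).TT R _ _), SS_TT_reduce R _ _ (hγ _)]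
    congr 1
    unfold SS
    congr 1
    funext ρ n
    rw [TT_apply, Fin.snoc_last]
    have h1 : (fun r => (Fin.snoc ρ n : Fin (k+2) → ℕ) ((Fin.last (k+1)).succAbove r)) = ρ := by
      funext r
      rw [Fin.succAbove_last, Fin.snoc_castSucc]
    have h2 : rm1 (Fin.last (k+1)).1 a = Fin.init a := by
      rw [rm1_eq]
      funext r
      rw [Fin.succAbove_last]
      rfl
    rw [h1, h2, extL]
    split
    · rfl
    · simp
  have t4 : (∑ i : Fin (k+1), ((-1 : F) ^ (k + i.castSucc.1 + (Fin.last (k+1)).1)) •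
      SS R.D (pairT L γ a i.castSucc (Fin.last (k+1)))) ν
      = ∑ i : Fin (k+1), ((-1 : F)^(i.1+1)) •
        psiRaw R γ (Fin.snoc (rm1 i.1 (Fin.init a)) (L.br (a i.castSucc) (a (Fin.last (k+1))) (ν i)))
          (rm1 i.1 ν) := by
    rw [Finset.sum_apply]
    refine Finset.sum_congr rfl fun i _ => ?_
    rw [Pi.smul_apply, SS_pairT_last R γ hz hγ]
    congr 1
    simp only [Fin.val_castSucc, Fin.val_last]
    have : k + i.1 + (k + 1) = 2 * k + (i.1 + 1) := by ring
    rw [this, pow_add, pow_mul]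
    simp
  have t2 : (∑ i : Fin (k+1), ∑ j : Fin (k+1), if i < j then
      ((-1 : F) ^ (k + i.castSucc.1 + j.castSucc.1)) • SS R.D (pairT L γ a i.castSucc j.castSucc) else 0) ν
      = dPair L R (psiRaw R γ) a ν := by
    cases k with
    | zero =>
      rw [Finset.sum_apply]
      refine Finset.sum_eq_zero fun i _ => ?_
      rw [Finset.sum_apply]
      refine Finset.sum_eq_zero fun j _ => ?_
      rw [if_neg]
      · rfl
      · have := i.2
        have := j.2
        rw [Fin.lt_def]
        omega
    | succ s =>
      rw [Finset.sum_apply]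
      unfold dPair
      refine Finset.sum_congr rfl fun i _ => ?_
      rw [Finset.sum_apply]
      refine Finset.sum_congr rfl fun j _ => ?_
      split
      · rename_i h
        rw [Pi.smul_apply, SS_pairT_cast R γ hz hγ a i j h]
        congr 2
        simp only [Fin.val_castSucc]
        ring
      · rfl
  simp only [Pi.add_apply]
  rw [t1, t2, t3, t4, Pi.smul_apply]
  abel

theorem psi_delta_zero (R : LCAMod F L M) (m : M) :
    psiRaw R (deltaRaw L R (fun (_ : Fin 0 → A) (_ : Fin 0 → ℕ) => m)) = dZero R m := by
  funext a ν
  unfold psiRaw substDag dZero deltaRaw deltaPair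
  have : Finset.Iic ν = {ν} := by
    ext x
    simp [Subsingleton.elim x ν]
  rw [this, Finset.sum_singleton]
  refine finsum_congr fun s => ?_
  have h1 : wt (fun r => ν r - ν r) = 0 := by simp [wt]
  have h2 : mnom (fun r => ν r - ν r) s = 1 := by
    rw [mnom_eq, h1]; simp
  rw [h1, h2]
  simp [Fin.snoc]

end Ops4
end LCC

namespace LCC
section Ops5
variable {F : Type*} [Field F] {A M : Type*} [AddCommGroup A] [Module F A]
  [CommRing M] [Algebra F M] {L : LCA F A}

lemma finsum_range {X : Type*} [AddCommMonoid X] (h : ℕ → X) (N : ℕ)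
    (hN : ∀ p, N ≤ p → h p = 0) : ∑ᶠ p, h p = ∑ p ∈ Finset.range N, h p := by
  apply finsum_eq_sum_of_support_subset
  intro p hp
  simp only [Finset.coe_range, Set.mem_Iio]
  by_contra hc
  exact hp (hN p (by omega))

/-- contraction operator -/
noncomputable def Phi (D : M →ₗ[F] M) (m : M) {K : ℕ} (f : (Fin (K+1) → ℕ) → M) :
    (Fin K → ℕ) → M :=
  fun ν => ∑ᶠ q : ℕ, (D ^ q) m * f (Fin.cons q ν)

lemma Phi_eq (D : M →ₗ[F] M) (m : M) {K : ℕ} {f : (Fin (K+1) → ℕ) → M} (hf : FS f) :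
    ∃ N, ∀ n, N ≤ n → ∀ ν, Phi D m f ν = ∑ q ∈ Finset.range n, (D ^ q) m * f (Fin.cons q ν) := by
  obtain ⟨N, hN⟩ := hf
  refine ⟨N, fun n hn ν => finsum_range _ _ fun p hp => ?_⟩
  rw [hN _ ⟨0, by simpa using hn.trans hp⟩, mul_zero]

lemma Phi_add (D : M →ₗ[F] M) (m : M) {K : ℕ} (f g : (Fin (K+1) → ℕ) → M) (hf : FS f) (hg : FS g) :
    Phi D m (f + g) = Phi D m f + Phi D m g := by
  obtain ⟨N, h⟩ := Phi_eq D m hf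
  obtain ⟨N', h'⟩ := Phi_eq D m hg
  obtain ⟨N'', h''⟩ := Phi_eq D m (hf.add hg)
  funext ν
  rw [Pi.add_apply, h (N + N' + N'') (by omega), h' (N + N' + N'') (by omega), h'' (N + N' + N'') (by omega),
    ← Finset.sum_add_distrib]
  simp [mul_add]

lemma FS.Phi (D : M →ₗ[F] M) (m : M) {K : ℕ} (f : (Fin (K+1) → ℕ) → M) (hf : FS f) :
    FS (Phi D m f) := by
  obtain ⟨N, hN⟩ := hf
  refine ⟨N, fun ν ⟨i, hi⟩ => ?_⟩
  unfold LCC.Phi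
  rw [finsum_eq_zero_of_forall_eq_zero]
  intro q
  rw [hN _ ⟨i.succ, by simpa using hi⟩, mul_zero]

lemma Phi_Eop (D : M →ₗ[F] M) (hD : ∀ m n : M, D (m * n) = D m * n + m * D n) (m : M) {K : ℕ}
    (f : (Fin (K+1) → ℕ) → M) (hf : FS f) :
    Phi D m (Eop D f) = Eop D (Phi D m f) := by
  obtain ⟨N1, h⟩ := Phi_eq D m hf
  obtain ⟨N2, h0⟩ : ∃ N, ∀ n, N ≤ n → ∀ ν, f (Fin.cons n ν) = 0 := by
    obtain ⟨N, hN⟩ := hf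
    exact ⟨N, fun n hn ν => hN _ ⟨0, by simpa using hn⟩⟩
  obtain ⟨N, hN1, hN2⟩ : ∃ N, N1 ≤ N ∧ N2 ≤ N := ⟨N1 + N2, by omega, by omega⟩
  obtain ⟨N', h'⟩ := Phi_eq D m (hf.Eop D)
  funext ν
  rw [h' (N + N' + 1) (by omega), Eop_apply]
  have h1 : ∀ q, Eop D f (Fin.cons q ν) = (if q = 0 then 0 else f (Fin.cons (q-1) ν))
      + (∑ i : Fin K, if ν i = 0 then 0 else f (Fin.cons q (Function.update ν i (ν i - 1))))
      + D (f (Fin.cons q ν)) := by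
    intro q
    rw [Eop_apply, Fin.sum_univ_succ]
    simp only [Lam_apply, Fin.cons_zero, Fin.cons_succ, Fin.cons_update, Fin.update_cons_zero]
  simp only [h1, mul_add, Finset.sum_add_distrib]
  have h2 : ∀ i : Fin K, Lam F i (Phi D m f) ν = ∑ q ∈ Finset.range (N+N'+1), (D ^ q) m *
      (if ν i = 0 then 0 else f (Fin.cons q (Function.update ν i (ν i - 1)))) := by
    intro i
    rw [Lam_apply]
    split_ifs
    · simp
    · rw [h (N+N'+1) (by omega)]
  simp only [h2]
  rw [Finset.sum_comm]
  simp only [← Finset.mul_sum]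
  rw [add_comm (∑ q ∈ _, _) (∑ q ∈ _, _), add_assoc]
  congr 1
  rw [Finset.sum_range_succ']
  simp only [Nat.add_eq_zero_iff, one_ne_zero, and_false, if_false, if_true, mul_zero, add_zero,
    Nat.add_sub_cancel]
  rw [h (N+N') (by omega), Finset.sum_range_succ, map_sum]
  have hz : f (Fin.cons (N+N') ν) = 0 := h0 _ (by omega) ν
  rw [hz, map_zero, mul_zero, add_zero, ← Finset.sum_add_distrib]
  refine Finset.sum_congr rfl fun q _ => ?_
  rw [hD, pow_succ', Module.End.mul_apply]

lemma iota1_exp [CharZero F] (R : LCAMod F L M) (a₀ : A) (m : M) {k : ℕ}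
    (γ : (Fin (k+1) → A) → (Fin (k+1) → ℕ) → M) (a : Fin k → A) :
    iota1 F a₀ (expSer F R m) γ a = Phi R.D m (γ (Fin.cons a₀ a)) := by
  funext ν
  unfold iota1 Phi
  refine finsum_congr fun q => ?_
  have : (q.factorial : F) ≠ 0 := by exact_mod_cast q.factorial_ne_zero
  simp only [expSer, LinearMap.coe_mk, AddHom.coe_mk]
  rw [smul_mul_assoc, smul_inv_smul₀ this]

theorem psi_iota [CharZero F] (R : LCAMod F L M)
    (hD : ∀ m n : M, R.D (m * n) = R.D m * n + m * R.D n) (a₀ : A) (m : M) {k : ℕ}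
    (γ : (Fin (k+2) → A) → (Fin (k+2) → ℕ) → M) (hγ : ∀ a, FS (γ a)) :
    iotaC1 F R a₀ m (psiRaw R γ) = psiRaw R (iota1 F a₀ (expSer F R m) γ) := by
  funext a
  change _ = SS R.D (iota1 F a₀ (expSer F R m) γ a)
  rw [iota1_exp, SS_reduce R.D (Phi R.D m) (Phi_add R.D m) (FS.Phi R.D m) (Phi_Eop R.D hD m) (hγ _),
    SS_of_slice]
  · funext ν
    rw [slice_apply]
    unfold iotaC1 Phi
    refine finsum_congr fun q => ?_
    rw [mul_comm, Fin.cons_snoc_eq_snoc_cons, extL_snoc, if_pos rfl]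
    rfl
  · exact FS.Phi _ _ _ ((hγ _).SS _).extL
  · intro n ρ hn
    unfold Phi
    rw [finsum_eq_zero_of_forall_eq_zero]
    intro q
    rw [Fin.cons_snoc_eq_snoc_cons, extL_snoc, if_neg hn, mul_zero]

theorem psi_iota_zero [CharZero F] (R : LCAMod F L M)
    (hD : ∀ m n : M, R.D (m * n) = R.D m * n + m * R.D n) (a₀ : A) (m : M)
    (γ : (Fin 1 → A) → (Fin 1 → ℕ) → M) (hγ : ∀ a, FS (γ a)) :
    ∃ w : M,
        iotaC1zero F R a₀ m (psiRaw R γ)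
          - iota1 F a₀ (expSer F R m) γ (fun i => i.elim0) (fun i => i.elim0)
        = R.D w := by
  rw [iota1_exp]
  have hc : (Fin.cons a₀ (fun i : Fin 0 => i.elim0) : Fin 1 → A) = fun _ => a₀ := by
    funext i; fin_cases i; rfl
  rw [hc]
  set g := γ (fun _ => a₀) with hg
  obtain ⟨h, hh, he⟩ := exists_div R.D (hγ (fun _ => a₀))
  rw [← hg] at he
  have h1 : Phi R.D m g = Phi R.D m (extL (SS R.D g)) + Eop R.D (Phi R.D m h) := by
    conv_lhs => rw [he]
    rw [Phi_add _ _ _ _ ((hγ _).SS _).extL (hh.Eop _), Phi_Eop R.D hD m _ hh]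
  refine ⟨- Phi R.D m h (fun i => i.elim0), ?_⟩
  rw [h1, Pi.add_apply, Eop_apply]
  have h2 : Phi R.D m (extL (SS R.D g)) (fun i => i.elim0) = m * SS R.D g (fun i => i.elim0) := by
    unfold Phi
    rw [finsum_eq_single _ 0]
    · have : (Fin.cons 0 (fun i : Fin 0 => i.elim0) : Fin 1 → ℕ)
        = Fin.snoc (fun i : Fin 0 => i.elim0) 0 := by
        funext i; fin_cases i; rfl
      rw [this, extL_snoc]
      simp
    · intro q hq
      have : (Fin.cons q (fun i : Fin 0 => i.elim0) : Fin 1 → ℕ)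
        = Fin.snoc (fun i : Fin 0 => i.elim0) q := by
        funext i; fin_cases i; rfl
      rw [this, extL_snoc, if_neg hq, mul_zero]
  rw [h2]
  simp only [iotaC1zero, Finset.univ_eq_empty, Finset.sum_empty, zero_add, map_neg]
  rw [sub_add_eq_sub_sub]
  have : m * psiRaw R γ (fun _ => a₀) (fun i => i.elim0) = m * SS R.D g (fun i => i.elim0) := rfl
  rw [this]; abel

theorem psi_lie [CharZero F] (R : LCAMod F L M)
    (hD : ∀ m n : M, R.D (m * n) = R.D m * n + m * R.D n) (a₀ : A) (m : M) {k : ℕ}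
    (γ : (Fin (k+2) → A) → (Fin (k+2) → ℕ) → M) (hz : ∀ x, γ (Fin.snoc x 0) = 0)
    (hγ : ∀ a, FS (γ a)) :
    lieC1 F R a₀ m (psiRaw R γ) = psiRaw R (lie1 F R a₀ (expSer F R m) γ) := by
  have hi : ∀ a, FS (iota1 F a₀ (expSer F R m) γ a) := by
    intro a; rw [iota1_exp]; exact FS.Phi _ _ _ (hγ _)
  have hiz : ∀ x, iota1 F a₀ (expSer F R m) γ (Fin.snoc x 0) = 0 := by
    intro a; rw [iota1_exp, Fin.cons_snoc_eq_snoc_cons, hz]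
    funext ν; simp [Phi]
  unfold lieC1 lie1
  rw [psi_iota R hD a₀ m γ hγ, ← psi_delta R _ hiz hi, ← psi_delta R γ hz hγ,
    psi_iota R hD a₀ m _ (FS_deltaRaw R γ hz hγ)]
  funext a
  symm
  refine SS_add R.D (FS_deltaRaw R _ hiz hi a) ?_
  rw [iota1_exp]; exact FS.Phi _ _ _ (FS_deltaRaw R γ hz hγ _)

end Ops5
end LCC

namespace LCC
section Ops6
variable {F : Type*} [Field F] {A M : Type*} [AddCommGroup A] [Module F A]
  [AddCommGroup M] [Module F M] {L : LCA F A}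

lemma GammaD_eq (R : LCAMod F L M) {k : ℕ} (η : (Fin k → A) → (Fin k → ℕ) → M) (a) :
    GammaD R η a = Eop R.D (η a) := by
  funext ν
  rw [Eop_apply, add_comm]; rfl

/-- permuting variables -/
def permV {K : ℕ} (σ : Equiv.Perm (Fin K)) (f : (Fin K → ℕ) → M) : (Fin K → ℕ) → M :=
  fun ν => f (ν ∘ σ)

lemma FS.permV {K : ℕ} (σ : Equiv.Perm (Fin K)) {f : (Fin K → ℕ) → M} (hf : FS f) :
    FS (permV σ f) := by
  obtain ⟨N, hN⟩ := hf
  exact ⟨N, fun ν ⟨i, hi⟩ => hN _ ⟨σ.symm i, by simpa using hi⟩⟩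

lemma Lam_permV {K : ℕ} (σ : Equiv.Perm (Fin K)) (f : (Fin K → ℕ) → M) (i : Fin K) :
    Lam F (σ i) (permV σ f) = permV σ (Lam F i f) := by
  funext ν
  simp only [permV, Lam_apply, Function.comp_apply]
  have : Function.update ν (σ i) (ν (σ i) - 1) ∘ σ = Function.update (ν ∘ σ) i (ν (σ i) - 1) := by
    funext j
    simp [Function.update_apply]
  rw [this]

lemma Eop_permV {K : ℕ} (D : M →ₗ[F] M) (σ : Equiv.Perm (Fin K)) (f : (Fin K → ℕ) → M) :
    Eop D (permV σ f) = permV σ (Eop D f) := by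
  funext ν
  rw [permV, Eop_apply, Eop_apply, ← Equiv.sum_comp σ]
  simp only [Lam_permV]
  rfl

theorem psi_inj (R : LCAMod F L M) {k : ℕ} (γ θ : (Fin (k+1) → A) → (Fin (k+1) → ℕ) → M)
    (hγ : IsGamma R (k+1) γ) (hθ : IsGamma R (k+1) θ) (h : psiRaw R γ = psiRaw R θ) :
    ∃ η, IsGamma R (k+1) η ∧ γ - θ = GammaD R η := by
  have hfs : ∀ a, FS ((γ - θ) a) := fun a =>
    ((FS_iff _).2 (hγ.fin a)).sub ((FS_iff _).2 (hθ.fin a))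
  have h1 : ∀ a, ∃ h, FS h ∧ (γ - θ) a = Eop R.D h := by
    intro a
    obtain ⟨f, hf, he⟩ := exists_div R.D (hfs a)
    refine ⟨f, hf, ?_⟩
    have : SS R.D ((γ - θ) a) = 0 := by
      rw [Pi.sub_apply, SS_sub R.D ((FS_iff _).2 (hγ.fin a)) ((FS_iff _).2 (hθ.fin a))]
      exact sub_eq_zero.2 (congrFun h a)
    rw [this] at he
    rw [he]
    have : extL (0 : (Fin k → ℕ) → M) = 0 := by funext ν; simp [extL]
    rw [this, zero_add]
  choose η hη hE using h1
  have huniq : ∀ f, FS f → ∀ a, Eop R.D f = (γ - θ) a → η a = f := by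
    intro f hf a ha
    rw [← sub_eq_zero]
    apply Eop_inj R.D ((hη a).sub hf)
    rw [map_sub, ← hE, ha, sub_self]
  refine ⟨η, ⟨?_, ?_, fun a => (FS_iff _).1 (hη a), ?_, ?_⟩, ?_⟩
  · intro a i x y
    apply huniq _ ((hη _).add (hη _))
    rw [map_add, ← hE, ← hE]
    simp only [Pi.sub_apply, hγ.map_add, hθ.map_add]
    abel
  · intro a i r x
    apply huniq _ ((hη _).smul _)
    rw [map_smul, ← hE]
    simp only [Pi.sub_apply, hγ.map_smul, hθ.map_smul, smul_sub]
  · intro a i x ν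
    have h2 : η (Function.update a i (L.D x)) = - Lam F i (η (Function.update a i x)) := by
      apply huniq _ ((hη _).Lam i).neg
      rw [map_neg]
      have := LinearMap.congr_fun (Lam_comm_Eop (F := F) (M := M) R.D i).eq (η (Function.update a i x))
      simp only [Module.End.mul_apply] at this
      rw [← this, ← hE]
      funext ν
      simp only [Pi.neg_apply, Pi.sub_apply, Lam_apply, hγ.sesq, hθ.sesq]
      split_ifs <;> simp [sub_eq_add_neg, add_comm]
    rw [h2]
    simp only [Pi.neg_apply, Lam_apply]
    split_ifs <;> simp
  · intro a ν σ
    have h2 : η a = (((Equiv.Perm.sign σ : ℤˣ) : ℤ) : F) • permV σ (η (a ∘ σ)) := by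
      apply huniq _ (((hη _).permV σ).smul _)
      rw [map_smul, Eop_permV, ← hE]
      funext ν
      simp only [Pi.smul_apply, permV, Pi.sub_apply, hγ.skew, hθ.skew]
      rw [← smul_sub, Int.cast_smul_eq_zsmul, smul_smul]
      simp
    rw [h2]
    simp only [Pi.smul_apply, permV, Int.cast_smul_eq_zsmul, smul_smul]
    simp
  · funext a
    rw [hE, GammaD_eq]

end Ops6
end LCC

namespace LCC
section Ops7
variable {F : Type*} [Field F] {A M : Type*} [AddCommGroup A] [Module F A]
  [AddCommGroup M] [Module F M] {L : LCA F A}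

/-- the torsion submodule -/
def torS (L : LCA F A) : Submodule F A where
  carrier := {x | IsTor L x}
  zero_mem' := ⟨1, one_ne_zero, by simp⟩
  add_mem' := by
    rintro a b ⟨p, hp, hpa⟩ ⟨q, hq, hqb⟩
    refine ⟨p * q, mul_ne_zero hp hq, ?_⟩
    rw [map_add]
    have h1 : Polynomial.aeval L.D (p * q) b = 0 := by
      rw [map_mul, Module.End.mul_apply, hqb, map_zero]
    have h2 : Polynomial.aeval L.D (p * q) a = 0 := by
      rw [mul_comm, map_mul, Module.End.mul_apply, hpa, map_zero]
    rw [h1, h2, add_zero]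
  smul_mem' := by
    rintro r a ⟨p, hp, hpa⟩
    exact ⟨p, hp, by rw [map_smul, hpa, smul_zero]⟩

lemma tor_D {t : A} (h : IsTor L t) : IsTor L (L.D t) := by
  obtain ⟨p, hp, hpt⟩ := h
  refine ⟨p, hp, ?_⟩
  have : Polynomial.aeval L.D p (L.D t) = (Polynomial.aeval L.D (p * Polynomial.X)) t := by
    rw [map_mul, Polynomial.aeval_X, Module.End.mul_apply]
  rw [this, mul_comm, map_mul, Module.End.mul_apply, hpt, map_zero]

theorem decomp_pi (h : Decomposes L) : ∃ pi : A →ₗ[F] (ℕ →₀ A),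
    (∀ a, ∃ t, IsTor L t ∧ a = t + (pi a).sum fun n u => (L.D ^ n) u) ∧
    (∀ t, IsTor L t → pi t = 0) ∧
    (∀ a n, pi (L.D a) (n+1) = pi a n) ∧ (∀ a, pi (L.D a) 0 = 0) ∧
    (∀ a n, pi (pi a n) = Finsupp.single 0 (pi a n)) := by
  obtain ⟨U, hU⟩ := h
  let S : (ℕ →₀ U) →ₗ[F] A := Finsupp.lsum F (fun n => (L.D ^ n) ∘ₗ U.subtype)
  let E : (torS L × (ℕ →₀ U)) →ₗ[F] A := LinearMap.coprod (torS L).subtype S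
  have hE : Function.Bijective E := hU
  have hS : ∀ f, S f = f.sum (fun n u => (L.D ^ n) (u : A)) := fun f => rfl
  obtain ⟨q, hq⟩ : ∃ q : A →ₗ[F] (ℕ →₀ U), ∀ t, IsTor L t → ∀ f, q (t + S f) = f := by
    let e := LinearEquiv.ofBijective E hE
    refine ⟨LinearMap.snd F _ _ ∘ₗ e.symm.toLinearMap, fun t ht f => ?_⟩
    have he : e (⟨t, ht⟩, f) = t + S f := rfl
    simp only [LinearMap.comp_apply, LinearEquiv.coe_coe]
    rw [← he, LinearEquiv.symm_apply_apply]; rfl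
  have hsurj : ∀ a, ∃ t, IsTor L t ∧ ∃ (f : ℕ →₀ U), a = t + S f := by
    intro a
    obtain ⟨⟨t, f⟩, h⟩ := hE.2 a
    exact ⟨t, t.2, f, h.symm⟩
  have hDS : ∀ t f, L.D (t + S f) = L.D t + S (Finsupp.mapDomain (· + 1) f) := by
    intro t f
    rw [map_add, hS, hS, Finsupp.sum_mapDomain_index]
    · congr 1
      rw [Finsupp.sum, map_sum]
      refine Finset.sum_congr rfl fun n _ => ?_
      change _ = (L.D ^ (n+1)) _
      rw [pow_succ', Module.End.mul_apply]
    · simp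
    · simp
  clear_value S
  refine ⟨Finsupp.mapRange.linearMap U.subtype ∘ₗ q, ?_, ?_, ?_, ?_, ?_⟩
  · intro a
    obtain ⟨t, ht, f, rfl⟩ := hsurj a
    refine ⟨t, ht, ?_⟩
    rw [LinearMap.comp_apply, hq t ht, hS]
    congr 1
    simp only [Finsupp.mapRange.linearMap_apply]
    rw [Finsupp.sum_mapRange_index]
    · rfl
    · intro n; simp
  · intro t ht
    have := hq t ht 0
    simp only [map_zero, add_zero] at this
    rw [LinearMap.comp_apply, this, map_zero]
  · intro a n
    obtain ⟨t, ht, f, rfl⟩ := hsurj a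
    rw [hDS, LinearMap.comp_apply, LinearMap.comp_apply, hq _ (tor_D ht), hq _ ht]
    simp only [Finsupp.mapRange.linearMap_apply, Finsupp.mapRange_apply]
    rw [Finsupp.mapDomain_apply (add_left_injective 1)]
  · intro a
    obtain ⟨t, ht, f, rfl⟩ := hsurj a
    rw [hDS, LinearMap.comp_apply, hq _ (tor_D ht)]
    simp only [Finsupp.mapRange.linearMap_apply, Finsupp.mapRange_apply]
    rw [Finsupp.mapDomain_notin_range _ _ (by simp)]
    rfl
  · intro a n
    generalize hu : q a n = u
    have : (Finsupp.mapRange.linearMap U.subtype ∘ₗ q) a n = (u : A) := by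
      rw [← hu]; simp
    rw [this]
    have h1 := hq 0 (torS L).zero_mem (Finsupp.single 0 u)
    rw [hS, Finsupp.sum_single_index (by simp)] at h1
    simp only [zero_add, pow_zero, Module.End.one_apply] at h1
    rw [LinearMap.comp_apply, h1]
    simp

/-- induction principle over a decomposed algebra -/
lemma decomp_ind (pi : A →ₗ[F] (ℕ →₀ A))
    (h1 : ∀ a, ∃ t, IsTor L t ∧ a = t + (pi a).sum fun n u => (L.D ^ n) u)
    (h5 : ∀ a n, pi (pi a n) = Finsupp.single 0 (pi a n))
    (P : A → Prop) (hadd : ∀ x y, P x → P y → P (x + y)) (hD : ∀ x, P x → P (L.D x))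
    (ht : ∀ t, IsTor L t → P t) (hu : ∀ u, pi u = Finsupp.single 0 u → P u) (a : A) : P a := by
  obtain ⟨t, h, he⟩ := h1 a
  rw [he]
  apply hadd _ _ (ht t h)
  rw [Finsupp.sum]
  have hDn : ∀ n x, P x → P ((L.D ^ n) x) := by
    intro n x hx
    induction n with
    | zero => simpa
    | succ n ih => rw [pow_succ', Module.End.mul_apply]; exact hD _ ih
  exact Finset.sum_induction _ P hadd (ht 0 (torS L).zero_mem)
    fun n _ => hDn n _ (hu _ (h5 a n))

end Ops7
end LCC

namespace LCC
section Ops8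
variable {F : Type*} [Field F] {A M : Type*} [AddCommGroup A] [Module F A]
  [AddCommGroup M] [Module F M] {L : LCA F A}

/-- basic cochains without skew-symmetry -/
structure PreG (R : LCAMod F L M) (k : ℕ)
    (γ : (Fin k → A) → (Fin k → ℕ) → M) : Prop where
  map_add : ∀ (a : Fin k → A) (i : Fin k) (x y : A),
    γ (Function.update a i (x + y)) = γ (Function.update a i x) + γ (Function.update a i y)
  map_smul : ∀ (a : Fin k → A) (i : Fin k) (r : F) (x : A),
    γ (Function.update a i (r • x)) = r • γ (Function.update a i x)
  fs : ∀ a, FS (γ a)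
  sesq : ∀ (a : Fin k → A) (i : Fin k) (x : A),
    γ (Function.update a i (L.D x)) = - Lam F i (γ (Function.update a i x))

lemma PreG.perm {R : LCAMod F L M} {k : ℕ} {γ : (Fin k → A) → (Fin k → ℕ) → M}
    (h : PreG R k γ) (σ : Equiv.Perm (Fin k)) : PreG R k (fun a => permV σ (γ (a ∘ σ))) := by
  have hu : ∀ (a : Fin k → A) i x, Function.update a i x ∘ σ = Function.update (a ∘ σ) (σ.symm i) x := by
    intro a i x
    funext j
    simp [Function.update_apply, Equiv.eq_symm_apply]
  constructor
  · intro a i x y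
    simp only [hu, h.map_add]; rfl
  · intro a i x y
    simp only [hu, h.map_smul]; rfl
  · intro a; exact (h.fs _).permV σ
  · intro a i x
    simp only [hu, h.sesq]
    have := Lam_permV (F := F) σ (γ (Function.update (a ∘ σ) (σ.symm i) x)) (σ.symm i)
    rw [Equiv.apply_symm_apply] at this
    rw [this]; rfl

lemma PreG.smul {R : LCAMod F L M} {k : ℕ} {γ : (Fin k → A) → (Fin k → ℕ) → M}
    (h : PreG R k γ) (r : F) : PreG R k (fun a => r • γ a) := by
  constructor
  · intro a i x y
    simp only [h.map_add, smul_add]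
  · intro a i s x
    simp only [h.map_smul, smul_comm r s]
  · intro a; exact (h.fs _).smul r
  · intro a i x
    simp only [h.sesq, smul_neg]
    rw [_root_.map_smul]

lemma PreG.sum {R : LCAMod F L M} {k : ℕ} {ι : Type*} (s : Finset ι)
    {γ : ι → (Fin k → A) → (Fin k → ℕ) → M}
    (h : ∀ i ∈ s, PreG R k (γ i)) : PreG R k (fun a => ∑ i ∈ s, γ i a) := by
  constructor
  · intro a i x y
    rw [← Finset.sum_add_distrib]
    exact Finset.sum_congr rfl fun j hj => (h j hj).map_add _ _ _ _
  · intro a i r x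
    rw [Finset.smul_sum]
    exact Finset.sum_congr rfl fun j hj => (h j hj).map_smul _ _ _ _
  · intro a; exact FS.sum _ fun j hj => (h j hj).fs a
  · intro a i x
    rw [map_sum, ← Finset.sum_neg_distrib]
    exact Finset.sum_congr rfl fun j hj => (h j hj).sesq _ _ _

/-- the extension to all of `A` of a bracket given on generators -/
noncomputable def gam0 (pi : A →ₗ[F] (ℕ →₀ A)) {k : ℕ} (c : (Fin (k+1) → A) → (Fin k → ℕ) → M) :
    (Fin (k+1) → A) → (Fin (k+1) → ℕ) → M :=
  fun a ν => ∑ n ∈ Finset.Iic ν, ((-1 : F) ^ wt n) • extL (c (fun r => pi (a r) (n r))) (ν - n)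

lemma extL_add {K : ℕ} (f g : (Fin K → ℕ) → M) : extL (f + g) = extL f + extL g := by
  funext ν; simp only [extL, Pi.add_apply]; split <;> simp

lemma extL_smul {K : ℕ} (r : F) (f : (Fin K → ℕ) → M) : extL (r • f) = r • extL f := by
  funext ν; simp only [extL, Pi.smul_apply]; split <;> simp

lemma extL_zero {K : ℕ} : extL (0 : (Fin K → ℕ) → M) = 0 := by
  funext ν; simp [extL]

lemma upd_pi (pi : A →ₗ[F] (ℕ →₀ A)) {k : ℕ} (a : Fin k → A) (i : Fin k) (x : A) (n : Fin k → ℕ) :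
    (fun r => pi (Function.update a i x r) (n r))
      = Function.update (fun r => pi (a r) (n r)) i (pi x (n i)) := by
  funext r
  by_cases h : r = i
  · subst h; simp
  · simp [h]

lemma cz {R : LCAMod F L M} {k : ℕ} {c : (Fin (k+1) → A) → (Fin k → ℕ) → M} (hc : IsCBr R k c)
    (a : Fin (k+1) → A) (i) : c (Function.update a i 0) = 0 := by
  have := hc.map_smul a i 0 0
  simpa using this

lemma cz' {R : LCAMod F L M} {k : ℕ} {c : (Fin (k+1) → A) → (Fin k → ℕ) → M} (hc : IsCBr R k c)
    (a : Fin (k+1) → A) (i) (h : a i = 0) : c a = 0 := by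
  rw [← Function.update_eq_self i a, h, cz hc]

lemma FS.shiftM {K : ℕ} {f : (Fin K → ℕ) → M} (hf : FS f) (m : Fin K → ℕ) : FS (shiftM F m f) := by
  obtain ⟨N, hN⟩ := hf
  refine ⟨N + ∑ i, m i, fun ν ⟨i, hi⟩ => ?_⟩
  rw [shiftM_apply]
  split
  · apply hN _ ⟨i, _⟩
    have := Finset.single_le_sum (f := m) (fun _ _ => Nat.zero_le _) (Finset.mem_univ i)
    simp only [Pi.sub_apply]; omega
  · rfl

lemma gam0_FS {R : LCAMod F L M} (pi : A →ₗ[F] (ℕ →₀ A)) {k : ℕ}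
    {c : (Fin (k+1) → A) → (Fin k → ℕ) → M} (hc : IsCBr R k c) (a : Fin (k+1) → A) :
    FS (gam0 pi c a) := by
  classical
  obtain ⟨N, hN⟩ : ∃ N, ∀ r n, N ≤ n → pi (a r) n = 0 := by
    refine ⟨(Finset.univ.sup fun r => (pi (a r)).support.sup id) + 1, fun r n hn => ?_⟩
    by_contra hcon
    have h1 : n ∈ (pi (a r)).support := by simpa using hcon
    have h2 := Finset.le_sup (f := id) h1
    have h3 := Finset.le_sup (f := fun r => (pi (a r)).support.sup id) (Finset.mem_univ r)
    simp only [id] at h2 h3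
    omega
  have : gam0 pi c a = ∑ n ∈ Finset.Iic (fun _ : Fin (k+1) => N),
      ((-1 : F) ^ wt n) • shiftM F n (extL (c (fun r => pi (a r) (n r)))) := by
    funext ν
    rw [Finset.sum_apply]
    unfold gam0
    have h1 : ∀ n, (((-1 : F) ^ wt n) • shiftM F n (extL (c (fun r => pi (a r) (n r))))) ν
      = if n ∈ Finset.Iic ν then ((-1 : F) ^ wt n) • extL (c (fun r => pi (a r) (n r))) (ν - n) else 0 := by
      intro n
      rw [Pi.smul_apply]
      simp only [shiftM, LinearMap.coe_mk, AddHom.coe_mk, Finset.mem_Iic, smul_ite, smul_zero]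
    simp only [h1]
    rw [← Finset.sum_filter, ← Finset.sum_subset (s₁ := Finset.Iic (fun _ : Fin (k+1) => N) ∩ Finset.Iic ν)
      Finset.inter_subset_right]
    · rw [Finset.filter_mem_eq_inter]
    · intro n hn hn2
      simp only [Finset.mem_inter, hn, and_true, Finset.mem_Iic, Pi.le_def, not_forall] at hn2
      obtain ⟨r, hr⟩ := hn2
      rw [cz' hc _ r (hN r _ (by omega)), extL_zero]
      simp
  rw [this]
  exact FS.sum _ fun n _ => (((FS_iff _).2 (hc.fin _)).extL.shiftM n).smul _

lemma gam0_pre {R : LCAMod F L M} (pi : A →ₗ[F] (ℕ →₀ A))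
    (h3 : ∀ a n, pi (L.D a) (n+1) = pi a n) (h4 : ∀ a, pi (L.D a) 0 = 0) {k : ℕ}
    {c : (Fin (k+1) → A) → (Fin k → ℕ) → M} (hc : IsCBr R k c) : PreG R (k+1) (gam0 pi c) := by
  constructor
  · intro a i x y
    funext ν
    simp only [gam0, upd_pi, map_add, Finsupp.add_apply, hc.map_add, extL_add, Pi.add_apply, smul_add,
      Finset.sum_add_distrib]
  · intro a i r x
    funext ν
    simp only [gam0, upd_pi, map_smul, Finsupp.smul_apply, hc.map_smul, extL_smul, Pi.smul_apply,
      Finset.smul_sum, smul_comm r]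
  · exact gam0_FS pi hc
  · intro a i x
    funext ν
    rw [Pi.neg_apply, Lam_apply]
    simp only [gam0, upd_pi]
    split_ifs with hν
    · rw [neg_zero]
      apply Finset.sum_eq_zero
      intro n hn
      have : n i = 0 := by
        have : n i ≤ ν i := (Finset.mem_Iic.1 hn) i
        omega
      rw [this, h4, cz hc, extL_zero]; simp
    · rw [← Finset.sum_neg_distrib]
      rw [← Finset.sum_filter_of_ne (p := fun n : Fin (k+1) → ℕ => n i ≠ 0)]
      · refine Finset.sum_bij' (fun n _ => Function.update n i (n i - 1))
          (fun n _ => Function.update n i (n i + 1)) ?_ ?_ ?_ ?_ ?_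
        · intro n hn
          simp only [Finset.mem_filter, Finset.mem_Iic, Pi.le_def] at hn ⊢
          intro r
          have := hn.1 r
          by_cases h : r = i
          · subst h; simp; omega
          · simpa [h] using this
        · intro n hn
          simp only [Finset.mem_filter, Finset.mem_Iic, Pi.le_def] at hn ⊢
          refine ⟨fun r => ?_, by simp⟩
          have := hn r
          by_cases h : r = i
          · subst h; simp at this ⊢; omega
          · simpa [h] using this
        · intro n hn
          have := (Finset.mem_filter.1 hn).2
          funext r
          by_cases h : r = i
          · subst h; simp; omega
          · simp [h]
        · intro n hn
          funext r
          by_cases h : r = i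
          · subst h; simp
          · simp [h]
        · intro n hn
          have hni := (Finset.mem_filter.1 hn).2
          obtain ⟨p, hp⟩ := Nat.exists_eq_succ_of_ne_zero hni
          have hw : wt n = wt (Function.update n i (n i - 1)) + 1 := by
            unfold wt
            rw [Finset.sum_update_of_mem (Finset.mem_univ i), ← Finset.sum_sdiff (Finset.subset_univ {i})]
            simp; omega
          have hs : ν - n = Function.update ν i (ν i - 1) - Function.update n i (n i - 1) := by
            funext r
            by_cases h : r = i
            · subst h; simp; omega
            · simp [h]
          have hf : Function.update (fun r => pi (a r) (n r)) i (pi (L.D x) (n i))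
            = Function.update (fun r => pi (a r) (Function.update n i (n i - 1) r)) i
              (pi x (Function.update n i (n i - 1) i)) := by
            funext r
            by_cases h : r = i
            · subst h; simp [hp, h3]
            · simp [h]
          rw [hf, ← hs, hw, pow_succ]
          simp
      · intro n hn hne h0
        apply hne
        rw [h0, h4, cz hc, extL_zero]; simp

lemma gam0_U {R : LCAMod F L M} (pi : A →ₗ[F] (ℕ →₀ A)) {k : ℕ}
    {c : (Fin (k+1) → A) → (Fin k → ℕ) → M} (hc : IsCBr R k c) (a : Fin (k+1) → A)
    (ha : ∀ r, pi (a r) = Finsupp.single 0 (a r)) : gam0 pi c a = extL (c a) := by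
  funext ν
  unfold gam0
  rw [Finset.sum_eq_single 0]
  · simp [ha, wt]
  · intro n _ hn
    obtain ⟨r, hr⟩ := Function.ne_iff.1 hn
    rw [cz' hc _ r, extL_zero]
    · simp
    · rw [ha, Finsupp.single_eq_of_ne]; simpa using hr
  · intro h; simp at h

lemma gam0_tor {R : LCAMod F L M} (pi : A →ₗ[F] (ℕ →₀ A))
    (h2 : ∀ t, IsTor L t → pi t = 0) {k : ℕ}
    {c : (Fin (k+1) → A) → (Fin k → ℕ) → M} (hc : IsCBr R k c) (a : Fin (k+1) → A)
    (i) (ha : IsTor L (a i)) : gam0 pi c a = 0 := by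
  funext ν
  apply Finset.sum_eq_zero
  intro n _
  rw [cz' hc _ i, extL_zero]
  · simp
  · rw [h2 _ ha]; rfl

theorem agree {R : LCAMod F L M} (pi : A →ₗ[F] (ℕ →₀ A))
    (h1 : ∀ a, ∃ t, IsTor L t ∧ a = t + (pi a).sum fun n u => (L.D ^ n) u)
    (h5 : ∀ a n, pi (pi a n) = Finsupp.single 0 (pi a n)) {k : ℕ}
    {c : (Fin (k+1) → A) → (Fin k → ℕ) → M} (hc : IsCBr R k c) (hv : VanishOnTorsion L c)
    {γ : (Fin (k+1) → A) → (Fin (k+1) → ℕ) → M} (hγ : PreG R (k+1) γ) (s : F)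
    (ht : ∀ a i, IsTor L (a i) → γ a = 0)
    (hu : ∀ a, (∀ r, pi (a r) = Finsupp.single 0 (a r)) → SS R.D (γ a) = s • c a) (a) :
    SS R.D (γ a) = s • c a := by
  classical
  suffices h : ∀ S : Finset (Fin (k+1)), ∀ a, (∀ r, r ∉ S → pi (a r) = Finsupp.single 0 (a r)) →
      SS R.D (γ a) = s • c a from h Finset.univ a (by simp)
  intro S
  induction S using Finset.induction_on with
  | empty => intro a ha; exact hu a (fun r => ha r (by simp))
  | insert i S hi ih =>
    intro a ha
    rw [← Function.update_eq_self i a]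
    refine decomp_ind pi h1 h5 (fun x => SS R.D (γ (Function.update a i x)) = s • c (Function.update a i x))
      ?_ ?_ ?_ ?_ (a i)
    · intro x y hx hy
      simp only [hγ.map_add, hc.map_add, SS_add R.D (hγ.fs _) (hγ.fs _), hx, hy, smul_add]
    · intro x hx
      rw [hγ.sesq, SS_neg _ ((hγ.fs _).Lam _)]
      induction i using Fin.lastCases with
      | last =>
        rw [SS_Lam_last _ (hγ.fs _), hx, Yop, LinearMap.neg_apply, neg_neg, map_smul]
        congr 1
        funext ν
        rw [hc.sesq₂, Eop_apply, add_comm]; rfl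
      | cast i =>
        rw [SS_Lam_cast _ (hγ.fs _), hx, map_smul, ← smul_neg]
        congr 1
        funext ν
        rw [hc.sesq₁, Pi.neg_apply, Lam_apply]; split <;> simp
    · intro t htt
      rw [ht _ i (by simpa), SS_zero]
      symm
      convert smul_zero s
      funext ν
      exact hv _ _ ⟨i, by simpa⟩
    · intro u hpu
      apply ih
      intro r hr
      by_cases h : r = i
      · subst h; simpa
      · simp only [Function.update_of_ne h]
        exact ha r (by simp [h, hr])

theorem psi_surj [CharZero F] (hdec : Decomposes L) (R : LCAMod F L M) {k : ℕ}
    (c : (Fin (k+1) → A) → (Fin k → ℕ) → M) (hc : IsCBr R k c) (hv : VanishOnTorsion L c) :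
    ∃ γ, IsGamma R (k+1) γ ∧ psiRaw R γ = c := by
  classical
  obtain ⟨pi, h1, h2, h3, h4, h5⟩ := decomp_pi hdec
  have hp := gam0_pre (R := R) pi h3 h4 hc
  have hps : ∀ σ : Equiv.Perm (Fin (k+1)), PreG R (k+1)
      (fun a => (((Equiv.Perm.sign σ : ℤˣ) : ℤ) : F) • permV σ (gam0 pi c (a ∘ σ))) :=
    fun σ => (hp.perm σ).smul _
  have hag : ∀ σ : Equiv.Perm (Fin (k+1)), ∀ a, SS R.D (permV σ (gam0 pi c (a ∘ σ)))
      = (((Equiv.Perm.sign σ : ℤˣ) : ℤ) : F) • c a := by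
    intro σ
    refine agree pi h1 h5 hc hv (hp.perm σ) _ ?_ ?_
    · intro a i hi
      rw [gam0_tor pi h2 hc _ (σ.symm i) (by simpa)]
      rfl
    · intro a ha
      rw [gam0_U pi hc (a ∘ σ) (fun r => ha (σ r))]
      have : c a = (((Equiv.Perm.sign σ : ℤˣ) : ℤ) : F) • SS R.D (permV σ (extL (c (a ∘ σ)))) := by
        funext ν
        rw [hc.skew a ν σ, Pi.smul_apply, Int.cast_smul_eq_zsmul]
        rfl
      rw [this, smul_smul]
      norm_cast
      simp
  have hpre := (PreG.sum Finset.univ (fun σ _ => hps σ)).smul (((k+1).factorial : F)⁻¹)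
  refine ⟨_, ⟨hpre.map_add, hpre.map_smul, fun a => (FS_iff _).1 (hpre.fs a), ?_, ?_⟩, ?_⟩
  · intro a i x ν
    rw [hpre.sesq, Pi.neg_apply, Lam_apply]; split <;> simp
  · intro a ν τ
    simp only [Pi.smul_apply, Finset.sum_apply, permV]
    rw [smul_comm]
    congr 1
    rw [Finset.smul_sum, ← Equiv.sum_comp (Equiv.mulLeft τ⁻¹)]
    refine Finset.sum_congr rfl fun σ _ => ?_
    simp only [Equiv.coe_mulLeft]
    have e1 : (a ∘ τ) ∘ ⇑(τ⁻¹ * σ) = a ∘ σ := by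
      funext i; simp
    have e2 : (ν ∘ τ) ∘ ⇑(τ⁻¹ * σ) = ν ∘ σ := by
      funext i; simp
    rw [e1, e2, ← Int.cast_smul_eq_zsmul F, smul_smul]
    congr 1
    rw [Equiv.Perm.sign_mul, Equiv.Perm.sign_inv]
    push_cast
    rfl
  · funext a
    change SS R.D _ = _
    have hF : ∀ σ ∈ (Finset.univ : Finset (Equiv.Perm (Fin (k+1)))), FS ((((Equiv.Perm.sign σ : ℤˣ) : ℤ) : F) • permV σ (gam0 pi c (a ∘ σ))) :=
      fun σ _ => (hps σ).fs a
    rw [SS_smul _ (FS.sum _ hF), SS_sum _ _ hF]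
    have : ∀ σ : Equiv.Perm (Fin (k+1)), SS R.D ((((Equiv.Perm.sign σ : ℤˣ) : ℤ) : F) • permV σ (gam0 pi c (a ∘ σ))) = c a := by
      intro σ
      rw [SS_smul _ ((hp.perm σ).fs a), hag, smul_smul]
      norm_cast
      simp
    simp only [this]
    rw [Finset.sum_const, Finset.card_univ, Fintype.card_perm, Fintype.card_fin, ← Nat.cast_smul_eq_nsmul F,
      smul_smul, inv_mul_cancel₀ (by exact_mod_cast (k+1).factorial_ne_zero), one_smul]

end Ops8
end LCC

namespace LCC
section Ops9
open scoped TensorProduct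
variable {F : Type*} [Field F] {A X Q : Type*} [AddCommGroup A] [Module F A]
  [AddCommGroup X] [Module F X] [AddCommGroup Q] [Module F Q] {L : LCA F A}

/-- relation operator -/
noncomputable def rel (D : A →ₗ[F] A) (E : X →ₗ[F] X) : (A ⊗[F] X) →ₗ[F] (A ⊗[F] X) :=
  LinearMap.rTensor X D + LinearMap.lTensor A E

lemma rel_tmul (D : A →ₗ[F] A) (E : X →ₗ[F] X) (a : A) (m : X) :
    rel D E (a ⊗ₜ m) = (D a) ⊗ₜ m + a ⊗ₜ (E m) := by
  simp [rel]

lemma quot_ext (D : A →ₗ[F] A) (E : X →ₗ[F] X)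
    {f g : ((A ⊗[F] X) ⧸ LinearMap.range (rel D E)) →ₗ[F] Q}
    (h : ∀ a m, f (Submodule.Quotient.mk (a ⊗ₜ m)) = g (Submodule.Quotient.mk (a ⊗ₜ m))) : f = g := by
  apply Submodule.linearMap_qext
  apply TensorProduct.ext'
  intro a m
  exact h a m

lemma exists_lin (D : A →ₗ[F] A) (E : X →ₗ[F] X) (g : A → X → Q)
    (a1 : ∀ a a' m, g (a + a') m = g a m + g a' m) (s1 : ∀ (r : F) a m, g (r • a) m = r • g a m)
    (a2 : ∀ a m m', g a (m + m') = g a m + g a m') (s2 : ∀ (r : F) a m, g a (r • m) = r • g a m)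
    (hr : ∀ a m, g (D a) m + g a (E m) = 0) :
    ∃ f : ((A ⊗[F] X) ⧸ LinearMap.range (rel D E)) →ₗ[F] Q,
      ∀ a m, f (Submodule.Quotient.mk (a ⊗ₜ m)) = g a m := by
  let f0 : (A ⊗[F] X) →ₗ[F] Q := TensorProduct.lift (LinearMap.mk₂ F g a1 s1 a2 s2)
  have h0 : f0 ∘ₗ rel D E = 0 := by
    apply TensorProduct.ext'
    intro a m
    rw [LinearMap.comp_apply, rel_tmul, map_add]
    simpa [f0] using hr a m
  refine ⟨Submodule.liftQ _ f0 ?_, fun a m => ?_⟩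
  · rw [LinearMap.range_le_ker_iff]; exact h0
  · erw [Submodule.liftQ_apply]; simp [f0]

lemma exists_bilin (D : A →ₗ[F] A) (E : X →ₗ[F] X) (g : A → X → A → X → Q)
    (a1 : ∀ a a' m b n, g (a + a') m b n = g a m b n + g a' m b n)
    (s1 : ∀ (r : F) a m b n, g (r • a) m b n = r • g a m b n)
    (a2 : ∀ a m m' b n, g a (m + m') b n = g a m b n + g a m' b n)
    (s2 : ∀ (r : F) a m b n, g a (r • m) b n = r • g a m b n)
    (a3 : ∀ a m b b' n, g a m (b + b') n = g a m b n + g a m b' n)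
    (s3 : ∀ (r : F) a m b n, g a m (r • b) n = r • g a m b n)
    (a4 : ∀ a m b n n', g a m b (n + n') = g a m b n + g a m b n')
    (s4 : ∀ (r : F) a m b n, g a m b (r • n) = r • g a m b n)
    (hr1 : ∀ a m b n, g (D a) m b n + g a (E m) b n = 0)
    (hr2 : ∀ a m b n, g a m (D b) n + g a m b (E n) = 0) :
    ∃ f : ((A ⊗[F] X) ⧸ LinearMap.range (rel D E)) →ₗ[F]
        ((A ⊗[F] X) ⧸ LinearMap.range (rel D E)) →ₗ[F] Q,
      ∀ a m b n, f (Submodule.Quotient.mk (a ⊗ₜ m)) (Submodule.Quotient.mk (b ⊗ₜ n)) = g a m b n := by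
  have h1 : ∀ a m, ∃ f : ((A ⊗[F] X) ⧸ LinearMap.range (rel D E)) →ₗ[F] Q,
      ∀ b n, f (Submodule.Quotient.mk (b ⊗ₜ n)) = g a m b n := fun a m =>
    exists_lin D E (g a m) (a3 a m) (fun r => s3 r a m) (a4 a m) (fun r => s4 r a m) (hr2 a m)
  choose G hG using h1
  obtain ⟨f, hf⟩ := exists_lin D E G
    (fun a a' m => quot_ext D E fun b n => by simp [hG, a1])
    (fun r a m => quot_ext D E fun b n => by simp [hG, s1])
    (fun a m m' => quot_ext D E fun b n => by simp [hG, a2])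
    (fun r a m => quot_ext D E fun b n => by simp [hG, s2])
    (fun a m => quot_ext D E fun b n => by simp [hG, hr1])
  exact ⟨f, fun a m b n => by rw [hf, hG]⟩

/-- first term of the bracket -/
noncomputable def T1 (L : LCA F A) (w : ℕ → X →ₗ[F] X →ₗ[F] X) (a : A) (m : X) (b : A) (n : X) : A ⊗[F] X :=
  ∑ᶠ p : ℕ, (L.br a b p) ⊗ₜ[F] (w p m n)

lemma T1_sum (L : LCA F A) (w : ℕ → X →ₗ[F] X →ₗ[F] X) (a b : A) : ∃ N, ∀ P, N ≤ P → ∀ m n,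
    T1 L w a m b n = ∑ p ∈ Finset.range P, (L.br a b p) ⊗ₜ[F] (w p m n) := by
  obtain ⟨N, hN⟩ := br_bound L a b
  refine ⟨N, fun P hP m n => finsum_range _ _ fun p hp => ?_⟩
  rw [hN p (by omega), TensorProduct.zero_tmul]

theorem exists_bracket (L : LCA F A) (E : X →ₗ[F] X) (w : ℕ → X →ₗ[F] X →ₗ[F] X)
    (s : X →ₗ[F] A →ₗ[F] X →ₗ[F] X)
    (hw1 : ∀ p m n, w p (E m) n = w (p+1) m n)
    (hw2 : ∀ p m n, E (w p m n) = w (p+1) m n + w p m (E n))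
    (hs1 : ∀ m a n, s (E m) a n = - s m (L.D a) n)
    (hs2 : ∀ m a n, E (s m a n) = s m a (E n)) :
    ∃ f : ((A ⊗[F] X) ⧸ LinearMap.range (rel L.D E)) →ₗ[F]
        ((A ⊗[F] X) ⧸ LinearMap.range (rel L.D E)) →ₗ[F] ((A ⊗[F] X) ⧸ LinearMap.range (rel L.D E)),
      ∀ a m b n, f (Submodule.Quotient.mk (a ⊗ₜ m)) (Submodule.Quotient.mk (b ⊗ₜ n))
        = Submodule.Quotient.mk (T1 L w a m b n - a ⊗ₜ s n b m + b ⊗ₜ s m a n) := by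
  have k1 : ∀ a m b n, T1 L w (L.D a) m b n + T1 L w a (E m) b n = 0 := by
    intro a m b n
    obtain ⟨N, h⟩ := T1_sum L w a b
    obtain ⟨N', h'⟩ := T1_sum L w (L.D a) b
    rw [h (N+N') (by omega), h' (N+N'+1) (by omega), Finset.sum_range_succ']
    simp only [L.sesq_left_zero, L.sesq_left, hw1, TensorProduct.zero_tmul, TensorProduct.neg_tmul,
      Finset.sum_neg_distrib]
    simp
  have k2 : ∀ a m b n, T1 L w a m (L.D b) n + T1 L w a m b (E n) = rel L.D E (T1 L w a m b n) := by
    intro a m b n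
    obtain ⟨N, h⟩ := T1_sum L w a b
    obtain ⟨N', h'⟩ := T1_sum L w a (L.D b)
    obtain ⟨N0, h0⟩ := br_bound L a b
    rw [h (N+N'+N0+1) (by omega), h' (N+N'+N0+1) (by omega), h (N+N'+N0+1) (by omega), map_sum]
    simp only [rel_tmul, L.sesq_right, hw2, TensorProduct.tmul_add, TensorProduct.add_tmul,
      Finset.sum_add_distrib]
    rw [add_assoc, add_right_inj, add_left_inj, Finset.sum_range_succ', Finset.sum_range_succ,
      h0 (N+N'+N0) (by omega)]
    simp
  have t1 : ∀ m a n, s m (L.D a) n + s (E m) a n = 0 := by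
    intro m a n; rw [hs1]; abel
  have hT1a : ∀ a a' m b n, T1 L w (a + a') m b n = T1 L w a m b n + T1 L w a' m b n := by
    intro a a' m b n
    obtain ⟨N, h⟩ := T1_sum L w a b
    obtain ⟨N', h'⟩ := T1_sum L w a' b
    obtain ⟨N2, h2⟩ := T1_sum L w (a+a') b
    rw [h (N+N'+N2) (by omega), h' (N+N'+N2) (by omega), h2 (N+N'+N2) (by omega)]
    simp [TensorProduct.add_tmul, Finset.sum_add_distrib]
  have hT1b : ∀ a m b b' n, T1 L w a m (b + b') n = T1 L w a m b n + T1 L w a m b' n := by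
    intro a m b b' n
    obtain ⟨N, h⟩ := T1_sum L w a b
    obtain ⟨N', h'⟩ := T1_sum L w a b'
    obtain ⟨N2, h2⟩ := T1_sum L w a (b+b')
    rw [h (N+N'+N2) (by omega), h' (N+N'+N2) (by omega), h2 (N+N'+N2) (by omega)]
    simp [TensorProduct.add_tmul, Finset.sum_add_distrib]
  have hT1as : ∀ (r : F) a m b n, T1 L w (r • a) m b n = r • T1 L w a m b n := by
    intro r a m b n
    obtain ⟨N, h⟩ := T1_sum L w a b
    obtain ⟨N2, h2⟩ := T1_sum L w (r • a) b
    rw [h (N+N2) (by omega), h2 (N+N2) (by omega), Finset.smul_sum]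
    simp [TensorProduct.smul_tmul']
  have hT1bs : ∀ (r : F) a m b n, T1 L w a m (r • b) n = r • T1 L w a m b n := by
    intro r a m b n
    obtain ⟨N, h⟩ := T1_sum L w a b
    obtain ⟨N2, h2⟩ := T1_sum L w a (r • b)
    rw [h (N+N2) (by omega), h2 (N+N2) (by omega), Finset.smul_sum]
    simp [TensorProduct.smul_tmul']
  have hT1m : ∀ a m m' b n, T1 L w a (m + m') b n = T1 L w a m b n + T1 L w a m' b n := by
    intro a m m' b n
    obtain ⟨N, h⟩ := T1_sum L w a b
    simp only [h N le_rfl, map_add, LinearMap.add_apply, TensorProduct.tmul_add, Finset.sum_add_distrib]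
  have hT1n : ∀ a m b n n', T1 L w a m b (n + n') = T1 L w a m b n + T1 L w a m b n' := by
    intro a m b n n'
    obtain ⟨N, h⟩ := T1_sum L w a b
    simp only [h N le_rfl, map_add, LinearMap.add_apply, TensorProduct.tmul_add, Finset.sum_add_distrib]
  have hT1ms : ∀ (r : F) a m b n, T1 L w a (r • m) b n = r • T1 L w a m b n := by
    intro r a m b n
    obtain ⟨N, h⟩ := T1_sum L w a b
    simp only [h N le_rfl, map_smul, LinearMap.smul_apply, TensorProduct.tmul_smul, Finset.smul_sum]
  have hT1ns : ∀ (r : F) a m b n, T1 L w a m b (r • n) = r • T1 L w a m b n := by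
    intro r a m b n
    obtain ⟨N, h⟩ := T1_sum L w a b
    simp only [h N le_rfl, map_smul, LinearMap.smul_apply, TensorProduct.tmul_smul, Finset.smul_sum]
  apply exists_bilin L.D E (fun a m b n => Submodule.Quotient.mk (T1 L w a m b n - a ⊗ₜ s n b m + b ⊗ₜ s m a n))
  · intro a a' m b n
    rw [← Submodule.Quotient.mk_add, hT1a]; congr 1
    simp only [map_add, LinearMap.add_apply, TensorProduct.tmul_add, TensorProduct.add_tmul]; abel
  · intro r a m b n
    rw [← Submodule.Quotient.mk_smul, hT1as]; congr 1
    simp only [map_smul, LinearMap.smul_apply, TensorProduct.tmul_smul, TensorProduct.smul_tmul', smul_add, smul_sub]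
  · intro a m m' b n
    rw [← Submodule.Quotient.mk_add, hT1m]; congr 1
    simp only [map_add, LinearMap.add_apply, TensorProduct.tmul_add, TensorProduct.add_tmul]; abel
  · intro r a m b n
    rw [← Submodule.Quotient.mk_smul, hT1ms]; congr 1
    simp only [map_smul, LinearMap.smul_apply, TensorProduct.tmul_smul, TensorProduct.smul_tmul', smul_add, smul_sub]
  · intro a m b b' n
    rw [← Submodule.Quotient.mk_add, hT1b]; congr 1
    simp only [map_add, LinearMap.add_apply, TensorProduct.tmul_add, TensorProduct.add_tmul]; abel
  · intro r a m b n
    rw [← Submodule.Quotient.mk_smul, hT1bs]; congr 1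
    simp only [map_smul, LinearMap.smul_apply, TensorProduct.tmul_smul, TensorProduct.smul_tmul', smul_add, smul_sub]
  · intro a m b n n'
    rw [← Submodule.Quotient.mk_add, hT1n]; congr 1
    simp only [map_add, LinearMap.add_apply, TensorProduct.tmul_add, TensorProduct.add_tmul]; abel
  · intro r a m b n
    rw [← Submodule.Quotient.mk_smul, hT1ns]; congr 1
    simp only [map_smul, LinearMap.smul_apply, TensorProduct.tmul_smul, TensorProduct.smul_tmul', smul_add, smul_sub]
  · intro a m b n
    rw [← Submodule.Quotient.mk_add, Submodule.Quotient.mk_eq_zero]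
    refine ⟨- (a ⊗ₜ s n b m), ?_⟩
    have e1 := k1 a m b n
    have e2 : b ⊗ₜ[F] s m (L.D a) n + b ⊗ₜ[F] s (E m) a n = 0 := by
      rw [← TensorProduct.tmul_add, t1, TensorProduct.tmul_zero]
    rw [map_neg, rel_tmul, hs2]
    rw [add_eq_zero_iff_eq_neg] at e1 e2
    rw [e1, e2]; abel
  · intro a m b n
    rw [← Submodule.Quotient.mk_add, Submodule.Quotient.mk_eq_zero]
    refine ⟨T1 L w a m b n + b ⊗ₜ s m a n, ?_⟩
    have e2 : a ⊗ₜ[F] s n (L.D b) m + a ⊗ₜ[F] s (E n) b m = 0 := by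
      rw [← TensorProduct.tmul_add, t1, TensorProduct.tmul_zero]
    rw [map_add, rel_tmul, hs2, ← k2]
    rw [add_eq_zero_iff_eq_neg] at e2
    rw [e2]; abel

lemma mk_pow (D : A →ₗ[F] A) (E : X →ₗ[F] X) (a : A) (i : ℕ) (m : X) :
    (Submodule.Quotient.mk (((D ^ i) a) ⊗ₜ[F] m) : (A ⊗[F] X) ⧸ LinearMap.range (rel D E))
      = Submodule.Quotient.mk (a ⊗ₜ[F] (((-E) ^ i) m)) := by
  induction i generalizing m with
  | zero => simp
  | succ i ih =>
    rw [pow_succ', Module.End.mul_apply, pow_succ, Module.End.mul_apply, ← ih, Submodule.Quotient.eq]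
    refine ⟨((D ^ i) a) ⊗ₜ[F] m, ?_⟩
    rw [rel_tmul, LinearMap.neg_apply, TensorProduct.tmul_neg, sub_neg_eq_add]

end Ops9
end LCC

namespace LCC
section Ops10
open scoped TensorProduct
variable (F : Type*) [Field F] [CharZero F] {A : Type*} [AddCommGroup A] [Module F A]
  {N : Type*} [CommRing N] [Algebra F N] {L : LCA F A}

/-- product of power series in coefficient form -/
noncomputable def conv : (ℕ → N) →ₗ[F] (ℕ → N) →ₗ[F] (ℕ → N) :=
  LinearMap.mk₂ F (fun m n k => ∑ i ∈ Finset.range (k+1), m i * n (k-i))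
    (fun m m' n => by funext k; simp [add_mul, Finset.sum_add_distrib])
    (fun r m n => by funext k; simp [Finset.smul_sum])
    (fun m n n' => by funext k; simp [mul_add, Finset.sum_add_distrib])
    (fun r m n => by funext k; simp [Finset.smul_sum])

lemma conv_apply (m n : ℕ → N) (k : ℕ) :
    conv F m n k = ∑ i ∈ Finset.range (k+1), m i * n (k-i) := rfl

lemma derX_apply (m : ℕ → N) (k : ℕ) : derX F m k = (k + 1 : F) • m (k+1) := rfl

lemma derX_conv (m n : ℕ → N) :
    derX F (conv F m n) = conv F (derX F m) n + conv F m (derX F n) := by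
  funext k
  rw [derX_apply, Pi.add_apply, conv_apply, conv_apply, conv_apply, Finset.smul_sum]
  have h : ∀ i ∈ Finset.range (k+1+1), ((k:F)+1) • (m i * n (k+1-i))
      = ((i:F) • m i) * n (k+1-i) + m i * (((k+1-i : ℕ) : F) • n (k+1-i)) := by
    intro i hi
    have hi' : i ≤ k+1 := by simpa [Nat.lt_succ_iff] using hi
    rw [smul_mul_assoc, mul_smul_comm, ← add_smul]
    congr 1
    push_cast [Nat.cast_sub hi']; ring
  rw [Finset.sum_congr rfl h, Finset.sum_add_distrib]
  congr 1
  · rw [Finset.sum_range_succ']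
    simp [derX_apply]
  · rw [Finset.sum_range_succ]
    simp only [Nat.sub_self, Nat.cast_zero, zero_smul, mul_zero, add_zero]
    refine Finset.sum_congr rfl fun i hi => ?_
    have hi' : i ≤ k := by simpa [Nat.lt_succ_iff] using hi
    rw [derX_apply, show k + 1 - i = (k - i) + 1 by omega]
    push_cast; rfl

lemma derX_pow (m : ℕ → N) (p k : ℕ) :
    ((derX F) ^ p) m k = ((k+p).descFactorial p) • m (k+p) := by
  induction p generalizing m with
  | zero => simp
  | succ p ih =>
    rw [pow_succ, Module.End.mul_apply, ih, derX_apply]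
    rw [show k + (p+1) = k + p + 1 by omega, Nat.succ_descFactorial_succ, mul_comm, mul_smul]
    congr 1
    rw [← Nat.cast_smul_eq_nsmul F]; push_cast; rfl

/-- weights of the first term for power series -/
noncomputable def wG (p : ℕ) : (ℕ → N) →ₗ[F] (ℕ → N) →ₗ[F] (ℕ → N) := (conv F).comp ((derX F) ^ p)

lemma wG_apply (p : ℕ) (m n : ℕ → N) : wG F p m n = conv F (((derX F)^p) m) n := rfl

lemma wG_eq (p : ℕ) (m n : ℕ → N) : wG F p m n = g1ser m n p := by
  funext k
  rw [wG_apply, conv_apply]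
  simp only [derX_pow]; rfl

/-- weights of the first term for C1 -/
noncomputable def wC (R : LCAMod F L N) (p : ℕ) : N →ₗ[F] N →ₗ[F] N := (LinearMap.mul F N).comp (R.D ^ p)

lemma wC_apply (R : LCAMod F L N) (p : ℕ) (m n : N) : wC F R p m n = (R.D ^ p) m * n := rfl

lemma S0_sum (R : LCAMod F L N) (a : A) (n : N) : ∃ P, ∀ Q, P ≤ Q → ∀ m : ℕ → N,
    ∑ᶠ q, m q * R.act a n q = ∑ q ∈ Finset.range Q, m q * R.act a n q := by
  obtain ⟨P, hP⟩ := act_bound R a n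
  refine ⟨P, fun Q hQ m => finsum_range _ _ fun p hp => ?_⟩
  rw [hP p (by omega), mul_zero]

/-- the pairing operator -/
noncomputable def S0 (R : LCAMod F L N) : (ℕ → N) →ₗ[F] A →ₗ[F] N →ₗ[F] N :=
  LinearMap.mk₂ F (fun m a =>
    { toFun := fun n => ∑ᶠ q, m q * R.act a n q
      map_add' := by
        intro n n'
        obtain ⟨P1, h1⟩ := S0_sum F R a n
        obtain ⟨P2, h2⟩ := S0_sum F R a n'
        obtain ⟨P3, h3⟩ := S0_sum F R a (n+n')
        rw [h1 (P1+P2+P3) (by omega), h2 (P1+P2+P3) (by omega), h3 (P1+P2+P3) (by omega)]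
        simp [mul_add, Finset.sum_add_distrib]
      map_smul' := by
        intro r n
        obtain ⟨P1, h1⟩ := S0_sum F R a n
        obtain ⟨P3, h3⟩ := S0_sum F R a (r • n)
        rw [h1 (P1+P3) (by omega), h3 (P1+P3) (by omega)]
        simp [Finset.smul_sum] })
    (by
      intro m m' a
      ext n
      obtain ⟨P1, h1⟩ := S0_sum F R a n
      simp only [LinearMap.coe_mk, AddHom.coe_mk, LinearMap.add_apply, h1 P1 le_rfl]
      simp [add_mul, Finset.sum_add_distrib])
    (by
      intro r m a
      ext n
      obtain ⟨P1, h1⟩ := S0_sum F R a n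
      simp only [LinearMap.coe_mk, AddHom.coe_mk, LinearMap.smul_apply, h1 P1 le_rfl]
      simp [Finset.smul_sum])
    (by
      intro m a a'
      ext n
      obtain ⟨P1, h1⟩ := S0_sum F R a n
      obtain ⟨P2, h2⟩ := S0_sum F R a' n
      obtain ⟨P3, h3⟩ := S0_sum F R (a+a') n
      simp only [LinearMap.coe_mk, AddHom.coe_mk, LinearMap.add_apply,
        h1 (P1+P2+P3) (by omega), h2 (P1+P2+P3) (by omega), h3 (P1+P2+P3) (by omega)]
      simp [mul_add, Finset.sum_add_distrib])
    (by
      intro r m a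
      ext n
      obtain ⟨P1, h1⟩ := S0_sum F R a n
      obtain ⟨P3, h3⟩ := S0_sum F R (r • a) n
      simp only [LinearMap.coe_mk, AddHom.coe_mk, LinearMap.smul_apply,
        h1 (P1+P3) (by omega), h3 (P1+P3) (by omega)]
      simp [Finset.smul_sum])

lemma S0_apply (R : LCAMod F L N) (m : ℕ → N) (a : A) (n : N) :
    S0 F R m a n = ∑ᶠ q, m q * R.act a n q := rfl

lemma S0_shift (R : LCAMod F L N) (m : ℕ → N) (a : A) (n : N) :
    S0 F R (fun q => m (q+1)) a n = - S0 F R m (L.D a) n := by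
  obtain ⟨P1, h1⟩ := S0_sum F R a n
  obtain ⟨P3, h3⟩ := S0_sum F R (L.D a) n
  rw [S0_apply, S0_apply, h1 (P1+P3) (by omega), h3 (P1+P3+1) (by omega), Finset.sum_range_succ']
  simp [R.sesq_left, R.sesq_left_zero]

/-- all derivatives -/
noncomputable def powD (R : LCAMod F L N) : N →ₗ[F] (ℕ → N) := LinearMap.pi fun q => R.D ^ q

lemma S0_D (R : LCAMod F L N) (hD : ∀ m n : N, R.D (m * n) = R.D m * n + m * R.D n)
    (m : N) (a : A) (n : N) :
    R.D (S0 F R (powD F R m) a n) = S0 F R (powD F R m) a (R.D n) := by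
  obtain ⟨P1, h1⟩ := S0_sum F R a n
  obtain ⟨P3, h3⟩ := S0_sum F R a (R.D n)
  obtain ⟨P, hP⟩ := act_bound R a n
  rw [S0_apply, S0_apply, h1 (P1+P3+P+1) (by omega), h3 (P1+P3+P+1) (by omega), map_sum]
  simp only [hD, R.sesq_right, mul_add, Finset.sum_add_distrib]
  rw [add_comm, add_right_inj]
  symm
  rw [Finset.sum_range_succ', Finset.sum_range_succ, hP (P1+P3+P) (by omega)]
  simp [powD, pow_succ']

/-- second operation for C1 -/
noncomputable def sC (R : LCAMod F L N) : N →ₗ[F] A →ₗ[F] N →ₗ[F] N := (S0 F R).comp (powD F R)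

/-- rescaling by factorials -/
noncomputable def facQ : (ℕ → N) →ₗ[F] (ℕ → N) where
  toFun m := fun q => (q.factorial : F) • m q
  map_add' := by intro x y; funext k; simp
  map_smul' := by intro r x; funext k; simp; rw [smul_comm]

/-- second operation for power series -/
noncomputable def sG (R : LCAMod F L N) : (ℕ → N) →ₗ[F] A →ₗ[F] (ℕ → N) →ₗ[F] (ℕ → N) :=
  LinearMap.mk₂ F (fun m a => (S0 F R (facQ F m) a).compLeft ℕ)
    (by intros; ext; simp) (by intros; ext; simp) (by intros; ext; simp) (by intros; ext; simp)

lemma sG_apply (R : LCAMod F L N) (m : ℕ → N) (a : A) (n : ℕ → N) (k : ℕ) :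
    sG F R m a n k = S0 F R (facQ F m) a (n k) := rfl

lemma sG_eq (R : LCAMod F L N) (m : ℕ → N) (a : A) (n : ℕ → N) :
    sG F R m a n = pairSer F R m a n := by
  funext k
  rw [sG_apply, S0_apply]
  simp [pairSer, facQ]

theorem exists_BrC (R : LCAMod F L N) (hD : ∀ m n : N, R.D (m * n) = R.D m * n + m * R.D n) :
    ∃ f : C1Q F L R →ₗ[F] C1Q F L R →ₗ[F] C1Q F L R, ∀ a m b n,
      f (Submodule.Quotient.mk (a ⊗ₜ m)) (Submodule.Quotient.mk (b ⊗ₜ n))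
        = Submodule.Quotient.mk (T1 L (wC F R) a m b n - a ⊗ₜ sC F R n b m + b ⊗ₜ sC F R m a n) := by
  apply exists_bracket L R.D (wC F R) (sC F R)
  · intro p m n; rw [wC_apply, wC_apply, pow_succ, Module.End.mul_apply]
  · intro p m n; simp only [wC_apply, hD, pow_succ', Module.End.mul_apply]
  · intro m a n
    simp only [sC, LinearMap.comp_apply]
    rw [← S0_shift]
    congr 3
  · intro m a n
    exact S0_D F R hD m a n

theorem exists_BrG (R : LCAMod F L N) :
    ∃ f : Gamma1 F L N →ₗ[F] Gamma1 F L N →ₗ[F] Gamma1 F L N, ∀ a m b n,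
      f (Submodule.Quotient.mk (a ⊗ₜ m)) (Submodule.Quotient.mk (b ⊗ₜ n))
        = Submodule.Quotient.mk (T1 L (wG F) a m b n - a ⊗ₜ sG F R n b m + b ⊗ₜ sG F R m a n) := by
  apply exists_bracket L (derX F) (wG F) (sG F R)
  · intro p m n; rw [wG_apply, wG_apply, pow_succ, Module.End.mul_apply]
  · intro p m n; simp only [wG_apply, derX_conv, pow_succ', Module.End.mul_apply]
  · intro m a n
    funext k
    rw [Pi.neg_apply, sG_apply, sG_apply, ← S0_shift]
    congr 3
    funext q
    simp only [facQ, LinearMap.coe_mk, AddHom.coe_mk, derX_apply, smul_smul, Nat.factorial_succ]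
    push_cast; rw [mul_comm]
  · intro m a n
    funext k
    simp [derX_apply, sG_apply]

lemma brkGen_eq (R : LCAMod F L N) (a : A) (m : ℕ → N) (b : A) (n : ℕ → N) :
    T1 L (wG F) a m b n - a ⊗ₜ sG F R n b m + b ⊗ₜ sG F R m a n = brkGen F R a m b n := by
  simp only [sG_eq, T1, wG_eq, brkGen]

lemma brkC1Gen_eq (R : LCAMod F L N) (a : A) (m : N) (b : A) (n : N) :
    T1 L (wC F R) a m b n - a ⊗ₜ sC F R n b m + b ⊗ₜ sC F R m a n = brkC1Gen F R a m b n := by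
  have h : ∀ (m : N) (a : A) (n : N), sC F R m a n = ∑ᶠ q : ℕ, R.act a n q * ((R.D ^ q) m) := by
    intro m a n
    simp only [sC, LinearMap.comp_apply, S0_apply, powD, LinearMap.pi_apply, mul_comm]
  rw [h, h, brkC1Gen, T1, sub_add_eq_add_sub]; rfl

lemma exp_apply (R : LCAMod F L N) (m : N) (k : ℕ) :
    expSer F R m k = (k.factorial : F)⁻¹ • ((R.D ^ k) m) := rfl

lemma coefD_exp (R : LCAMod F L N) (m : N) : coefD F R (expSer F R m) = expSer F R (R.D m) := by
  funext k
  change R.D (expSer F R m k) = _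
  rw [exp_apply, exp_apply, map_smul, ← Module.End.mul_apply, ← Module.End.mul_apply, ← pow_succ, pow_succ']

lemma derX_exp (R : LCAMod F L N) (m : N) : derX F (expSer F R m) = expSer F R (R.D m) := by
  funext k
  rw [derX_apply, exp_apply, exp_apply, ← Module.End.mul_apply, ← pow_succ, smul_smul]
  congr 1
  have h1 : (k:F) + 1 ≠ 0 := Nat.cast_add_one_ne_zero k
  have h2 : (k.factorial : F) ≠ 0 := Nat.cast_ne_zero.2 k.factorial_ne_zero
  rw [Nat.factorial_succ]; push_cast; field_simp

lemma exp_unique (R : LCAMod F L N) (f : ℕ → N) (h : derX F f = coefD F R f) : f = expSer F R (f 0) := by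
  funext k
  induction k with
  | zero => simp [exp_apply]
  | succ k ih =>
    have h1 : (k:F) + 1 ≠ 0 := Nat.cast_add_one_ne_zero k
    have e1 := congrFun h k
    have e2 := congrFun ((derX_exp F R (f 0)).trans (coefD_exp F R (f 0)).symm) k
    rw [derX_apply] at e1 e2
    change _ = R.D (f k) at e1
    change _ = R.D (expSer F R (f 0) k) at e2
    rw [← ih, ← e1] at e2
    exact (smul_right_injective N h1 e2).symm

lemma exp_mul (R : LCAMod F L N) (hD : ∀ m n : N, R.D (m * n) = R.D m * n + m * R.D n) (m n : N) :
    expSer F R (m * n) = conv F (expSer F R m) (expSer F R n) := by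
  have h := exp_unique F R (conv F (expSer F R m) (expSer F R n)) (by
    rw [derX_conv, derX_exp, derX_exp, ← coefD_exp, ← coefD_exp]
    funext k
    simp only [Pi.add_apply, conv_apply, coefD, LinearMap.coe_mk, AddHom.coe_mk, map_sum, hD,
      Finset.sum_add_distrib])
  rw [h]; congr 1; simp [conv_apply, exp_apply]

lemma exp_pow (R : LCAMod F L N) (p : ℕ) (m : N) :
    expSer F R ((R.D ^ p) m) = ((derX F) ^ p) (expSer F R m) := by
  induction p with
  | zero => simp
  | succ p ih => rw [pow_succ', Module.End.mul_apply, ← derX_exp, ih, pow_succ', Module.End.mul_apply]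

lemma exp_s (R : LCAMod F L N) (hD : ∀ m n : N, R.D (m * n) = R.D m * n + m * R.D n) (m : N) (a : A) (n : N) :
    expSer F R (sC F R m a n) = sG F R (expSer F R m) a (expSer F R n) := by
  have h0 : facQ F (expSer F R m) = powD F R m := by
    funext q
    have h2 : (q.factorial : F) ≠ 0 := Nat.cast_ne_zero.2 q.factorial_ne_zero
    simp [facQ, powD, exp_apply, smul_smul, h2]
  have h := exp_unique F R (sG F R (expSer F R m) a (expSer F R n)) (by
    have e : derX F (expSer F R n) = coefD F R (expSer F R n) := by rw [derX_exp, coefD_exp]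
    funext k
    change _ = R.D (sG F R (expSer F R m) a (expSer F R n) k)
    rw [sG_apply, h0, S0_D F R hD]
    change _ = S0 F R _ a (coefD F R (expSer F R n) k)
    rw [← e, derX_apply, derX_apply, sG_apply, h0, map_smul])
  rw [h]; congr 1
  rw [sG_apply, h0]; simp [sC, exp_apply]

lemma chi_rel (R : LCAMod F L N) (t : A ⊗[F] N) : chi1Raw F R (c1Rel F L R t) = chainRel F L N (chi1Raw F R t) := by
  induction t with
  | zero => simp
  | add x y hx hy => simp only [map_add, hx, hy]
  | tmul a m => simp [chi1Raw, c1Rel, chainRel, derX_exp]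

theorem exists_chi (R : LCAMod F L N) : ∃ chi : C1Q F L R →ₗ[F] Gamma1 F L N,
    ∀ t, chi (Submodule.Quotient.mk t) = Submodule.Quotient.mk (chi1Raw F R t) := by
  refine ⟨Submodule.mapQ _ _ (chi1Raw F R) ?_, fun t => rfl⟩
  rintro _ ⟨t, rfl⟩
  exact ⟨chi1Raw F R t, (chi_rel F R t).symm⟩

lemma chi_partial (R : LCAMod F L N) (t : A ⊗[F] N) : chainPartial F R (chi1Raw F R t) = 0 := by
  induction t with
  | zero => simp
  | add x y hx hy => simp only [map_add, hx, hy, add_zero]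
  | tmul a m => simp [chi1Raw, chainPartial, derX_exp, coefD_exp]

lemma chi_T (R : LCAMod F L N) (hD : ∀ m n : N, R.D (m * n) = R.D m * n + m * R.D n) (a : A) (m : N) (b : A) (n : N) :
    chi1Raw F R (T1 L (wC F R) a m b n - a ⊗ₜ sC F R n b m + b ⊗ₜ sC F R m a n)
      = T1 L (wG F) a (expSer F R m) b (expSer F R n) - a ⊗ₜ sG F R (expSer F R n) b (expSer F R m)
        + b ⊗ₜ sG F R (expSer F R m) a (expSer F R n) := by
  obtain ⟨N1, h1⟩ := T1_sum L (wC F R) a b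
  obtain ⟨N2, h2⟩ := T1_sum L (wG F (N := N)) a b
  rw [map_add, map_sub, h1 (N1+N2) (by omega), h2 (N1+N2) (by omega), map_sum]
  simp only [chi1Raw, LinearMap.lTensor_tmul, exp_s F R hD, wC_apply, wG_apply, exp_mul F R hD, exp_pow]

theorem chi_hom (R : LCAMod F L N) (hD : ∀ m n : N, R.D (m * n) = R.D m * n + m * R.D n)
    (BrC : C1Q F L R →ₗ[F] C1Q F L R →ₗ[F] C1Q F L R)
    (BrG : Gamma1 F L N →ₗ[F] Gamma1 F L N →ₗ[F] Gamma1 F L N)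
    (chi : C1Q F L R →ₗ[F] Gamma1 F L N)
    (hC : ∀ a m b n,
      BrC (Submodule.Quotient.mk (a ⊗ₜ m)) (Submodule.Quotient.mk (b ⊗ₜ n))
        = Submodule.Quotient.mk (T1 L (wC F R) a m b n - a ⊗ₜ sC F R n b m + b ⊗ₜ sC F R m a n))
    (hG : ∀ a m b n,
      BrG (Submodule.Quotient.mk (a ⊗ₜ m)) (Submodule.Quotient.mk (b ⊗ₜ n))
        = Submodule.Quotient.mk (T1 L (wG F) a m b n - a ⊗ₜ sG F R n b m + b ⊗ₜ sG F R m a n))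
    (hchi : ∀ t, chi (Submodule.Quotient.mk t) = Submodule.Quotient.mk (chi1Raw F R t)) :
    ∀ x y, chi (BrC x y) = BrG (chi x) (chi y) := by
  have h : BrC.compr₂ chi = (BrG.compl₁₂ chi chi) := by
    refine quot_ext L.D R.D fun a m => ?_
    refine quot_ext L.D R.D fun b n => ?_
    change chi (BrC _ _) = BrG (chi _) (chi _)
    erw [hC, hchi, hchi, hchi, chi_T F R hD]
    erw [hG]
    rfl
  intro x y
  exact LinearMap.congr_fun (LinearMap.congr_fun h x) y

end Ops10
end LCC

namespace LCC
section Ops11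
open scoped TensorProduct
variable {F : Type*} [Field F] {A X Y : Type*} [AddCommGroup A] [Module F A]
  [AddCommGroup X] [Module F X] [AddCommGroup Y] [Module F Y] {L : LCA F A}

/-- normal form operator -/
noncomputable def nf (pi : A →ₗ[F] (ℕ →₀ A)) (E : X →ₗ[F] X) : (A ⊗[F] X) →ₗ[F] (A ⊗[F] X) :=
  TensorProduct.lift
    ((Finsupp.lsum F (fun n => (TensorProduct.mk F A X).compl₂ ((-E) ^ n))).comp pi)

lemma nf_tmul (pi : A →ₗ[F] (ℕ →₀ A)) (E : X →ₗ[F] X) (a : A) (m : X) :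
    nf pi E (a ⊗ₜ m) = (pi a).sum fun n u => u ⊗ₜ[F] (((-E) ^ n) m) := by
  simp [nf, Finsupp.sum, LinearMap.sum_apply]

lemma nf_rel (pi : A →ₗ[F] (ℕ →₀ A)) (h1 : ∀ a n, pi (L.D a) (n+1) = pi a n) (h2 : ∀ a, pi (L.D a) 0 = 0)
    (E : X →ₗ[F] X) (t : A ⊗[F] X) : nf pi E (rel L.D E t) = 0 := by
  induction t with
  | zero => simp
  | add x y hx hy => simp only [map_add, hx, hy, add_zero]
  | tmul a m =>
    have h : pi (L.D a) = Finsupp.mapDomain (· + 1) (pi a) := by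
      ext n
      cases n with
      | zero => rw [h2, Finsupp.mapDomain_notin_range]; simp
      | succ n => rw [h1, Finsupp.mapDomain_apply (add_left_injective 1)]
    rw [rel_tmul, map_add, nf_tmul, nf_tmul, h, Finsupp.sum_mapDomain_index (by simp)
      (fun n u v => TensorProduct.add_tmul _ _ _)]
    simp only [pow_succ, Module.End.mul_apply, LinearMap.neg_apply, map_neg, TensorProduct.tmul_neg]
    simp [Finsupp.sum]

lemma nf_nat (pi : A →ₗ[F] (ℕ →₀ A)) (E : X →ₗ[F] X) (E' : Y →ₗ[F] Y) (G : X →ₗ[F] Y)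
    (h : ∀ x, G (E x) = E' (G x)) (t : A ⊗[F] X) :
    LinearMap.lTensor A G (nf pi E t) = nf pi E' (LinearMap.lTensor A G t) := by
  have hn : ∀ n x, G (((-E)^n) x) = ((-E')^n) (G x) := by
    intro n
    induction n with
    | zero => simp
    | succ n ih => intro x; rw [pow_succ, Module.End.mul_apply, ih, pow_succ, Module.End.mul_apply]; simp [h]
  induction t with
  | zero => simp
  | add x y hx hy => simp only [map_add, hx, hy]
  | tmul a m =>
    rw [LinearMap.lTensor_tmul, nf_tmul, nf_tmul]
    simp [Finsupp.sum, map_sum, hn]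

lemma nf_span (pi : A →ₗ[F] (ℕ →₀ A))
    (h : ∀ a, ∃ t, IsTor L t ∧ a = t + (pi a).sum fun n u => (L.D ^ n) u)
    (E : X →ₗ[F] X) (t : A ⊗[F] X) :
    (Submodule.Quotient.mk t - Submodule.Quotient.mk (nf pi E t) : (A ⊗[F] X) ⧸ LinearMap.range (rel L.D E))
      ∈ Submodule.span F {z | ∃ (t : A) (m : X), IsTor L t ∧ z = Submodule.Quotient.mk (t ⊗ₜ[F] m)} := by
  induction t with
  | zero => simp
  | add x y hx hy =>
    have := Submodule.add_mem _ hx hy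
    rw [map_add, Submodule.Quotient.mk_add, Submodule.Quotient.mk_add]
    convert this using 1; abel
  | tmul a m =>
    obtain ⟨t, ht, ha⟩ := h a
    apply Submodule.subset_span
    refine ⟨t, m, ht, ?_⟩
    rw [sub_eq_iff_eq_add, nf_tmul]
    have e : (Submodule.Quotient.mk ((pi a).sum fun n u => u ⊗ₜ[F] (((-E) ^ n) m)) : (A ⊗[F] X) ⧸ LinearMap.range (rel L.D E))
        = Submodule.Quotient.mk (((pi a).sum fun n u => (L.D ^ n) u) ⊗ₜ[F] m) := by
      simp only [Finsupp.sum, TensorProduct.sum_tmul]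
      simp only [← Submodule.mkQ_apply, map_sum]
      refine Finset.sum_congr rfl fun n _ => ?_
      exact (mk_pow L.D E _ n m).symm
    rw [e, ← Submodule.Quotient.mk_add, ← TensorProduct.add_tmul, ← ha]

lemma mk_aeval (D : A →ₗ[F] A) (E : X →ₗ[F] X) (t : A) (p : Polynomial F) (f : X) :
    (Submodule.Quotient.mk (t ⊗ₜ[F] (Polynomial.aeval (-E) p f)) : (A ⊗[F] X) ⧸ LinearMap.range (rel D E))
      = Submodule.Quotient.mk ((Polynomial.aeval D p t) ⊗ₜ[F] f) := by
  rw [Polynomial.aeval_eq_sum_range, Polynomial.aeval_eq_sum_range, LinearMap.sum_apply, LinearMap.sum_apply,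
    TensorProduct.sum_tmul, TensorProduct.tmul_sum]
  simp only [← Submodule.mkQ_apply, map_sum]
  refine Finset.sum_congr rfl fun i _ => ?_
  rw [LinearMap.smul_apply, LinearMap.smul_apply, TensorProduct.tmul_smul, ← TensorProduct.smul_tmul', map_smul, map_smul]
  congr 1
  exact (mk_pow D E t i f).symm

lemma neg_pow_app (E : X →ₗ[F] X) (i : ℕ) (f : X) : ((-E)^i) f = ((-1 : F)^i) • (E^i) f := by
  induction i with
  | zero => simp
  | succ i ih =>
    rw [pow_succ', Module.End.mul_apply, ih, pow_succ' E, Module.End.mul_apply, map_smul, LinearMap.neg_apply, pow_succ]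
    simp

/-- solution of a linear recursion -/
noncomputable def solveRec (c : ℕ → F) (d : ℕ) (h : ℕ → X) (k : ℕ) : X :=
  if hk : k < d then 0 else (c d)⁻¹ • (h (k-d) - ∑ i : Fin d, c i • solveRec c d h (k - d + i))
termination_by k
decreasing_by have := i.2; omega

lemma solve_spec (c : ℕ → F) (d : ℕ) (hd : c d ≠ 0) (h : ℕ → X) (k : ℕ) :
    ∑ i ∈ Finset.range (d+1), c i • solveRec c d h (k+i) = h k := by
  rw [Finset.sum_range_succ, solveRec.eq_1 c d h (k+d)]
  simp [smul_smul, hd, Finset.sum_range]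

variable [CharZero F] {N : Type*} [CommRing N] [Algebra F N]

lemma derX_fac (f : ℕ → N) (i k : ℕ) :
    (((-derX F)^i) f) k = ((k.factorial : F)⁻¹ * (-1)^i) • (((k+i).factorial : F) • f (k+i)) := by
  rw [neg_pow_app (X := ℕ → N) (derX F) i f, Pi.smul_apply, derX_pow, ← Nat.cast_smul_eq_nsmul F, smul_smul, smul_smul]
  congr 1
  have h2 : (k.factorial : F) ≠ 0 := Nat.cast_ne_zero.2 k.factorial_ne_zero
  have h3 := Nat.factorial_mul_descFactorial (Nat.le_add_left i k)
  rw [Nat.add_sub_cancel] at h3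
  rw [← h3]; push_cast; field_simp

lemma derX_surj (p : Polynomial F) (hp : p ≠ 0) (n : ℕ → N) :
    ∃ f, Polynomial.aeval (-derX F (N := N)) p f = n := by
  let c : ℕ → F := fun i => p.coeff i * (-1)^i
  have hd : c p.natDegree ≠ 0 := by
    refine mul_ne_zero ?_ (by simp)
    exact Polynomial.leadingCoeff_ne_zero.2 hp
  let g := solveRec c p.natDegree (fun k => (k.factorial : F) • n k)
  refine ⟨fun k => (k.factorial : F)⁻¹ • g k, ?_⟩
  funext k
  have h2 : ∀ k : ℕ, (k.factorial : F) ≠ 0 := fun k => Nat.cast_ne_zero.2 k.factorial_ne_zero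
  rw [Polynomial.aeval_eq_sum_range, LinearMap.sum_apply, Finset.sum_apply]
  have e0 : ∀ (i : ℕ) (f : ℕ → N), (p.coeff i • (-derX F (N := N))^i) f k
      = p.coeff i • (((k.factorial : F)⁻¹ * (-1)^i) • (((k+i).factorial : F) • f (k+i))) := by
    intro i f
    rw [← derX_fac]; rfl
  rw [Finset.sum_congr rfl fun i _ => e0 i _]
  have e := solve_spec c p.natDegree hd (fun k => (k.factorial : F) • n k) k
  have e2 : n k = (k.factorial : F)⁻¹ • ((k.factorial : F) • n k) := by rw [smul_smul, inv_mul_cancel₀ (h2 k), one_smul]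
  rw [e2, ← e, Finset.smul_sum]
  refine Finset.sum_congr rfl fun i _ => ?_
  simp only [smul_smul]
  have := h2 (k+i)
  refine congrArg (· • g (k+i)) ?_
  change _ = _ * (p.coeff i * (-1)^i)
  field_simp

lemma tor_mk (t : A) (ht : IsTor L t) (n : ℕ → N) :
    (Submodule.Quotient.mk (t ⊗ₜ[F] n) : (A ⊗[F] (ℕ → N)) ⧸ LinearMap.range (rel (X := ℕ → N) L.D (derX F))) = 0 := by
  obtain ⟨p, hp, hpt⟩ := ht
  obtain ⟨f, rfl⟩ := derX_surj p hp n
  rw [mk_aeval (X := ℕ → N), hpt, TensorProduct.zero_tmul, Submodule.Quotient.mk_zero]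

lemma chainRel_eq : chainRel F L N = rel L.D (derX F) := rfl

lemma c1Rel_eq (R : LCAMod F L N) : c1Rel F L R = rel L.D R.D := rfl

lemma nfG_rel (pi : A →ₗ[F] (ℕ →₀ A)) (h1 : ∀ a n, pi (L.D a) (n+1) = pi a n) (h2 : ∀ a, pi (L.D a) 0 = 0)
    (t : A ⊗[F] (ℕ → N)) : nf (X := ℕ → N) pi (derX F) (chainRel F L N t) = 0 :=
  nf_rel (X := ℕ → N) pi h1 h2 (derX F) t

lemma span_zero : Submodule.span F {z : (A ⊗[F] (ℕ → N)) ⧸ LinearMap.range (rel (X := ℕ → N) L.D (derX F)) |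
    ∃ (t : A) (m : ℕ → N), IsTor L t ∧ z = Submodule.Quotient.mk (t ⊗ₜ[F] m)} = ⊥ := by
  rw [Submodule.span_eq_bot]
  rintro _ ⟨t, m, ht, rfl⟩
  exact tor_mk t ht m

lemma nf_mk (pi : A →ₗ[F] (ℕ →₀ A))
    (h : ∀ a, ∃ t, IsTor L t ∧ a = t + (pi a).sum fun n u => (L.D ^ n) u) (t : A ⊗[F] (ℕ → N)) :
    (Submodule.Quotient.mk (nf (X := ℕ → N) pi (derX F) t) : Gamma1 F L N) = Submodule.Quotient.mk t := by
  have e := nf_span (X := ℕ → N) pi h (derX F) t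
  rw [span_zero, Submodule.mem_bot, sub_eq_zero] at e
  exact e.symm

lemma chi_inj (R : LCAMod F L N) : Function.Injective (chi1Raw F R) := by
  have h : (LinearMap.lTensor A (LinearMap.proj (R := F) (φ := fun _ : ℕ => N) 0)) ∘ₗ chi1Raw F R = LinearMap.id := by
    apply TensorProduct.ext'
    intro a m
    simp [chi1Raw, exp_apply]
  exact Function.LeftInverse.injective (g := LinearMap.lTensor A (LinearMap.proj (R := F) (φ := fun _ : ℕ => N) 0))
    fun t => LinearMap.congr_fun h t

theorem chi_ker (hdec : Decomposes L) (R : LCAMod F L N) (chi : C1Q F L R →ₗ[F] Gamma1 F L N)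
    (hchi : ∀ t, chi (Submodule.Quotient.mk t) = Submodule.Quotient.mk (chi1Raw F R t)) (x : C1Q F L R) :
    chi x = 0 ↔ x ∈ Submodule.span F
            {z : C1Q F L R | ∃ (t : A) (m : N), IsTor L t ∧
              z = Submodule.Quotient.mk (t ⊗ₜ[F] m)} := by
  constructor
  · intro hx
    obtain ⟨pi, hp1, hp2, hp3, hp4, hp5⟩ := decomp_pi hdec
    obtain ⟨t, rfl⟩ := Submodule.Quotient.mk_surjective _ x
    rw [hchi, Submodule.Quotient.mk_eq_zero] at hx
    obtain ⟨s, hs⟩ := hx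
    have e1 : nf (X := ℕ → N) pi (derX F) (chi1Raw F R t) = 0 := by
      rw [← hs]; exact nfG_rel pi hp3 hp4 s
    have e2 : chi1Raw F R (nf (X := N) pi R.D t) = nf (X := ℕ → N) pi (derX F) (chi1Raw F R t) :=
      nf_nat (X := N) (Y := ℕ → N) pi R.D (derX F) (expSer F R) (fun x => (derX_exp F R x).symm) t
    have e3 : nf (X := N) pi R.D t = 0 := chi_inj R (by rw [e2, e1, map_zero])
    have e4 := nf_span (X := N) pi hp1 R.D t
    rw [e3, Submodule.Quotient.mk_zero, sub_zero] at e4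
    exact e4
  · intro hx
    have : Submodule.span F {z : C1Q F L R | ∃ (t : A) (m : N), IsTor L t ∧
              z = Submodule.Quotient.mk (t ⊗ₜ[F] m)} ≤ LinearMap.ker chi := by
      rw [Submodule.span_le]
      rintro _ ⟨t, m, ht, rfl⟩
      rw [SetLike.mem_coe, LinearMap.mem_ker, hchi]
      exact tor_mk t ht _
    exact this hx

theorem chi_surj (hdec : Decomposes L) (R : LCAMod F L N) (chi : C1Q F L R →ₗ[F] Gamma1 F L N)
    (hchi : ∀ t, chi (Submodule.Quotient.mk t) = Submodule.Quotient.mk (chi1Raw F R t))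
    (DQ : Gamma1 F L N →ₗ[F] Gamma1 F L N)
    (hDQ : ∀ t, DQ (Submodule.Quotient.mk t) = Submodule.Quotient.mk (chainPartial F R t))
    (z : Gamma1 F L N) (hz : DQ z = 0) : ∃ x, chi x = z := by
  obtain ⟨pi, hp1, hp2, hp3, hp4, hp5⟩ := decomp_pi hdec
  obtain ⟨t, rfl⟩ := Submodule.Quotient.mk_surjective _ z
  rw [hDQ, Submodule.Quotient.mk_eq_zero] at hz
  obtain ⟨s, hs⟩ := hz
  have e1 : nf (X := ℕ → N) pi (derX F) (chainPartial F R t) = 0 := by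
    rw [← hs]; exact nfG_rel pi hp3 hp4 s
  have e2 : chainPartial F R (nf (X := ℕ → N) pi (derX F) t) = nf (X := ℕ → N) pi (derX F) (chainPartial F R t) :=
    nf_nat (X := ℕ → N) (Y := ℕ → N) pi (derX F) (derX F) (coefD F R - derX F (N := N)) (fun x => by
      rw [LinearMap.sub_apply, LinearMap.sub_apply, map_sub]
      congr 1
      funext k
      simp [coefD, derX_apply]) t
  have hex : Function.Exact (expSer F R) (coefD F R - derX F (N := N)) := by
    intro f
    constructor
    · intro hf
      rw [LinearMap.sub_apply, sub_eq_zero] at hf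
      exact ⟨f 0, (exp_unique F R f hf.symm).symm⟩
    · rintro ⟨m, rfl⟩
      rw [LinearMap.sub_apply, coefD_exp, derX_exp, sub_self]
  obtain ⟨y, hy⟩ := (Module.Flat.lTensor_exact A hex (nf (X := ℕ → N) pi (derX F) t)).1 (by
    change chainPartial F R _ = 0
    rw [e2, e1])
  refine ⟨Submodule.Quotient.mk y, ?_⟩
  rw [hchi, ← nf_mk pi hp1 t]
  congr 1

end Ops11
end LCC

set_option maxHeartbeats 1000000

open scoped TensorProduct in
open LCC in
/-- **Statement 17.** Let `A` be a Lie conformal algebra and `M` an `A`-module with a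
commutative associative product on which `∂^M` and all `a_λ` act by derivations.
The maps `ψ^• : Γ^•(A,M) → C̄^•(A,M) ⊆ C^•(A,M)` and `χ₁ : C₁(A,M) → Γ₁(A,M)` define
a morphism of `𝔤`-complexes: `χ₁` is a Lie algebra homomorphism `ΠC₁ → ΠΓ₁` (which,
when `A` decomposes, factors through a Lie algebra isomorphism `ΠC̄₁ ≅ ΠΓ₁`), and `ψ`
intertwines `δ` with `d`, the contractions, and the Lie derivatives.  If `A`
decomposes as an `F[∂]`-module into its torsion plus a free submodule, then
`ψ^• : Γ^•(A,M) → C̄^•(A,M)` is an isomorphism of `ΠC₁ ≅ ΠΓ₁`-complexes. -/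
theorem psi_chi_morphism_of_g_complexes
    {F : Type*} [Field F] [CharZero F]
    {A M : Type*} [AddCommGroup A] [Module F A] [CommRing M] [Algebra F M]
    (L : LCA F A) (R : LCAMod F L M)
    (hD : ∀ m n : M, R.D (m * n) = R.D m * n + m * R.D n)
    (hact : ∀ (a : A) (m n : M) (p : ℕ),
      R.act a (m * n) p = R.act a m p * n + m * R.act a n p) :
    -- χ₁ : ΠC₁ → ΠΓ₁ is a Lie algebra homomorphism, and an isomorphism from ΠC̄₁
    -- when A decomposes
    (∃ (BrC : C1Q F L R →ₗ[F] C1Q F L R →ₗ[F] C1Q F L R)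
       (BrG : Gamma1 F L M →ₗ[F] Gamma1 F L M →ₗ[F] Gamma1 F L M)
       (chiBar : C1Q F L R →ₗ[F] Gamma1 F L M),
      (∀ (a : A) (m : M) (b : A) (n : M),
        BrC (Submodule.Quotient.mk (a ⊗ₜ[F] m)) (Submodule.Quotient.mk (b ⊗ₜ[F] n))
          = Submodule.Quotient.mk (brkC1Gen F R a m b n)) ∧
      (∀ (a : A) (m : ℕ → M) (b : A) (n : ℕ → M),
        BrG (Submodule.Quotient.mk (a ⊗ₜ[F] m)) (Submodule.Quotient.mk (b ⊗ₜ[F] n))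
          = Submodule.Quotient.mk (brkGen F R a m b n)) ∧
      (∀ t : A ⊗[F] M,
        chiBar (Submodule.Quotient.mk t) = Submodule.Quotient.mk (chi1Raw F R t)) ∧
      -- Lie algebra homomorphism
      (∀ x y, chiBar (BrC x y) = BrG (chiBar x) (chiBar y)) ∧
      -- the image of χ₁ lies in Γ₁ = Ker ∂
      (∀ (DQ : Gamma1 F L M →ₗ[F] Gamma1 F L M),
        (∀ t, DQ (Submodule.Quotient.mk t)
            = Submodule.Quotient.mk (chainPartial F R t)) →
        (∀ x, DQ (chiBar x) = 0) ∧
        -- under the decomposition assumption, χ₁ factors through a bijection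
        -- ΠC̄₁ ≅ ΠΓ₁ : its kernel is the image of Tor(A) ⊗ M and it surjects
        -- onto Γ₁ = Ker ∂
        (Decomposes L →
          (∀ x, chiBar x = 0 ↔ x ∈ Submodule.span F
            {z : C1Q F L R | ∃ (t : A) (m : M), IsTor L t ∧
              z = Submodule.Quotient.mk (t ⊗ₜ[F] m)}) ∧
          (∀ z, DQ z = 0 → ∃ x, chiBar x = z)))) ∧
    -- ψ intertwines the differentials: ψ∘δ = d and ψ^{k+1}∘δ = d∘ψ^k
    (∀ m : M, psiRaw R (deltaRaw L R (fun (_ : Fin 0 → A) (_ : Fin 0 → ℕ) => m))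
        = dZero R m) ∧
    (∀ (k : ℕ) (γ : (Fin (k+1) → A) → (Fin (k+1) → ℕ) → M), IsGamma R (k+1) γ →
      psiRaw R (deltaRaw L R γ) = dRaw L R (psiRaw R γ)) ∧
    -- ψ intertwines the contractions: ι_x ∘ ψ = ψ ∘ ι_{χ₁(x)}
    (∀ (k : ℕ) (a₀ : A) (m : M)
        (γ : (Fin (k+2) → A) → (Fin (k+2) → ℕ) → M), IsGamma R (k+2) γ →
      iotaC1 F R a₀ m (psiRaw R γ)
        = psiRaw R (iota1 F a₀ (expSer F R m) γ)) ∧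
    (∀ (a₀ : A) (m : M) (γ : (Fin 1 → A) → (Fin 1 → ℕ) → M), IsGamma R 1 γ →
      ∃ w : M,
        iotaC1zero F R a₀ m (psiRaw R γ)
          - iota1 F a₀ (expSer F R m) γ (fun i => i.elim0) (fun i => i.elim0)
        = R.D w) ∧
    -- ψ intertwines the Lie derivatives: L_x ∘ ψ = ψ ∘ L_{χ₁(x)}
    (∀ (k : ℕ) (a₀ : A) (m : M)
        (γ : (Fin (k+2) → A) → (Fin (k+2) → ℕ) → M), IsGamma R (k+2) γ →
      lieC1 F R a₀ m (psiRaw R γ)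
        = psiRaw R (lie1 F R a₀ (expSer F R m) γ)) ∧
    -- under the decomposition assumption, ψ^• : Γ^• → C̄^• is an isomorphism of
    -- complexes (surjectivity onto C̄; injectivity = Ker ψ = ∂Γ̃)
    (Decomposes L →
      (∀ (k : ℕ) (c : (Fin (k+1) → A) → (Fin k → ℕ) → M),
        IsCBr R k c → VanishOnTorsion L c →
          ∃ γ, IsGamma R (k+1) γ ∧ psiRaw R γ = c) ∧
      (∀ (k : ℕ) (γ θ : (Fin (k+1) → A) → (Fin (k+1) → ℕ) → M),
        IsGamma R (k+1) γ → IsGamma R (k+1) θ → psiRaw R γ = psiRaw R θ →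
          ∃ η, IsGamma R (k+1) η ∧ γ - θ = GammaD R η)) := by
  have hFS : ∀ {j : ℕ} (γ : (Fin j → A) → (Fin j → ℕ) → M), IsGamma R j γ → ∀ a, FS (γ a) :=
    fun γ h a => (FS_iff _).2 (h.fin a)
  have hzz : ∀ {j : ℕ} (γ : (Fin (j+1) → A) → (Fin (j+1) → ℕ) → M), IsGamma R (j+1) γ →
      ∀ x, γ (Fin.snoc x 0) = 0 := by
    intro j γ h x
    have e := h.map_smul (Fin.snoc x 0) (Fin.last j) 0 0
    rw [zero_smul, zero_smul, Fin.update_snoc_last] at e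
    exact e
  refine ⟨?_, fun m => psi_delta_zero R m,
    fun k γ h => psi_delta R γ (hzz γ h) (hFS γ h),
    fun k a₀ m γ h => psi_iota R hD a₀ m γ (hFS γ h),
    fun a₀ m γ h => psi_iota_zero R hD a₀ m γ (hFS γ h),
    fun k a₀ m γ h => psi_lie R hD a₀ m γ (hzz γ h) (hFS γ h),
    fun hdec => ⟨fun k c hc hv => psi_surj hdec R c hc hv,
      fun k γ θ hγ hθ h => psi_inj R γ θ hγ hθ h⟩⟩
  obtain ⟨BrC, hC⟩ := exists_BrC F R hD
  obtain ⟨BrG, hG⟩ := exists_BrG F R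
  obtain ⟨chi, hchi⟩ := exists_chi F R
  refine ⟨BrC, BrG, chi, ?_, ?_, hchi, chi_hom F R hD BrC BrG chi hC hG hchi, ?_⟩
  · intro a m b n
    rw [hC, brkC1Gen_eq]
  · intro a m b n
    rw [hG, brkGen_eq]
  · intro DQ hDQ
    refine ⟨?_, fun hdec => ⟨chi_ker hdec R chi hchi, chi_surj hdec R chi hchi DQ hDQ⟩⟩
    intro x
    obtain ⟨t, rfl⟩ := Submodule.Quotient.mk_surjective _ x
    rw [hchi, hDQ, chi_partial, Submodule.Quotient.mk_zero]
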